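/- Let k be an uncountable field of characteristic two. Then a very general hypersurface X ⊂ P^{N+1}_k of degree d ≥ log₂(N) + 3 is stably irrational, i.e., X × P^r_k is irrational for every r ≥ 0. -/

import Mathlib

noncomputable section

/-!
STATEMENT 1 (Corollary 1.2): Let `k` be an uncountable field of characteristic two.  Then
a very general hypersurface `X ⊂ ℙ^{N+1}_k` of degree `d ≥ log₂ N + 3` is stably
irrational: `X × ℙ^r_k` is irrational for every `r ≥ 0`.

Formalization: (stable) rationality is expressed via function fields: `X × ℙ^r` is
rational iff its function field — the fraction field of `Q[t₁,…,t_r]` where `Q` is the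
affine coordinate ring of `X` (in the chart `x₀ = 1`) — is `k`-isomorphic to
`k(t₁, …, t_{N+r})`.  See stmt_0 for the convention on `VeryGeneral`.
-/

namespace Paper

/-- `StablyIrrationalOver kToQ N`: the `N`-dimensional variety over `k` with (affine)
coordinate ring `Q` is stably irrational, i.e. for every `r ≥ 0` there is no `k`-isomorphism
between the function field of `X × ℙ^r` (the fraction field of `Q[t₁, …, t_r]`) and the
function field `k(t₁, …, t_{N+r})` of `ℙ^{N+r}_k`.  Compatibility with `k` is expressed via
the structure map `kToQ : k → Q`. -/
def StablyIrrationalOver {k Q : Type*} [Field k] [CommRing Q] (kToQ : k →+* Q)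
    (N : ℕ) : Prop :=
  ∀ r : ℕ,
    ¬ ∃ e : FractionRing (MvPolynomial (Fin r) Q) ≃+*
        FractionRing (MvPolynomial (Fin (N + r)) k),
      ∀ x : k,
        e ((algebraMap (MvPolynomial (Fin r) Q) (FractionRing (MvPolynomial (Fin r) Q)))
            (MvPolynomial.C (kToQ x))) =
          (algebraMap (MvPolynomial (Fin (N + r)) k)
              (FractionRing (MvPolynomial (Fin (N + r)) k))) (MvPolynomial.C x)

/-- The affine equation (in the chart `x₀ = 1`) of the hypersurface defined by a form `F`
in `ν + 1` homogeneous coordinates. -/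
def chartEquation {k : Type*} [Field k] {ν : ℕ} (F : MvPolynomial (Fin (ν + 1)) k) :
    MvPolynomial (Fin ν) k :=
  MvPolynomial.aeval
    (Fin.cases (1 : MvPolynomial (Fin ν) k) (fun i => MvPolynomial.X i)) F

/-- The affine coordinate ring of a projective hypersurface `{F = 0}` (in the chart
`x₀ = 1`). -/
abbrev chartRing {k : Type*} [Field k] {ν : ℕ} (F : MvPolynomial (Fin (ν + 1)) k) :
    Type _ :=
  MvPolynomial (Fin ν) k ⧸ Ideal.span {chartEquation F}

/-- The structure map `k → chartRing F`. -/
def chartRingMap {k : Type*} [Field k] {ν : ℕ} (F : MvPolynomial (Fin (ν + 1)) k) :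
    k →+* chartRing F :=
  (Ideal.Quotient.mk (Ideal.span {chartEquation F})).comp
    (MvPolynomial.C : k →+* MvPolynomial (Fin ν) k)

end Paper

namespace Paper

/-- A property `P` of (defining equations of) degree-`d` hypersurfaces in `ℙ^{ν−1}_k`
holds *for a very general hypersurface* if it holds for all hypersurfaces parametrized by
points in some countable intersection of dense open subsets of the parameter space of
degree-`d` forms: there is a countable family `G₀, G₁, …` of polynomial conditions on
the coefficients, each nonvanishing at some degree-`d` form (so each defines a dense open
subset of the irreducible parameter space), such that `P F` holds for every degree-`d`
form `F` with `Gᵢ(coefficients of F) ≠ 0` for all `i`. -/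
def VeryGeneral (k : Type*) [Field k] (ν d : ℕ)
    (P : MvPolynomial (Fin ν) k → Prop) : Prop :=
  ∃ G : ℕ → MvPolynomial ((Fin ν) →₀ ℕ) k,
    (∀ i, ∃ F : MvPolynomial (Fin ν) k, F.IsHomogeneous d ∧
        MvPolynomial.eval (fun v => MvPolynomial.coeff v F) (G i) ≠ 0) ∧
    (∀ F : MvPolynomial (Fin ν) k, F.IsHomogeneous d →
      (∀ i, MvPolynomial.eval (fun v => MvPolynomial.coeff v F) (G i) ≠ 0) → P F)

end Paper

namespace SI

/-- A derivation-like ring hom into dual numbers over the fraction field gives a derivation. -/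
lemma exists_derivation_of_dual {A L : Type*} [CommRing A] [IsDomain A] [Field L] [Algebra A L]
    [IsFractionRing A L] (χ : A →+* DualNumber L)
    (hχ : ∀ a, TrivSqZeroExt.fst (χ a) = algebraMap A L a) :
    ∃ D : Derivation ℤ L L, ∀ a, D (algebraMap A L a) = TrivSqZeroExt.snd (χ a) := by
  have hu : ∀ y : nonZeroDivisors A, IsUnit (χ y) := by
    intro y
    rw [TrivSqZeroExt.isUnit_iff_isUnit_fst, hχ]
    exact IsUnit.mk0 _ (by
      exact IsFractionRing.to_map_ne_zero_of_mem_nonZeroDivisors (K := L) y.2)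
  let χ' : L →+* DualNumber L := IsLocalization.lift (M := nonZeroDivisors A) hu
  have h1 : ∀ a, χ' (algebraMap A L a) = χ a := fun a => IsLocalization.lift_eq _ a
  have hf : (TrivSqZeroExt.fstHom ℤ L L : _ →ₐ[ℤ] L).toRingHom.comp χ' = RingHom.id L := by
    apply IsLocalization.ringHom_ext (nonZeroDivisors A)
    ext a
    simp [h1, hχ]
  have hf' : ∀ z, TrivSqZeroExt.fst (χ' z) = z := fun z => by
    simpa using congrArg (fun g => g z) hf
  refine ⟨Derivation.mk' (AddMonoidHom.toIntLinearMap
    ⟨⟨fun z => TrivSqZeroExt.snd (χ' z), by simp⟩, by intro x y; simp⟩) ?_, ?_⟩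
  · intro x y
    simp [hf', TrivSqZeroExt.snd_mul, mul_comm]
  · intro a
    change TrivSqZeroExt.snd (χ' (algebraMap A L a)) = _
    rw [h1]

lemma exists_derivation_ext {A L : Type*} [CommRing A] [IsDomain A] [Field L] [Algebra A L]
    [IsFractionRing A L] (D : Derivation ℤ A A) :
    ∃ D' : Derivation ℤ L L, ∀ a, D' (algebraMap A L a) = algebraMap A L (D a) := by
  let f : A → DualNumber L := fun a => (algebraMap A L a, algebraMap A L (D a))
  have f1 : ∀ a, (f a).fst = algebraMap A L a := fun a => rfl
  have f2 : ∀ a, (f a).snd = algebraMap A L (D a) := fun a => rfl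
  let χ : A →+* DualNumber L :=
    { toFun := f
      map_one' := by ext <;> simp only [f1, f2, TrivSqZeroExt.fst_one, TrivSqZeroExt.snd_one, map_one, Derivation.map_one_eq_zero, map_zero]
      map_zero' := by ext <;> simp only [f1, f2, TrivSqZeroExt.fst_zero, TrivSqZeroExt.snd_zero, map_zero]
      map_add' := by intro x y; ext <;> simp only [f1, f2, TrivSqZeroExt.fst_add, TrivSqZeroExt.snd_add, map_add]
      map_mul' := by
        intro x y
        ext
        · simp only [f1, TrivSqZeroExt.fst_mul, map_mul]
        · simp only [f1, f2, TrivSqZeroExt.snd_mul, Derivation.leibniz, map_add, map_mul,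
            smul_eq_mul, MulOpposite.smul_eq_mul_unop, MulOpposite.unop_op]
          ring }
  obtain ⟨D', h⟩ := exists_derivation_of_dual (L := L) χ (fun a => f1 a)
  exact ⟨D', fun a => by rw [h]; exact f2 a⟩

end SI

namespace SI

/-- Evaluation of a monomial exponent at a tuple. -/
def ev {σ M : Type*} [CommMonoid M] (m : σ →₀ ℕ) (w : σ → M) : M := m.prod fun s e => w s ^ e

/-- Combinatorial data of the special hypersurface `Σ_{m ∈ S} X^m + X^T0`. -/
structure Comb (σ : Type*) (n d : ℕ) where
  x : Fin (n + 1) → σ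
  z0 : σ
  S : Finset (σ →₀ ℕ)
  T0 : σ →₀ ℕ
  xinj : Function.Injective x
  npos : 1 ≤ n
  par : ∀ m ∈ S, ∀ s, s ∉ Set.range x → Even (m s)
  cls : ∀ m ∈ S, ∀ m' ∈ S, (∀ j : Fin n, (Even (m (x j.succ)) ↔ Even (m' (x j.succ)))) → m = m'
  deg : ∀ m ∈ S, m.degree = d
  deg0 : T0.degree = d
  dom : ∀ (Γ : Type) [LinearOrderedCommGroupWithZero Γ] (w : σ → Γ),
    (∀ j, w (x j) ≠ 0) → (∀ m ∈ S, ev m w ≤ ev T0 w) → ∀ j s, w s ≤ w (x j)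

variable {σ : Type*} {n d : ℕ}

def Comb.F0 (c : Comb σ n d) (R : Type*) [CommRing R] : MvPolynomial σ R :=
  ∑ m ∈ c.S, MvPolynomial.monomial m 1 + MvPolynomial.monomial c.T0 1

/-- The log-derivative determinant. -/
def phi {E : Type*} [Field E] (D : Fin n → Derivation ℤ E E) (x : Fin (n + 1) → E) : E :=
  Matrix.det (Matrix.of fun i j : Fin n => D i (x j.succ / x 0) / (x j.succ / x 0))

lemma map_ev {M M' : Type*} [CommMonoid M] [CommMonoid M'] (f : M →* M') (m : σ →₀ ℕ) (w : σ → M) :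
    f (ev m w) = ev m (fun s => f (w s)) := by
  simp [ev, Finsupp.prod]

lemma ev_smul {M : Type*} [CommMonoid M] (m : σ →₀ ℕ) (w : σ → M) (a : M) :
    ev m (fun s => a * w s) = a ^ m.degree * ev m w := by
  simp only [ev, Finsupp.prod, mul_pow, Finset.prod_mul_distrib, Finset.prod_pow_eq_pow_sum]
  rfl

lemma ev_add {M : Type*} [CommMonoid M] (m m' : σ →₀ ℕ) (w : σ → M) :
    ev (m + m') w = ev m w * ev m' w := by
  classical
  exact Finsupp.prod_add_index' (by simp) (by intros; exact pow_add _ _ _)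

lemma Comb.eval_F0 (c : Comb σ n d) {R : Type*} [CommRing R] (p : σ → R) :
    MvPolynomial.eval p (c.F0 R) = ∑ m ∈ c.S, ev m p + ev c.T0 p := by
  simp [Comb.F0, ev, MvPolynomial.eval_monomial]

section eigen
variable {E : Type*} [Field E] (Θ : Derivation ℤ E E)

lemma eigen_prod {ι : Type*} (t : Finset ι) (f a : ι → E) (h : ∀ i ∈ t, Θ (f i) = a i * f i) :
    Θ (∏ i ∈ t, f i) = (∑ i ∈ t, a i) * ∏ i ∈ t, f i := by
  classical
  induction t using Finset.induction_on with
  | empty => simp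
  | insert i t hi ih =>
    rw [Finset.prod_insert hi, Finset.sum_insert hi, Derivation.leibniz,
      ih (fun j hj => h j (Finset.mem_insert_of_mem hj)), h i (Finset.mem_insert_self _ _)]
    simp only [smul_eq_mul]
    ring

/-- monomials are eigenvectors. -/
lemma eigen_ev [CharP E 2] (c : Comb σ n d) (k : Fin n) (q : σ → E)
    (h0 : Θ (q (c.x 0)) = 0)
    (hk : ∀ j : Fin n, Θ (q (c.x j.succ)) = if j = k then q (c.x j.succ) else 0)
    {m : σ →₀ ℕ} (hm : m ∈ c.S) :
    Θ (ev m q) = (if Even (m (c.x k.succ)) then 0 else 1) * ev m q := by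
  classical
  have key : ∀ s ∈ m.support, Θ (q s ^ m s) =
      (if s = c.x k.succ then (m s : E) else 0) * q s ^ m s := by
    intro s hs
    have hs0 : m s ≠ 0 := by simpa using hs
    rw [Derivation.leibniz_pow]
    by_cases hr : s ∈ Set.range c.x
    · obtain ⟨j, rfl⟩ := hr
      induction j using Fin.cases with
      | zero =>
        rw [h0, if_neg (fun h => absurd (c.xinj h) (Fin.succ_ne_zero k).symm)]
        simp
      | succ j =>
        rw [hk]
        by_cases hjk : j = k
        · subst hjk
          simp only [if_true, smul_eq_mul, nsmul_eq_mul]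
          rw [← pow_succ, Nat.sub_add_cancel (Nat.pos_of_ne_zero hs0)]
        · rw [if_neg hjk, if_neg (fun h => hjk (by simpa using c.xinj h))]
          simp
    · have he := c.par m hm s hr
      rw [if_neg (fun h => hr ⟨_, h.symm⟩)]
      obtain ⟨e, he⟩ := he
      have : ((m s : ℕ) : E) = 0 := by
        rw [he]; push_cast; exact CharTwo.add_self_eq_zero _
      rw [nsmul_eq_mul, this]; simp
  unfold ev Finsupp.prod
  rw [eigen_prod Θ m.support _ _ key]
  congr 1
  rw [Finset.sum_ite_eq']
  by_cases hs : c.x k.succ ∈ m.support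
  · rw [if_pos hs]
    split_ifs with he
    · obtain ⟨e, he⟩ := he
      rw [he]; push_cast; exact CharTwo.add_self_eq_zero _
    · obtain ⟨e, he⟩ := Nat.not_even_iff_odd.mp he
      rw [he]; push_cast
      rw [CharTwo.two_eq_zero]; simp
  · rw [if_neg hs]
    have : m (c.x k.succ) = 0 := by simpa using hs
    simp [this]

end eigen

lemma projector {E : Type*} [Field E] [CharP E 2] {Γ : Type*} [LinearOrderedCommGroupWithZero Γ]
    (v : Valuation E Γ) (Θ : Fin n → Derivation ℤ E E) (hv : ∀ k f, v (Θ k f) ≤ v f)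
    (c : Comb σ n d) (q : σ → E) (h0 : ∀ k, Θ k (q (c.x 0)) = 0)
    (hk : ∀ k, ∀ j : Fin n, Θ k (q (c.x j.succ)) = if j = k then q (c.x j.succ) else 0)
    (hF : ∑ m ∈ c.S, ev m q + ev c.T0 q = 0) {m : σ →₀ ℕ} (hm : m ∈ c.S) :
    v (ev m q) ≤ v (ev c.T0 q) := by
  classical
  have hR : v (∑ m ∈ c.S, ev m q) = v (ev c.T0 q) := by
    rw [eq_neg_of_add_eq_zero_left hF, Valuation.map_neg]
  have key : ∀ A : Finset (Fin n), v (∑ m' ∈ c.S.filter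
      (fun m' => ∀ k ∈ A, (Even (m' (c.x k.succ)) ↔ Even (m (c.x k.succ)))), ev m' q)
      ≤ v (ev c.T0 q) := by
    intro A
    induction A using Finset.induction_on with
    | empty => simpa using hR.le
    | insert k A hkA ih =>
      set R := ∑ m' ∈ c.S.filter
        (fun m' => ∀ k ∈ A, (Even (m' (c.x k.succ)) ↔ Even (m (c.x k.succ)))), ev m' q with hRdef
      have hΘ : Θ k R = ∑ m' ∈ c.S.filter
        (fun m' => ∀ k ∈ A, (Even (m' (c.x k.succ)) ↔ Even (m (c.x k.succ)))),
          (if Even (m' (c.x k.succ)) then 0 else ev m' q) := by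
        rw [hRdef, map_sum]
        apply Finset.sum_congr rfl
        intro m' hm'
        rw [eigen_ev (Θ k) c k q (h0 k) (hk k) (Finset.mem_filter.mp hm').1]
        split_ifs <;> simp
      have h2 : ∑ m' ∈ c.S.filter (fun m' => ∀ k' ∈ insert k A,
          (Even (m' (c.x k'.succ)) ↔ Even (m (c.x k'.succ)))), ev m' q =
          if Even (m (c.x k.succ)) then R - Θ k R else Θ k R := by
        rw [hΘ, hRdef]
        split_ifs with he
        · rw [← Finset.sum_sub_distrib, Finset.sum_filter, Finset.sum_filter]
          apply Finset.sum_congr rfl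
          intro m' _
          simp only [Finset.forall_mem_insert, he, iff_true]
          by_cases h1 : Even (m' (c.x k.succ)) <;> simp [h1]
        · rw [Finset.sum_filter, Finset.sum_filter]
          apply Finset.sum_congr rfl
          intro m' _
          simp only [Finset.forall_mem_insert, he, iff_false]
          by_cases h1 : Even (m' (c.x k.succ)) <;> simp [h1]
      rw [h2]
      split_ifs
      · exact (v.map_sub_le (le_refl _) (hv k R)).trans ih
      · exact (hv k R).trans ih
  have := key Finset.univ
  have hs : c.S.filter (fun m' => ∀ k ∈ (Finset.univ : Finset (Fin n)),
      (Even (m' (c.x k.succ)) ↔ Even (m (c.x k.succ)))) = {m} := by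
    ext m'
    simp only [Finset.mem_filter, Finset.mem_univ, true_implies, Finset.mem_singleton]
    constructor
    · rintro ⟨h1, h2⟩; exact c.cls _ h1 _ hm h2
    · rintro rfl; exact ⟨hm, fun _ => Iff.rfl⟩
  rwa [hs, Finset.sum_singleton] at this

end SI

namespace SI
variable {σ : Type*} {n d : ℕ}

lemma phi_ne_zero_imp {E : Type*} [Field E] (hn : 1 ≤ n) (D : Fin n → Derivation ℤ E E)
    (x : Fin (n + 1) → E) (h : phi D x ≠ 0) : ∀ j, x j ≠ 0 := by
  have h0 : ∀ j : Fin n, x j.succ / x 0 ≠ 0 := by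
    intro j hj
    apply h
    apply Matrix.det_eq_zero_of_column_eq_zero j
    intro i
    simp [hj]
  intro j
  induction j using Fin.cases with
  | zero =>
    intro h'
    exact h0 ⟨0, hn⟩ (by rw [h']; simp)
  | succ j => intro h'; exact h0 j (by rw [h']; simp)

lemma det_val_le {E ι : Type*} [Field E] [Fintype ι] [DecidableEq ι] {Γ : Type*}
    [LinearOrderedCommGroupWithZero Γ] (v : Valuation E Γ) (A : Matrix ι ι E) (c : ι → Γ)
    (h : ∀ i j, v (A i j) ≤ c j) : v A.det ≤ ∏ j, c j := by
  rw [Matrix.det_apply]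
  apply Valuation.map_sum_le
  intro τ _
  have : v (Equiv.Perm.sign τ • ∏ i, A (τ i) i) = v (∏ i, A (τ i) i) := by
    rcases Int.units_eq_one_or (Equiv.Perm.sign τ) with h | h <;> simp [h]
  rw [this, map_prod]
  exact Finset.prod_le_prod' (fun i _ => h _ _)

/-- Local lemma. -/
lemma H1 {E : Type*} [Field E] [CharP E 2] {Γ : Type} [LinearOrderedCommGroupWithZero Γ]
    (v : Valuation E Γ) (D : Fin n → Derivation ℤ E E) (c : Comb σ n d) (p : σ → E)
    (hF : MvPolynomial.eval p (c.F0 E) = 0) (C : Γ) (hC : C ≠ 0)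
    (hb : ∀ f : Fin n → E, (∀ j, f j ≠ 0) →
      v (Matrix.det (Matrix.of fun i j : Fin n => D i (f j) / f j)) ≤ C) :
    v (phi D (p ∘ c.x)) < C ∨ ∀ j s, v (p s) ≤ v (p (c.x j)) := by
  rw [or_iff_not_imp_left, not_lt]
  intro hv
  have hphi0 : phi D (p ∘ c.x) ≠ 0 := by
    intro h; rw [h, map_zero] at hv; exact hC (le_zero_iff.mp hv)
  have hx := phi_ne_zero_imp c.npos D _ hphi0
  simp only [Function.comp_apply] at hx
  set q : σ → E := fun s => (p (c.x 0))⁻¹ * p s with hq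
  have hq0 : q (c.x 0) = 1 := inv_mul_cancel₀ (hx 0)
  have hqx : ∀ j, q (c.x j) ≠ 0 := fun j => mul_ne_zero (inv_ne_zero (hx 0)) (hx j)
  set A : Matrix (Fin n) (Fin n) E :=
    Matrix.of fun i j => D i (q (c.x j.succ)) / q (c.x j.succ) with hA
  have hAdet : A.det = phi D (p ∘ c.x) := by
    simp only [phi, hA, hq, Function.comp_apply, div_eq_inv_mul (p (c.x _)) (p (c.x 0))]
  have hdet : A.det ≠ 0 := hAdet ▸ hphi0
  have hunit : IsUnit A.det := IsUnit.mk0 _ hdet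
  let Θ : Fin n → Derivation ℤ E E := fun k => ∑ i, A⁻¹ k i • D i
  have hΘ : ∀ k f, Θ k f = ∑ i, A⁻¹ k i * D i f := by
    intro k f
    have := congrFun (map_sum Derivation.coeFnAddMonoidHom (fun i => A⁻¹ k i • D i) Finset.univ) f
    change Θ k f = _ at this
    rw [this, Finset.sum_apply]
    rfl
  have hmul : A⁻¹ * A = 1 := Matrix.nonsing_inv_mul A hunit
  have hΘx : ∀ k, ∀ j : Fin n, Θ k (q (c.x j.succ)) = if j = k then q (c.x j.succ) else 0 := by
    intro k j
    have h1 : (A⁻¹ * A) k j = (1 : Matrix _ _ E) k j := by rw [hmul]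
    rw [Matrix.mul_apply, Matrix.one_apply] at h1
    have h2 : Θ k (q (c.x j.succ)) = (∑ i, A⁻¹ k i * A i j) * q (c.x j.succ) := by
      rw [hΘ, Finset.sum_mul]
      apply Finset.sum_congr rfl
      intro i _
      simp only [hA, Matrix.of_apply]
      rw [mul_assoc, div_mul_cancel₀ _ (hqx _)]
    rw [h2, h1]
    by_cases h : j = k
    · simp [h]
    · rw [if_neg h, if_neg (Ne.symm h), zero_mul]
  have hΘ0 : ∀ k, Θ k (q (c.x 0)) = 0 := by intro k; rw [hq0]; simp
  have hΘv : ∀ k f, v (Θ k f) ≤ v f := by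
    intro k f
    by_cases hf : f = 0
    · simp [hf]
    have h1 : Θ k f = (A.det)⁻¹ * (A.updateCol k (fun i => D i f / f)).det * f := by
      rw [← Matrix.cramer_apply]
      have : Matrix.cramer A (fun i => D i f / f) = A.det • A⁻¹.mulVec (fun i => D i f / f) := by
        rw [Matrix.det_smul_inv_mulVec_eq_cramer _ _ hunit]
      rw [this, Pi.smul_apply, smul_eq_mul, ← mul_assoc, inv_mul_cancel₀ hdet, one_mul, hΘ,
        Matrix.mulVec, dotProduct, Finset.sum_mul]
      apply Finset.sum_congr rfl
      intro i _
      rw [mul_assoc, div_mul_cancel₀ _ hf]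
    have h2 : A.updateCol k (fun i => D i f / f) = Matrix.of fun i j =>
        D i (Function.update (fun j : Fin n => q (c.x j.succ)) k f j) /
          (Function.update (fun j : Fin n => q (c.x j.succ)) k f j) := by
      ext i j
      rw [Matrix.updateCol_apply, Matrix.of_apply]
      by_cases h : j = k
      · subst h; simp
      · simp [h, hA]
    have h3 := hb (Function.update (fun j : Fin n => q (c.x j.succ)) k f) (by
      intro j
      by_cases h : j = k
      · subst h; simpa using hf
      · simpa [h] using hqx _)
    rw [← h2] at h3
    rw [h1, map_mul, map_mul, map_inv₀, hAdet]
    have h4 : (v (phi D (p ∘ c.x)))⁻¹ * v ((A.updateCol k (fun i => D i f / f)).det) ≤ 1 := by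
      rw [inv_mul_le_one₀ (zero_lt_iff.mpr ((Valuation.ne_zero_iff _).mpr hphi0))]
      exact h3.trans hv
    calc _ ≤ 1 * v f := by gcongr
      _ = v f := one_mul _
  have hFq : ∑ m ∈ c.S, ev m q + ev c.T0 q = 0 := by
    rw [c.eval_F0] at hF
    have : ∑ m ∈ c.S, ev m q + ev c.T0 q =
        ((p (c.x 0))⁻¹) ^ d * (∑ m ∈ c.S, ev m p + ev c.T0 p) := by
      rw [mul_add, Finset.mul_sum]
      congr 1
      · apply Finset.sum_congr rfl
        intro m hm
        rw [hq, ev_smul, c.deg m hm]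
      · rw [hq, ev_smul, c.deg0]
    rw [this, hF, mul_zero]
  have hle : ∀ m ∈ c.S, v (ev m q) ≤ v (ev c.T0 q) := fun m hm =>
    projector v Θ hΘv c q hΘ0 hΘx hFq hm
  have := c.dom Γ (fun s => v (q s)) (fun j => (Valuation.ne_zero_iff _).mpr (hqx j)) (by
    intro m hm
    simpa [ev, Finsupp.prod] using hle m hm)
  intro j s
  have h := this j s
  simp only [hq, map_mul] at h
  exact le_of_mul_le_mul_left h (zero_lt_iff.mpr ((Valuation.ne_zero_iff _).mpr (inv_ne_zero (hx 0))))

end SI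

namespace SI
variable {σ : Type*} {n d : ℕ}
open Polynomial IsDedekindDomain

lemma exists_polyDeriv {A : Type*} [CommRing A] (D : Derivation ℤ A A) :
    ∃ D' : Derivation ℤ A[X] A[X], ∀ p i, (D' p).coeff i = D (p.coeff i) := by
  refine ⟨(PolynomialModule.equivPolynomialSelf (R := A)).toLinearMap.compDer D.mapCoeffs, ?_⟩
  intro p i
  rfl

section local_bound
variable {R E : Type*} [CommRing R] [IsDedekindDomain R] [Field E] [Algebra R E]
  [IsFractionRing R E] (w : HeightOneSpectrum R) (D' : Derivation ℤ E E) (D0 : R → R)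

lemma val_D_le (h : ∀ a, D' (algebraMap R E a) = algebraMap R E (D0 a)) {f : E} (hf : w.valuation E f ≤ 1) : w.valuation E (D' f) ≤ 1 := by
  obtain ⟨a, b, hab⟩ := HeightOneSpectrum.exists_primeCompl_mul_eq_of_integer w f hf
  have hb : w.valuation E (algebraMap R E b) = 1 :=
    (w.valuation_eq_one_iff_notMem).mpr b.2
  have h1 := congrArg D' hab
  rw [Derivation.leibniz, h, h, smul_eq_mul, smul_eq_mul] at h1
  have h2 : algebraMap R E b * D' f = algebraMap R E (D0 a) - f * algebraMap R E (D0 b) := by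
    rw [← h1]; ring
  have h3 : w.valuation E (D' f) = w.valuation E (algebraMap R E b * D' f) := by
    rw [map_mul, hb, one_mul]
  rw [h3, h2]
  apply Valuation.map_sub_le
  · exact w.valuation_le_one _
  · rw [map_mul]; exact mul_le_one' hf (w.valuation_le_one _)

end local_bound

lemma det_bound {R E : Type*} [CommRing R] [IsDedekindDomain R] [Field E] [Algebra R E]
    [IsFractionRing R E] (w : HeightOneSpectrum R) (D' : Fin n → Derivation ℤ E E)
    (D0 : Fin n → R → R) (h : ∀ i a, D' i (algebraMap R E a) = algebraMap R E (D0 i a))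
    {π : E} (hπ : w.valuation E π = WithZero.exp (-1 : ℤ)) (C : WithZero (Multiplicative ℤ))
    (hC1 : 1 ≤ C) (hC : ∀ i, w.valuation E (D' i π / π) ≤ C)
    (f : Fin n → E) (hf : ∀ j, f j ≠ 0) :
    w.valuation E (Matrix.det (Matrix.of fun i j : Fin n => D' i (f j) / f j)) ≤ C := by
  have hall : ∀ j, ∃ (a : ℤ) (g : E), w.valuation E g = 1 ∧ ∀ i,
      D' i (f j) / f j = a * (D' i π / π) + D' i g / g := by
    intro j
    have hπ0 : π ≠ 0 := by
      intro h0; rw [h0, map_zero] at hπ; exact WithZero.exp_ne_zero hπ.symm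
    have hv0 : w.valuation E (f j) ≠ 0 := (Valuation.ne_zero_iff _).mpr (hf j)
    obtain ⟨k, hk⟩ : ∃ k : ℤ, w.valuation E (f j) = WithZero.exp k :=
      ⟨WithZero.log (w.valuation E (f j)), (WithZero.exp_log hv0).symm⟩
    refine ⟨-k, f j * π ^ k, ?_, ?_⟩
    · rw [map_mul, map_zpow₀, hπ, hk, ← WithZero.exp_zsmul, ← WithZero.exp_add]
      simp
    · intro i
      have hfj := hf j
      rw [Derivation.leibniz, Derivation.leibniz_zpow]
      simp only [smul_eq_mul, zsmul_eq_mul]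
      rw [zpow_sub_one₀ hπ0]
      have := zpow_ne_zero k hπ0
      push_cast
      field_simp
      ring
  choose a g hg hfg using hall
  have hD : (Matrix.of fun i j : Fin n => D' i (f j) / f j) =
      (Matrix.of fun i j : Fin n => D' i (g j) / g j) -
        (Matrix.of fun (i : Fin n) (_ : Fin 1) => D' i π / π) *
        (Matrix.of fun (_ : Fin 1) (j : Fin n) => -(a j : E)) := by
    ext i j
    simp [Matrix.mul_apply, hfg]
    ring
  rw [hD, ← Matrix.det_fromBlocks_one₁₁]
  refine (det_val_le _ _ (Sum.elim (fun _ => C) (fun _ => 1)) ?_).trans ?_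
  · rintro (i | i) (j | j)
    · simp only [Matrix.fromBlocks_apply₁₁, Sum.elim_inl]
      rw [Subsingleton.elim i j, Matrix.one_apply_eq, map_one]; exact hC1
    · simp only [Matrix.fromBlocks_apply₁₂, Sum.elim_inr, Matrix.of_apply, Valuation.map_neg]
      have := w.valuation_le_one (K := E) (a j : R)
      simpa using this
    · simpa using hC i
    · simp only [Matrix.fromBlocks_apply₂₂, Sum.elim_inr, Matrix.of_apply]
      rw [map_div₀, hg, div_one]
      exact val_D_le w (D' i) (D0 i) (h i) (hg j).le
  · simp
end SI

namespace SI
variable {σ : Type*} {n d : ℕ}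
open Polynomial IsDedekindDomain

/-- numerator matrix. -/
def numMat {A : Type*} [CommRing A] (D : Fin n → A → A) (x : Fin (n + 1) → A) :
    Matrix (Fin n) (Fin n) A :=
  Matrix.of fun i j => D i (x j.succ) * x 0 - D i (x 0) * x j.succ

lemma phi_mul {E : Type*} [Field E] (hn : 1 ≤ n) (D : Fin n → Derivation ℤ E E)
    (x : Fin (n + 1) → E) :
    phi D x * ∏ j : Fin n, (x j.succ * x 0) = (numMat (fun i => D i) x).det := by
  by_cases h0 : x 0 = 0
  · have : (numMat (fun i => D i) x).det = 0 := by
      apply Matrix.det_eq_zero_of_row_eq_zero ⟨0, hn⟩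
      intro j
      simp [numMat, h0]
    rw [this, Finset.prod_eq_zero (Finset.mem_univ ⟨0, hn⟩) (by rw [h0, mul_zero]), mul_zero]
  by_cases hx : ∃ j : Fin n, x j.succ = 0
  · obtain ⟨j, hj⟩ := hx
    have : (numMat (fun i => D i) x).det = 0 := by
      apply Matrix.det_eq_zero_of_column_eq_zero j
      intro i
      simp [numMat, hj]
    rw [this, Finset.prod_eq_zero (Finset.mem_univ j) (by rw [hj, zero_mul]), mul_zero]
  push Not at hx
  rw [mul_comm, phi, ← Matrix.det_mul_row]
  congr 1
  ext i j
  have := hx j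
  simp only [Matrix.of_apply, numMat]
  rw [Derivation.leibniz_div]
  simp only [smul_eq_mul]
  field_simp

lemma map_numMat {A B : Type*} [CommRing A] [CommRing B] (f : A →+* B) (D : Fin n → A → A)
    (D' : Fin n → B → B) (h : ∀ i a, f (D i a) = D' i (f a)) (x : Fin (n + 1) → A) :
    f (numMat D x).det = (numMat D' (fun j => f (x j))).det := by
  rw [RingHom.map_det]
  congr 1
  ext i j
  simp [numMat, h]

lemma Hpoly (E : Type*) {ℓ : Type*} [Field ℓ] [CharP ℓ 2] [Field E] [Algebra ℓ[X] E]
    [IsFractionRing ℓ[X] E] (D : Fin n → Derivation ℤ ℓ ℓ)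
    (Dp : Fin n → Derivation ℤ ℓ[X] ℓ[X]) (hDp : ∀ i p k, (Dp i p).coeff k = D i (p.coeff k))
    (c : Comb σ n d) (g : σ → ℓ[X])
    (hF : MvPolynomial.eval g (c.F0 ℓ[X]) = 0) (h0 : ∃ s, (g s).coeff 0 ≠ 0) :
    ∃ P : ℓ[X], P * ∏ j : Fin n, (g (c.x j.succ) * g (c.x 0)) =
        (numMat (fun i => Dp i) (fun j => g (c.x j))).det ∧
      P.coeff 0 = phi D (fun j => (g (c.x j)).coeff 0) := by
  have hinj : Function.Injective (algebraMap ℓ[X] E) := IsFractionRing.injective _ _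
  have : CharP E 2 := by
    have : CharP ℓ[X] 2 := inferInstance
    exact charP_of_injective_algebraMap hinj 2
  have hex := fun i => exists_derivation_ext (L := E) (Dp i)
  choose D' hD' using hex
  let p : σ → E := fun s => algebraMap _ _ (g s)
  have hFp : MvPolynomial.eval p (c.F0 E) = 0 := by
    have := congrArg (algebraMap ℓ[X] E) hF
    rw [c.eval_F0, map_add, map_sum, map_zero] at this
    rw [c.eval_F0, ← this]
    congr 1
    · apply Finset.sum_congr rfl; intro m _; exact (map_ev (algebraMap ℓ[X] E).toMonoidHom _ _).symm
    · exact (map_ev (algebraMap ℓ[X] E).toMonoidHom _ _).symm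
  have hD0 : ∀ i a, D' i (algebraMap ℓ[X] E a) = algebraMap ℓ[X] E ((fun a => Dp i a) a) :=
    fun i a => hD' i a
  -- entries when not bad
  have hgood : ∀ w : HeightOneSpectrum ℓ[X], (∀ j s, w.valuation E (p s) ≤ w.valuation E (p (c.x j))) →
      phi D' (p ∘ c.x) ≠ 0 → w.valuation E (phi D' (p ∘ c.x)) ≤ 1 := by
    intro w hw hne
    have hx := phi_ne_zero_imp c.npos D' _ hne
    simp only [Function.comp_apply] at hx
    unfold phi
    refine (det_val_le _ _ (fun _ => 1) ?_).trans (by simp)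
    intro i j
    have h1 : w.valuation E (p (c.x j.succ) / p (c.x 0)) = 1 := by
      rw [map_div₀, le_antisymm (hw 0 _) (hw j.succ _), div_self ((Valuation.ne_zero_iff _).mpr (hx 0))]
    simp only [Matrix.of_apply, Function.comp_apply]
    rw [map_div₀, h1, div_one]
    exact val_D_le w (D' i) _ (hD0 i) h1.le
  have hintg : ∀ w : HeightOneSpectrum ℓ[X], w.valuation E (phi D' (p ∘ c.x)) ≤ 1 := by
    intro w
    by_cases hne : phi D' (p ∘ c.x) = 0
    · simp [hne]
    obtain ⟨ϖ, hϖ⟩ := w.valuation_exists_uniformizer' E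
    have hC1 : (1 : WithZero (Multiplicative ℤ)) ≤ WithZero.exp (1 : ℤ) := by
      rw [← WithZero.exp_zero, WithZero.exp_le_exp]; norm_num
    rcases H1 (w.valuation E) D' c p hFp (WithZero.exp (1 : ℤ)) WithZero.exp_ne_zero
      (det_bound w D' _ hD0 hϖ _ hC1 (by
        intro i
        rw [map_div₀, hϖ, hD0]
        have := w.valuation_le_one (K := E) (Dp i ϖ)
        rw [div_eq_mul_inv, ← WithZero.exp_neg, neg_neg]
        exact mul_le_of_le_one_left' this)) with h | h
    · rw [← WithZero.lt_mul_exp_iff_le (one_ne_zero)] 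
      simpa using h
    · exact hgood w h hne
  obtain ⟨P, hP⟩ := HeightOneSpectrum.mem_integers_of_valuation_le_one E _ hintg
  have hPmul : P * ∏ j : Fin n, (g (c.x j.succ) * g (c.x 0)) =
        (numMat (fun i => Dp i) (fun j => g (c.x j))).det := by
    apply hinj
    have e := map_numMat (algebraMap ℓ[X] E) (fun i => ⇑(Dp i)) (fun i => ⇑(D' i))
      (fun i a => (hD' i a).symm) (fun j => g (c.x j))
    refine Eq.trans ?_ e.symm
    rw [map_mul, hP, map_prod, ← phi_mul c.npos]
    simp [p, Function.comp_def]
  refine ⟨P, hPmul, ?_⟩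
  by_cases hx : ∀ j, (g (c.x j)).coeff 0 ≠ 0
  · have hprod : ∏ j : Fin n, ((g (c.x j.succ)).coeff 0 * (g (c.x 0)).coeff 0) ≠ 0 :=
      Finset.prod_ne_zero_iff.mpr (fun j _ => mul_ne_zero (hx _) (hx _))
    apply mul_right_cancel₀ hprod
    rw [phi_mul c.npos D (fun j => (g (c.x j)).coeff 0)]
    have := congrArg (Polynomial.constantCoeff) hPmul
    have e := map_numMat (Polynomial.constantCoeff (R := ℓ)) (fun i => ⇑(Dp i)) (fun i => ⇑(D i))
      (fun i a => by simp [hDp]) (fun j => g (c.x j))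
    have := this.trans e
    rw [map_mul, map_prod] at this
    simpa using this
  · push Not at hx
    obtain ⟨j, hj⟩ := hx
    have hr : phi D (fun j => (g (c.x j)).coeff 0) = 0 := by
      by_contra h
      exact phi_ne_zero_imp c.npos D _ h j hj
    rw [hr]
    let w : HeightOneSpectrum ℓ[X] := ⟨Ideal.span {X}, by
      rw [Ideal.span_singleton_prime X_ne_zero]; exact prime_X, by
      simp⟩
    have hw : ∀ f : ℓ[X], f ∈ w.asIdeal ↔ f.coeff 0 = 0 := by
      intro f
      rw [← X_dvd_iff]; exact Ideal.mem_span_singleton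
    have hwX : w.valuation E (algebraMap ℓ[X] E X) = WithZero.exp (-1 : ℤ) := by
      rw [w.valuation_of_algebraMap]
      exact w.intValuation_singleton X_ne_zero rfl
    have hX : ∀ i, Dp i X = 0 := by
      intro i; ext k; rw [hDp, coeff_X]; split_ifs <;> simp
    rcases H1 (w.valuation E) D' c p hFp 1 one_ne_zero
      (det_bound w D' _ hD0 hwX _ le_rfl (by intro i; rw [hD0]; simp [hX])) with h | h
    · rw [← hP, w.valuation_lt_one_iff_mem, hw] at h
      exact h
    · exfalso
      obtain ⟨s, hs⟩ := h0
      have h1 := h j s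
      have h2 : w.valuation E (p s) = 1 := (w.valuation_eq_one_iff_notMem).mpr (by rw [hw]; exact hs)
      have h3 : w.valuation E (p (c.x j)) < 1 := (w.valuation_lt_one_iff_mem _).mpr (by rw [hw]; exact hj)
      rw [h2] at h1
      exact absurd h1 (not_le.mpr h3)

end SI

namespace SI
variable {σ : Type*} {n d : ℕ}
open Polynomial

lemma alg_reflect {E ℓ : Type*} [Field ℓ] [Field E] [Algebra ℓ[X] E] [IsFractionRing ℓ[X] E]
    (b : ℕ) (f : ℓ[X]) (hf : f.natDegree ≤ b) :
    algebraMap ℓ[X] E (f.reflect b) = algebraMap ℓ[X] E X ^ b *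
      eval₂RingHom ((algebraMap ℓ[X] E).comp C) (algebraMap ℓ[X] E X)⁻¹ f := by
  have hu : algebraMap ℓ[X] E X ≠ 0 := by
    simp
  letI : Invertible (algebraMap ℓ[X] E X)⁻¹ := invertibleOfNonzero (inv_ne_zero hu)
  have h := eval₂_reflect_mul_pow ((algebraMap ℓ[X] E).comp C) (algebraMap ℓ[X] E X)⁻¹ b f hf
  rw [coe_eval₂RingHom, ← h, invOf_eq_inv, inv_inv]
  have h2 : eval₂ ((algebraMap ℓ[X] E).comp C) (algebraMap ℓ[X] E X) (f.reflect b) =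
      algebraMap ℓ[X] E (f.reflect b) := by
    rw [← Polynomial.hom_eval₂, eval₂_C_X]
  rw [h2, inv_pow]
  field_simp

lemma homotopy_aux (E : Type*) {ℓ : Type*} [Field ℓ] [CharP ℓ 2] [Field E] [Algebra ℓ[X] E]
    [IsFractionRing ℓ[X] E] (D : Fin n → Derivation ℤ ℓ ℓ) (c : Comb σ n d) (g : σ → ℓ[X]) (b : ℕ)
    (hb : ∀ s, (g s).natDegree ≤ b)
    (hF : MvPolynomial.eval g (c.F0 ℓ[X]) = 0) (h0 : ∃ s, (g s).coeff 0 ≠ 0)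
    (hB : ∃ s, (g s).coeff b ≠ 0) :
    phi D (fun j => (g (c.x j)).coeff 0) = phi D (fun j => (g (c.x j)).coeff b) := by
  have hinj : Function.Injective (algebraMap ℓ[X] E) := IsFractionRing.injective _ _
  have hex := fun i => exists_polyDeriv (D i)
  choose Dp hDp using hex
  set u := algebraMap ℓ[X] E X with hu
  have hu0 : u ≠ 0 := by simp [hu]
  set τ := eval₂RingHom ((algebraMap ℓ[X] E).comp C) u⁻¹ with hτ
  let g' : σ → ℓ[X] := fun s => (g s).reflect b
  have hg' : ∀ s, algebraMap ℓ[X] E (g' s) = u ^ b * τ (g s) := fun s => alg_reflect b _ (hb s)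
  have hF' : MvPolynomial.eval g' (c.F0 ℓ[X]) = 0 := by
    apply hinj
    rw [c.eval_F0, map_add, map_sum, map_zero]
    have e1 : ∀ m : σ →₀ ℕ, algebraMap ℓ[X] E (ev m g') = (u ^ b) ^ m.degree * τ (ev m g) := by
      intro m
      have h1 := map_ev (algebraMap ℓ[X] E).toMonoidHom m g'
      have h2 := map_ev τ.toMonoidHom m g
      simp only [RingHom.toMonoidHom_eq_coe, MonoidHom.coe_coe] at h1 h2
      rw [h1, h2, ← ev_smul]
      congr 1
      funext s
      exact hg' s
    rw [Finset.sum_congr rfl (fun m hm => by rw [e1, c.deg m hm]), e1, c.deg0, ← Finset.mul_sum,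
      ← mul_add, ← map_sum, ← map_add, ← c.eval_F0, hF]
    simp
  have hb0 : revAt b 0 = b := revAt_zero b
  obtain ⟨P, hP1, hP2⟩ := Hpoly E D Dp hDp c g hF h0
  obtain ⟨P', hP1', hP2'⟩ := Hpoly E D Dp hDp c g' hF' (by
    obtain ⟨s, hs⟩ := hB
    exact ⟨s, by simp only [g']; rw [coeff_reflect, hb0]; exact hs⟩)
  have hg'0 : ∀ s, (g' s).coeff 0 = (g s).coeff b := by
    intro s; simp only [g']; rw [coeff_reflect, hb0]
  simp only [hg'0] at hP2'
  rw [← hP2, ← hP2']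
  by_cases hz : ∏ j : Fin n, (g (c.x j.succ) * g (c.x 0)) = 0
  · -- some coordinate vanishes identically
    obtain ⟨j, _, hj⟩ := Finset.prod_eq_zero_iff.mp hz
    have : ∃ j, g (c.x j) = 0 := by
      rcases mul_eq_zero.mp hj with h | h
      · exact ⟨_, h⟩
      · exact ⟨_, h⟩
    obtain ⟨j, hj⟩ := this
    rw [hP2, hP2']
    have e : ∀ k, phi D (fun j => (g (c.x j)).coeff k) = 0 := by
      intro k
      by_contra h
      exact phi_ne_zero_imp c.npos D _ h j (by simp [hj])
    rw [e, e]
  have hDdeg : ∀ i (f : ℓ[X]), f.natDegree ≤ b → (Dp i f).natDegree ≤ b := by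
    intro i f hf
    rw [natDegree_le_iff_coeff_eq_zero] at hf ⊢
    intro N hN
    rw [hDp, hf N hN, map_zero]
  have hDr : ∀ i (f : ℓ[X]), Dp i (f.reflect b) = (Dp i f).reflect b := by
    intro i f
    ext k
    rw [hDp, coeff_reflect, coeff_reflect, hDp]
  have hD' : ∀ i s, algebraMap ℓ[X] E (Dp i (g' s)) = u ^ b * τ (Dp i (g s)) := by
    intro i s
    simp only [g']
    rw [hDr]
    exact alg_reflect b _ (hDdeg i _ (hb s))
  have hdet : algebraMap ℓ[X] E (numMat (fun i => ⇑(Dp i)) (fun j => g' (c.x j))).det =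
      (u ^ b * u ^ b) ^ n * τ (numMat (fun i => ⇑(Dp i)) (fun j => g (c.x j))).det := by
    have e1 := RingHom.map_det (algebraMap ℓ[X] E) (numMat (fun i => ⇑(Dp i)) (fun j => g' (c.x j)))
    have e2 := RingHom.map_det τ (numMat (fun i => ⇑(Dp i)) (fun j => g (c.x j)))
    rw [e1, e2]
    have := Matrix.det_smul (τ.mapMatrix (numMat (fun i => ⇑(Dp i)) (fun j => g (c.x j))))
      (u ^ b * u ^ b)
    rw [Fintype.card_fin] at this
    rw [← this]
    congr 1
    ext i j
    simp only [RingHom.mapMatrix_apply, Matrix.map_apply, Matrix.smul_apply, numMat, Matrix.of_apply,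
      map_sub, map_mul, hD', hg', smul_eq_mul]
    ring
  have hprod : algebraMap ℓ[X] E (∏ j : Fin n, (g' (c.x j.succ) * g' (c.x 0))) =
      (u ^ b * u ^ b) ^ n * τ (∏ j : Fin n, (g (c.x j.succ) * g (c.x 0))) := by
    have hc : (u ^ b * u ^ b) ^ n = ∏ _j : Fin n, (u ^ b * u ^ b) := by simp
    rw [map_prod, map_prod, hc, ← Finset.prod_mul_distrib]
    apply Finset.prod_congr rfl
    intro j _
    rw [map_mul, map_mul, hg', hg']
    ring
  have hτinj : ∀ f : ℓ[X], τ f = 0 → f = 0 := by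
    intro f hf
    have := alg_reflect (E := E) f.natDegree f le_rfl
    rw [← hu, ← hτ, hf, mul_zero, map_eq_zero_iff _ hinj] at this
    simpa using this
  have hPP : algebraMap ℓ[X] E P' = τ P := by
    have hne : (u ^ b * u ^ b) ^ n * τ (∏ j : Fin n, (g (c.x j.succ) * g (c.x 0))) ≠ 0 :=
      mul_ne_zero (pow_ne_zero _ (mul_ne_zero (pow_ne_zero _ hu0) (pow_ne_zero _ hu0)))
        (fun h => hz (hτinj _ h))
    apply mul_right_cancel₀ hne
    have h1 := congrArg (algebraMap ℓ[X] E) hP1'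
    rw [map_mul, hprod] at h1
    have h2 := congrArg τ hP1
    rw [map_mul] at h2
    rw [h1, hdet, ← h2]
    ring
  -- X ^ p * P' = reverse P
  have hrev : X ^ P.natDegree * P' = P.reflect P.natDegree := by
    apply hinj
    rw [alg_reflect _ _ le_rfl, map_mul, map_pow, hPP]
  by_cases hp0 : P.natDegree = 0
  · have := congrArg (fun f => coeff f 0) hrev
    simp only [hp0, pow_zero, one_mul, coeff_reflect, revAt_zero] at this
    exact this.symm
  · exfalso
    have := congrArg (fun f => coeff f 0) hrev
    simp only [coeff_reflect, revAt_zero, mul_coeff_zero, coeff_X_pow] at this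
    rw [if_neg (fun h => hp0 h.symm), zero_mul] at this
    have hPz : P = 0 := by
      rw [← leadingCoeff_eq_zero]; exact this.symm
    exact hp0 (by rw [hPz]; simp)

/-- Homotopy lemma with trailing index `t` and leading index `b`. -/
theorem homotopy {ℓ : Type*} [Field ℓ] [CharP ℓ 2] (D : Fin n → Derivation ℤ ℓ ℓ)
    (c : Comb σ n d) (g : σ → ℓ[X]) (t b : ℕ)
    (ht : ∀ s, ∀ i < t, (g s).coeff i = 0) (hb : ∀ s, ∀ i, b < i → (g s).coeff i = 0)
    (hF : MvPolynomial.eval g (c.F0 ℓ[X]) = 0) (h0 : ∃ s, (g s).coeff t ≠ 0)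
    (hB : ∃ s, (g s).coeff b ≠ 0) :
    phi D (fun j => (g (c.x j)).coeff t) = phi D (fun j => (g (c.x j)).coeff b) := by
  have hdiv : ∀ s, ∃ h : ℓ[X], g s = X ^ t * h := fun s => X_pow_dvd_iff.mpr (ht s)
  choose h hh using hdiv
  have htb : t ≤ b := by
    obtain ⟨s, hs⟩ := h0
    by_contra hlt
    exact hs (hb s t (not_le.mp hlt))
  obtain ⟨e, rfl⟩ := Nat.exists_eq_add_of_le htb
  have hc : ∀ s i, (g s).coeff (t + i) = (h s).coeff i := by
    intro s i
    rw [hh, add_comm, coeff_X_pow_mul]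
  have hF' : MvPolynomial.eval h (c.F0 ℓ[X]) = 0 := by
    have e1 : g = fun s => X ^ t * h s := funext hh
    rw [c.eval_F0, e1] at hF
    rw [Finset.sum_congr rfl (fun m hm => by rw [ev_smul, c.deg m hm]), ev_smul, c.deg0,
      ← Finset.mul_sum, ← mul_add] at hF
    rw [c.eval_F0]
    exact (mul_eq_zero.mp hF).resolve_left (pow_ne_zero _ (pow_ne_zero _ X_ne_zero))
  have := homotopy_aux (FractionRing ℓ[X]) D c h e (by
    intro s
    rw [natDegree_le_iff_coeff_eq_zero]
    intro N hN
    rw [← hc]; exact hb s _ (by omega)) hF' (by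
      obtain ⟨s, hs⟩ := h0
      exact ⟨s, by rw [← hc]; exact hs⟩) (by
      obtain ⟨s, hs⟩ := hB
      exact ⟨s, by rw [← hc]; exact hs⟩)
  simp only [← hc] at this
  exact this

end SI

namespace SI
open Polynomial IsLocalRing

section newton
variable {σ : Type*} {n d : ℕ}

lemma phi_smul {E : Type*} [Field E] (D : Fin n → Derivation ℤ E E) (x : Fin (n + 1) → E) {a : E}
    (ha : a ≠ 0) : phi D (fun j => a * x j) = phi D x := by
  simp only [phi, mul_div_mul_left _ _ ha]

lemma homog_eval₂ {R S : Type*} [CommRing R] [CommRing S] (φ : R →+* S) {F : MvPolynomial σ R}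
    (hF : F.IsHomogeneous d) (a : S) (g : σ → S) :
    MvPolynomial.eval₂ φ (fun s => a * g s) F = a ^ d * MvPolynomial.eval₂ φ g F := by
  rw [MvPolynomial.eval₂_eq, MvPolynomial.eval₂_eq, Finset.mul_sum]
  refine Finset.sum_congr rfl fun m hm => ?_
  have h1 : m.degree = d := by
    have := hF (MvPolynomial.mem_support_iff.mp hm)
    exact (congrFun (congrArg DFunLike.coe (Finsupp.degree_eq_weight_one (σ := σ) (R := ℕ))) m).trans this
  simp only [mul_pow, Finset.prod_mul_distrib, Finset.prod_pow_eq_pow_sum]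
  have : ∑ i ∈ m.support, m i = d := h1
  rw [this]; ring

variable {L : Type*} [Field L] (V : ValuationSubring L)

/-- `q` is a reduction of the projective point `p`. -/
def IsRed (p : σ → L) (q : σ → ResidueField V) : Prop :=
  ∃ a : L, a ≠ 0 ∧ ∃ p' : σ → V, (∀ s, p s = a * p' s) ∧ (∀ s, residue V (p' s) = q s) ∧ ∃ s, q s ≠ 0

variable {V}

lemma residue_ne_zero_iff (y : V) : residue V y ≠ 0 ↔ V.valuation y = 1 := by
  rw [Ne, residue_eq_zero_iff, mem_maximalIdeal, mem_nonunits_iff, not_not, V.valuation_eq_one_iff]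

lemma IsRed.smul {p : σ → L} {q} (h : IsRed V p q) {a : L} (ha : a ≠ 0) :
    IsRed V (fun s => a * p s) q := by
  obtain ⟨b, hb, p', h1, h2, h3⟩ := h
  exact ⟨a * b, mul_ne_zero ha hb, p', fun s => (congrArg (a * ·) (h1 s)).trans (mul_assoc _ _ _).symm, h2, h3⟩

lemma IsRed.unique {p : σ → L} {q q'} (h : IsRed V p q) (h' : IsRed V p q') :
    ∃ a : ResidueField V, a ≠ 0 ∧ ∀ s, q' s = a * q s := by
  obtain ⟨a, ha, p1, h1, h2, s, hs⟩ := h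
  obtain ⟨b, hb, p2, h1', h2', s', hs'⟩ := h'
  have e : ∀ t, a * (p1 t : L) = b * p2 t := fun t => by rw [← h1, ← h1']
  have v1 : V.valuation (p1 s : L) = 1 := by rw [← residue_ne_zero_iff, h2]; exact hs
  have v2 : V.valuation (p2 s' : L) = 1 := by rw [← residue_ne_zero_iff, h2']; exact hs'
  have l1 : V.valuation a ≤ V.valuation b := by
    have := congrArg V.valuation (e s)
    rw [map_mul, map_mul, v1, mul_one] at this
    rw [this]
    exact mul_le_of_le_one_right' (V.valuation_le_one _)
  have l2 : V.valuation b ≤ V.valuation a := by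
    have := congrArg V.valuation (e s')
    rw [map_mul, map_mul, v2, mul_one] at this
    rw [← this]
    exact mul_le_of_le_one_right' (V.valuation_le_one _)
  have l : V.valuation (a / b) = 1 := by
    rw [map_div₀, le_antisymm l1 l2, div_self]
    simpa using hb
  let u : V := ⟨a / b, (V.valuation_le_one_iff _).mp l.le⟩
  refine ⟨residue V u, (residue_ne_zero_iff u).mpr l, fun t => ?_⟩
  rw [← h2, ← h2', ← map_mul]
  congr 1
  apply Subtype.ext
  change (p2 t : L) = a / b * p1 t
  rw [div_mul_eq_mul_div, e t, mul_div_cancel_left₀ _ hb]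

lemma IsRed.phi_eq (D : Fin n → Derivation ℤ (ResidueField V) (ResidueField V)) (x : Fin (n + 1) → σ)
    {p : σ → L} {q q'} (h : IsRed V p q) (h' : IsRed V p q') :
    phi D (fun j => q (x j)) = phi D (fun j => q' (x j)) := by
  obtain ⟨a, ha, e⟩ := h.unique h'
  simp only [e]
  exact (phi_smul D _ ha).symm

lemma exists_max_factor {ι : Type*} (T : Finset ι) (p : ι → L) (h : ∃ i ∈ T, p i ≠ 0) :
    ∃ a : L, a ≠ 0 ∧ (∀ i ∈ T, p i / a ∈ V) ∧ ∃ i ∈ T, V.valuation (p i / a) = 1 := by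
  obtain ⟨i, hi, hp⟩ := h
  obtain ⟨m, hm, hmax⟩ := T.exists_max_image (fun i => V.valuation (p i)) ⟨i, hi⟩
  have hm0 : p m ≠ 0 := by
    intro h0
    have := hmax i hi
    rw [h0, map_zero, le_zero_iff] at this
    exact hp (by simpa using this)
  refine ⟨p m, hm0, fun j hj => ?_, m, hm, by rw [div_self hm0, map_one]⟩
  rw [← V.valuation_le_one_iff, map_div₀]
  have : 0 < V.valuation (p m) := by rw [zero_lt_iff]; simpa using hm0
  exact (div_le_one₀ this).mpr (hmax j hj)

lemma exists_isRed [Fintype σ] {p : σ → L} (h : ∃ s, p s ≠ 0) : ∃ q, IsRed V p q := by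
  obtain ⟨s, hs⟩ := h
  obtain ⟨a, ha, h1, t, -, h2⟩ := exists_max_factor (V := V) Finset.univ p ⟨s, Finset.mem_univ _, hs⟩
  refine ⟨fun s => residue V ⟨p s / a, h1 s (Finset.mem_univ _)⟩, a, ha, fun s => ⟨p s / a, h1 s (Finset.mem_univ _)⟩,
    fun s => ?_, fun s => rfl, t, ?_⟩
  · change p s = a * (p s / a); field_simp
  · exact (residue_ne_zero_iff _).mpr h2

variable (F : MvPolynomial σ V)

lemma red_zero {c : Comb σ n d} {F : MvPolynomial σ V}
    (hred : MvPolynomial.map (residue V) F = c.F0 (ResidueField V)) (g : σ → V[X])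
    (hg : MvPolynomial.eval₂ C g F = 0) :
    MvPolynomial.eval (fun s => (g s).map (residue V)) (c.F0 (ResidueField V)[X]) = 0 := by
  have h1 : c.F0 (ResidueField V)[X] = MvPolynomial.map C (c.F0 (ResidueField V)) := by
    simp [Comb.F0, MvPolynomial.map_monomial]
  rw [h1, ← hred, MvPolynomial.map_map, MvPolynomial.eval_map]
  have := congrArg (Polynomial.mapRingHom (residue V)) hg
  rw [MvPolynomial.hom_eval₂, map_zero] at this
  rw [← this]
  congr 1
  ext; simp

theorem newton [Fintype σ] [CharP (ResidueField V) 2] {c : Comb σ n d} {F : MvPolynomial σ V}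
    (D : Fin n → Derivation ℤ (ResidueField V) (ResidueField V))
    (hdiv : ∀ z : L, z ≠ 0 → ∀ m : ℕ, 0 < m → ∃ b, V.valuation b ^ m = V.valuation z)
    (hhom : F.IsHomogeneous d)
    (hred : MvPolynomial.map (residue V) F = c.F0 (ResidueField V)) (j : ℕ) :
    ∀ (g : σ → V[X]), MvPolynomial.eval₂ C g F = 0 →
    (∀ s, ∀ i < j, residue V ((g s).coeff i) = 0) → (∃ s, residue V ((g s).coeff j) ≠ 0) →
    ∀ q, IsRed V (fun s => (((g s).coeff 0 : V) : L)) q →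
    phi D (fun i => q (c.x i)) = phi D (fun i => residue V ((g (c.x i)).coeff j)) := by
  classical
  induction j using Nat.strong_induction_on with
  | _ j ih =>
  intro g hg hlt hj q hq
  by_cases hj0 : j = 0
  · subst hj0
    exact IsRed.phi_eq D c.x hq ⟨1, one_ne_zero, fun s => (g s).coeff 0, fun s => (one_mul _).symm,
      fun s => rfl, hj⟩
  -- choose b
  have hne : ∃ s, (((g s).coeff 0 : V) : L) ≠ 0 := by
    obtain ⟨a, ha, p', h1, h2, s, hs⟩ := hq
    refine ⟨s, ?_⟩
    have h1s : (((g s).coeff 0 : V) : L) = a * p' s := h1 s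
    rw [h1s]
    refine mul_ne_zero ha (fun h0 => hs ?_)
    have : p' s = 0 := Subtype.ext h0
    rw [← h2, this, map_zero]
  let T : Finset (ℕ × σ) := (Finset.range j ×ˢ Finset.univ).filter fun u => (((g u.2).coeff u.1 : V) : L) ≠ 0
  have hT : T.Nonempty := by
    obtain ⟨s, hs⟩ := hne
    exact ⟨(0, s), by simpa [T, Nat.pos_iff_ne_zero, hj0] using hs⟩
  have hB : ∀ u : ℕ × σ, ∃ b : L, u ∈ T → V.valuation b ^ (j - u.1) = V.valuation (((g u.2).coeff u.1 : V) : L) := by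
    intro u
    by_cases hu : u ∈ T
    · simp only [T, Finset.mem_filter, Finset.mem_product, Finset.mem_range, Finset.mem_univ] at hu
      obtain ⟨b, hb⟩ := hdiv _ hu.2 (j - u.1) (by omega)
      exact ⟨b, fun _ => hb⟩
    · exact ⟨0, fun h => absurd h hu⟩
  choose B hB using hB
  obtain ⟨u, hu, hmax⟩ := T.exists_max_image (fun u => V.valuation (B u)) hT
  set b := B u with hb
  have hu' := hu
  simp only [T, Finset.mem_filter, Finset.mem_product, Finset.mem_range, Finset.mem_univ, and_true] at hu'
  have hb0 : b ≠ 0 := by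
    intro h0
    have := hB u hu
    rw [← hb, h0, map_zero, zero_pow (by omega), eq_comm] at this
    exact hu'.2 (by simpa using this)
  have vb0 : V.valuation b ≠ 0 := by simpa using hb0
  have hbound : ∀ i < j, ∀ s, V.valuation (((g s).coeff i : V) : L) ≤ V.valuation b ^ (j - i) := by
    intro i hi s
    by_cases h0 : (((g s).coeff i : V) : L) = 0
    · rw [h0, map_zero]; exact zero_le
    · have hm : (i, s) ∈ T := by simp [T, hi]; simpa using h0
      rw [← hB _ hm]
      exact pow_le_pow_left' (hmax _ hm) _
  have hvb : V.valuation b < 1 := by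
    have h1 := hlt u.2 u.1 hu'.1
    have h2 : V.valuation (((g u.2).coeff u.1 : V) : L) < 1 := by
      refine lt_of_le_of_ne (V.valuation_le_one _) (fun h => ?_)
      exact (residue_ne_zero_iff _).mpr h h1
    rw [← hB u hu] at h2
    by_contra hcon
    exact absurd h2 (not_lt.mpr (one_le_pow_of_one_le' (not_lt.mp hcon) _))
  -- new polynomials
  let gL : σ → L[X] := fun s => (g s).map (algebraMap V L)
  let h : σ → L[X] := fun s => C ((b ^ j)⁻¹) * (gL s).comp (C b * X)
  have hcoef : ∀ s i, (h s).coeff i = (b ^ j)⁻¹ * ((((g s).coeff i : V) : L) * b ^ i) := by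
    intro s i
    simp only [h, gL, coeff_C_mul, comp_C_mul_X_coeff, coeff_map]
    rfl
  have hval : ∀ s i, V.valuation ((h s).coeff i) =
      V.valuation (((g s).coeff i : V) : L) * V.valuation b ^ i / V.valuation b ^ j := by
    intro s i
    rw [hcoef, map_mul, map_mul, map_inv₀, map_pow, map_pow]
    field_simp
  have hvlt : ∀ s, ∀ i < j, V.valuation ((h s).coeff i) =
      V.valuation (((g s).coeff i : V) : L) / V.valuation b ^ (j - i) := by
    intro s i hi
    rw [hval]
    obtain ⟨e, rfl⟩ := Nat.exists_eq_add_of_le hi.le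
    rw [Nat.add_sub_cancel_left, pow_add, mul_comm (V.valuation b ^ i)]
    exact mul_div_mul_right _ _ (pow_ne_zero _ vb0)
  have hvgt : ∀ s, ∀ i > j, V.valuation ((h s).coeff i) < 1 := by
    intro s i hi
    rw [hval]
    obtain ⟨e, rfl⟩ := Nat.exists_eq_add_of_le hi.le
    rw [pow_add, mul_comm (V.valuation b ^ j), ← mul_assoc, mul_div_cancel_right₀ _ (pow_ne_zero _ vb0)]
    refine lt_of_le_of_lt (mul_le_of_le_one_left' (V.valuation_le_one _)) ?_
    exact pow_lt_one' hvb (by omega)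
  have hveq : ∀ s, (h s).coeff j = (((g s).coeff j : V) : L) := by
    intro s
    rw [hcoef]
    have := pow_ne_zero j hb0
    field_simp
  have hV : ∀ s i, (h s).coeff i ∈ V := by
    intro s i
    rw [← V.valuation_le_one_iff]
    rcases lt_trichotomy i j with hi | hi | hi
    · rw [hvlt s i hi]
      exact (div_le_one₀ (zero_lt_iff.mpr (pow_ne_zero _ vb0))).mpr (hbound i hi s)
    · rw [hi, hveq]; exact V.valuation_le_one _
    · exact (hvgt s i hi).le
  have hlift : ∀ s, ∃ g' : V[X], g'.map (algebraMap V L) = h s := by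
    intro s
    have : h s ∈ lifts (algebraMap V L) := by
      rw [lifts_iff_coeff_lifts]
      exact fun i => ⟨⟨_, hV s i⟩, rfl⟩
    exact (mem_lifts _).mp this
  choose g' hg' using hlift
  have hc' : ∀ s i, (((g' s).coeff i : V) : L) = (h s).coeff i := by
    intro s i
    rw [← hg', coeff_map]; rfl
  have hF' : MvPolynomial.eval₂ C g' F = 0 := by
    have hinj : Function.Injective (Polynomial.mapRingHom (algebraMap V L)) :=
      Polynomial.map_injective _ (IsFractionRing.injective V L)
    apply hinj
    rw [map_zero, MvPolynomial.hom_eval₂]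
    have e1 : (fun s => (Polynomial.mapRingHom (algebraMap V L)) (g' s)) = h := by
      funext s; exact hg' s
    have e2 : (⇑(Polynomial.mapRingHom (algebraMap V L)) ∘ g') = h := e1
    refine (congrArg (fun y => MvPolynomial.eval₂ _ y F) e2).trans ?_
    have := homog_eval₂ ((Polynomial.mapRingHom (algebraMap V L)).comp C) hhom (C ((b ^ j)⁻¹))
      (fun s => (gL s).comp (C b * X))
    refine this.trans ?_
    have h3 := congrArg (Polynomial.compRingHom (C b * X)) (congrArg (Polynomial.mapRingHom (algebraMap V L)) hg)
    rw [MvPolynomial.hom_eval₂, MvPolynomial.hom_eval₂, map_zero, map_zero] at h3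
    have e3 : (compRingHom (C b * X)).comp ((mapRingHom (algebraMap V L)).comp C) =
        (mapRingHom (algebraMap V L)).comp (C : V →+* V[X]) := by
      ext; simp
    rw [e3] at h3
    exact (congrArg (fun y => C ((b ^ j)⁻¹) ^ d * y) h3).trans (mul_zero _)
  have hex : ∃ i, i < j ∧ ∃ s, residue V ((g' s).coeff i) ≠ 0 := by
    refine ⟨u.1, hu'.1, u.2, ?_⟩
    rw [residue_ne_zero_iff, hc', hvlt _ _ hu'.1, ← hB u hu, div_self (pow_ne_zero _ vb0)]
  let j' := Nat.find hex
  obtain ⟨hj'j, hj's⟩ := Nat.find_spec hex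
  have hj'min : ∀ s, ∀ i < j', residue V ((g' s).coeff i) = 0 := by
    intro s i hi
    by_contra hcon
    exact Nat.find_min hex hi ⟨hi.trans hj'j, s, hcon⟩
  have hgj : ∀ s, (g' s).coeff j = (g s).coeff j := fun s => Subtype.ext ((hc' s j).trans (hveq s))
  have hq' : IsRed V (fun s => (((g' s).coeff 0 : V) : L)) q := by
    have := hq.smul (inv_ne_zero (pow_ne_zero j hb0))
    convert this using 2 with s
    rw [hc', hcoef, pow_zero, mul_one]
  rw [ih j' hj'j g' hF' hj'min hj's q hq']
  have hhom' := homotopy D c (fun s => (g' s).map (residue V)) j' j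
    (fun s i hi => by rw [coeff_map]; exact hj'min s i hi)
    (fun s i hi => by
      rw [coeff_map]
      by_contra hcon
      have := (residue_ne_zero_iff _).mp hcon
      rw [hc'] at this
      exact (hvgt s i hi).ne this)
    (red_zero hred g' hF')
    (by simpa only [coeff_map] using hj's)
    (by simpa only [coeff_map, hgj] using hj)
  simpa only [coeff_map, hgj] using hhom'

theorem newton_leading [Fintype σ] [CharP (ResidueField V) 2] {c : Comb σ n d} {F : MvPolynomial σ V}
    (D : Fin n → Derivation ℤ (ResidueField V) (ResidueField V))
    (hdiv : ∀ z : L, z ≠ 0 → ∀ m : ℕ, 0 < m → ∃ b, V.valuation b ^ m = V.valuation z)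
    (hhom : F.IsHomogeneous d)
    (hred : MvPolynomial.map (residue V) F = c.F0 (ResidueField V))
    (g : σ → V[X]) (hg : MvPolynomial.eval₂ C g F = 0) (b : ℕ)
    (hb : ∀ s, ∀ i > b, residue V ((g s).coeff i) = 0) (hb' : ∃ s, residue V ((g s).coeff b) ≠ 0)
    (q) (hq : IsRed V (fun s => (((g s).coeff 0 : V) : L)) q) :
    phi D (fun i => q (c.x i)) = phi D (fun i => residue V ((g (c.x i)).coeff b)) := by
  classical
  have hex : ∃ i, ∃ s, residue V ((g s).coeff i) ≠ 0 := ⟨b, hb'⟩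
  have hmin : ∀ s, ∀ i < Nat.find hex, residue V ((g s).coeff i) = 0 := by
    intro s i hi
    by_contra hcon
    exact Nat.find_min hex hi ⟨s, hcon⟩
  rw [newton D hdiv hhom hred (Nat.find hex) g hg hmin (Nat.find_spec hex) q hq]
  have := homotopy D c (fun s => (g s).map (residue V)) (Nat.find hex) b
    (fun s i hi => by rw [coeff_map]; exact hmin s i hi)
    (fun s i hi => by rw [coeff_map]; exact hb s i hi)
    (red_zero hred g hg)
    (by simpa only [coeff_map] using Nat.find_spec hex)
    (by simpa only [coeff_map] using hb')
  simpa only [coeff_map] using this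

theorem newton_final [Fintype σ] [CharP (ResidueField V) 2] {c : Comb σ n d} {F : MvPolynomial σ V}
    (D : Fin n → Derivation ℤ (ResidueField V) (ResidueField V))
    (hdiv : ∀ z : L, z ≠ 0 → ∀ m : ℕ, 0 < m → ∃ b, V.valuation b ^ m = V.valuation z)
    (hhom : F.IsHomogeneous d)
    (hred : MvPolynomial.map (residue V) F = c.F0 (ResidueField V))
    (f : σ → L[X]) (hf : MvPolynomial.eval₂ (C.comp (algebraMap V L)) f F = 0)
    (q) (hq : IsRed V (fun s => (f s).eval 0) q)
    (q') (hq' : IsRed V (fun s => (f s).eval 1) q') :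
    phi D (fun i => q (c.x i)) = phi D (fun i => q' (c.x i)) := by
  classical
  let T : Finset (Σ _ : σ, ℕ) := Finset.univ.sigma fun s => (f s).support
  have hT : ∃ i ∈ T, (f i.1).coeff i.2 ≠ 0 := by
    obtain ⟨a, ha, p', h1, h2, s, hs⟩ := hq
    have : (f s) ≠ 0 := by
      intro h0
      have e := h1 s
      simp only [h0, eval_zero] at e
      have e' : (p' s : L) = 0 := by
        rcases mul_eq_zero.mp e.symm with h | h
        · exact absurd h ha
        · exact h
      have : p' s = 0 := Subtype.ext e'
      exact hs (by rw [← h2, this, map_zero])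
    refine ⟨⟨s, (f s).natDegree⟩, ?_, ?_⟩
    · simp [T, this]
    · simpa using this
  obtain ⟨a, ha, hintg, ⟨s0, i0⟩, hi0, hone⟩ := exists_max_factor (V := V) T (fun i => (f i.1).coeff i.2) hT
  have hlift : ∀ s, ∃ g' : V[X], g'.map (algebraMap V L) = C a⁻¹ * f s := by
    intro s
    have : C a⁻¹ * f s ∈ lifts (algebraMap V L) := by
      rw [lifts_iff_coeff_lifts]
      intro i
      by_cases hi : i ∈ (f s).support
      · have := hintg ⟨s, i⟩ (by simpa [T] using hi)
        exact ⟨⟨_, this⟩, by rw [coeff_C_mul, mul_comm, ← div_eq_mul_inv]; rfl⟩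
      · refine ⟨0, ?_⟩
        rw [notMem_support_iff] at hi
        rw [coeff_C_mul, hi, mul_zero, map_zero]
    exact (mem_lifts _).mp this
  choose g hg using hlift
  have hinj : Function.Injective (Polynomial.mapRingHom (algebraMap V L)) :=
    Polynomial.map_injective _ (IsFractionRing.injective V L)
  have hF : MvPolynomial.eval₂ C g F = 0 := by
    apply hinj
    rw [map_zero, MvPolynomial.hom_eval₂]
    have e2 : (⇑(Polynomial.mapRingHom (algebraMap V L)) ∘ g) = fun s => C a⁻¹ * f s := by
      funext s; exact hg s
    have e3 : (mapRingHom (algebraMap V L)).comp (C : V →+* V[X]) = C.comp (algebraMap V L) := by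
      ext; simp
    refine (congrArg (fun y => MvPolynomial.eval₂ _ y F) e2).trans ?_
    rw [e3, homog_eval₂ _ hhom, hf, mul_zero]
  have hF1 : MvPolynomial.eval₂ C (fun s => (g s).comp (X + C 1)) F = 0 := by
    have h3 := congrArg (Polynomial.compRingHom (X + C 1 : V[X])) hF
    rw [MvPolynomial.hom_eval₂, map_zero] at h3
    have e3 : (compRingHom (X + C 1 : V[X])).comp C = C := by ext; simp
    rw [e3] at h3
    exact h3
  -- largest index
  let W : Finset ℕ := (T.image fun i => i.2).filter fun i => ∃ s, residue V ((g s).coeff i) ≠ 0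
  have hgc : ∀ s i, (((g s).coeff i : V) : L) = (f s).coeff i / a := by
    intro s i
    have := congrArg (fun p => coeff p i) (hg s)
    simp only [coeff_map, coeff_C_mul] at this
    rw [div_eq_mul_inv, mul_comm]; exact this
  have hW : W.Nonempty := by
    refine ⟨i0, ?_⟩
    simp only [W, Finset.mem_filter, Finset.mem_image]
    refine ⟨⟨⟨s0, i0⟩, hi0, rfl⟩, s0, ?_⟩
    rw [residue_ne_zero_iff, hgc]; exact hone
  have hbmem := Finset.max'_mem W hW
  set b := W.max' hW with hbdef
  have hb' : ∃ s, residue V ((g s).coeff b) ≠ 0 := (Finset.mem_filter.mp hbmem).2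
  have hb : ∀ s, ∀ i > b, residue V ((g s).coeff i) = 0 := by
    intro s i hi
    by_contra hcon
    have : i ∈ W := by
      simp only [W, Finset.mem_filter, Finset.mem_image]
      refine ⟨⟨⟨s, i⟩, ?_, rfl⟩, s, hcon⟩
      simp only [T, Finset.mem_sigma, Finset.mem_univ, true_and, mem_support_iff]
      intro h0
      apply hcon
      have : (g s).coeff i = 0 := Subtype.ext (by rw [hgc, h0, zero_div]; rfl)
      rw [this, map_zero]
    exact absurd (Finset.le_max' W i this) (not_le.mpr hi)
  have hnat : ∀ s, ((g s).map (residue V)).natDegree ≤ b := by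
    intro s
    rw [natDegree_le_iff_coeff_eq_zero]
    intro i hi
    rw [coeff_map]; exact hb s i hi
  have hcomp : ∀ s, ((g s).comp (X + C 1)).map (residue V) = ((g s).map (residue V)).comp (X + C 1) := by
    intro s; simp [Polynomial.map_comp]
  have hcb : ∀ s, residue V (((g s).comp (X + C 1)).coeff b) = residue V ((g s).coeff b) := by
    intro s
    rw [← coeff_map, hcomp, ← coeff_map]
    set p := (g s).map (residue V)
    rcases (hnat s).eq_or_lt with h | h
    · have := natDegree_taylor p 1
      rw [taylor_apply] at this
      have hl : (p.comp (X + C 1)).leadingCoeff = p.leadingCoeff := by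
        rw [leadingCoeff_comp (by rw [natDegree_X_add_C]; exact one_ne_zero), leadingCoeff_X_add_C,
          one_pow, mul_one]
      rw [leadingCoeff, leadingCoeff, this, h] at hl
      exact hl
    · rw [coeff_eq_zero_of_natDegree_lt h, coeff_eq_zero_of_natDegree_lt]
      have := natDegree_taylor p 1
      rw [taylor_apply] at this
      rwa [this]
  have r0 : IsRed V (fun s => (((g s).coeff 0 : V) : L)) q := by
    have := hq.smul (inv_ne_zero ha)
    convert this using 2 with s
    rw [hgc, coeff_zero_eq_eval_zero, div_eq_mul_inv, mul_comm]
  have r1 : IsRed V (fun s => ((((g s).comp (X + C 1)).coeff 0 : V) : L)) q' := by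
    have := hq'.smul (inv_ne_zero ha)
    convert this using 2 with s
    rw [coeff_zero_eq_eval_zero, eval_comp]
    have e := congrArg (eval 1) (hg s)
    rw [eval_mul, eval_C] at e
    rw [← e, eval_map, ← Polynomial.coe_evalRingHom]
    simp only [eval_add, eval_X, eval_C, zero_add]
    rw [← map_one (algebraMap V L), eval₂_at_apply]; rfl
  rw [newton_leading D hdiv hhom hred g hF b hb hb' q r0,
    newton_leading D hdiv hhom hred _ hF1 b (fun s i hi => by
      rw [← coeff_map, hcomp]
      apply coeff_eq_zero_of_natDegree_lt
      have := natDegree_taylor ((g s).map (residue V)) 1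
      rw [taylor_apply] at this
      rw [this]
      exact lt_of_le_of_lt (hnat s) hi) (by simpa only [hcb] using hb') q' r1]
  simp only [hcb]

end newton
end SI

namespace SI
open IsLocalRing

section center

/-- Valuation rings dominating a prime. -/
lemma exists_center {R K : Type*} [CommRing R] [Field K] (f : R →+* K) (p : Ideal R) [p.IsPrime]
    (hf : ∀ s, s ∉ p → f s ≠ 0) :
    ∃ V : ValuationSubring K, (∀ a, V.valuation (f a) ≤ 1) ∧ (∀ a, a ∉ p → V.valuation (f a) = 1) ∧
      (∀ a, a ∈ p → V.valuation (f a) < 1) := by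
  have hu : ∀ y : p.primeCompl, IsUnit (f y) := fun y => (hf y y.2).isUnit
  let g : Localization.AtPrime p →+* K := IsLocalization.lift (M := p.primeCompl) hu
  obtain ⟨V, h, hloc⟩ := IsLocalRing.exists_factor_valuationRing g
  have hg : ∀ a, g (algebraMap R _ a) = f a := fun a => IsLocalization.lift_eq hu a
  have hle : ∀ a, V.valuation (f a) ≤ 1 := fun a => by
    rw [V.valuation_le_one_iff, ← hg]; exact h _
  refine ⟨V, hle, fun a ha => ?_, fun a ha => ?_⟩
  · refine le_antisymm (hle a) ?_
    have hua : IsUnit (algebraMap R (Localization.AtPrime p) a) :=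
      IsLocalization.map_units _ (⟨a, ha⟩ : p.primeCompl)
    obtain ⟨b, hb⟩ := hua.exists_right_inv
    have h1 := congrArg g hb
    rw [map_mul, hg, map_one] at h1
    have h2 := congrArg V.valuation h1
    rw [map_mul, map_one] at h2
    rw [← h2]
    exact mul_le_of_le_one_right' ((V.valuation_le_one_iff _).mpr (h b))
  · refine lt_of_le_of_ne (hle a) (fun h1 => ?_)
    have hm : f a ∈ V := (V.valuation_le_one_iff _).mp (hle a)
    have h2 : IsUnit (⟨f a, hm⟩ : V) := V.valuation_eq_one_iff _ |>.mpr h1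
    have h3 : IsUnit (g.codRestrict V.toSubring h (algebraMap R _ a)) := by
      have e : g.codRestrict V.toSubring h (algebraMap R _ a) = (⟨f a, hm⟩ : V) := Subtype.ext (hg a)
      rw [e]; exact h2
    have h4 := hloc.map_nonunit _ h3
    rw [IsLocalization.AtPrime.isUnit_to_map_iff (Localization.AtPrime p) p] at h4
    exact h4 ha

/-- specialization of independent parameters. -/
lemma exists_place {ι K : Type*} [Field K] [CharP K 2] (a : ι → K) (a0 : ι → ZMod 2)
    (hinj : Function.Injective (MvPolynomial.eval₂Hom (ZMod.castHom dvd_rfl K) a)) :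
    ∃ O : ValuationSubring K, ∃ h : ∀ i, a i ∈ O, CharP (ResidueField O) 2 ∧
      ∀ i (φ : ZMod 2 →+* ResidueField O), residue O ⟨a i, h i⟩ = φ (a0 i) := by
  let ev0 : MvPolynomial ι (ZMod 2) →+* ZMod 2 := MvPolynomial.eval a0
  let f := MvPolynomial.eval₂Hom (ZMod.castHom dvd_rfl K) a
  have hp : (RingHom.ker ev0).IsPrime := RingHom.ker_isPrime ev0
  obtain ⟨O, h1, h2, h3⟩ := exists_center f (RingHom.ker ev0) (fun s hs h0 => hs (by
    have : s = 0 := hinj (by rw [map_zero]; exact h0)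
    rw [this]; exact Ideal.zero_mem _))
  have ha : ∀ i, a i ∈ O := fun i => by
    have := h1 (MvPolynomial.X i)
    rw [O.valuation_le_one_iff] at this
    simpa [f] using this
  have hch : CharP (ResidueField O) 2 := by
    have h20 : (2 : O) = 0 := Subtype.ext (by
      have : (2 : K) = 0 := CharTwo.two_eq_zero
      exact this)
    have : (2 : ResidueField O) = 0 := by
      exact (map_ofNat (residue O) 2).symm.trans ((congrArg (residue O) h20).trans (map_zero _))
    exact CharTwo.of_one_ne_zero_of_two_eq_zero one_ne_zero this
  refine ⟨O, ha, hch, fun i φ => ?_⟩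
  have h4 := h3 (MvPolynomial.X i - MvPolynomial.C (a0 i)) (by simp [RingHom.mem_ker, ev0])
  have e : f (MvPolynomial.X i - MvPolynomial.C (a0 i)) = a i - ZMod.castHom dvd_rfl K (a0 i) := by
    simp [f]
  rw [e] at h4
  let ψ : ZMod 2 →+* O := by
    haveI : CharP O 2 := by
      have h20 : (2 : O) = 0 := Subtype.ext (by
        have : (2 : K) = 0 := CharTwo.two_eq_zero
        exact this)
      exact CharTwo.of_one_ne_zero_of_two_eq_zero one_ne_zero h20
    exact ZMod.castHom dvd_rfl O
  have e1 : ((ψ (a0 i) : O) : K) = ZMod.castHom dvd_rfl K (a0 i) := by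
    have : (algebraMap O K).comp ψ = ZMod.castHom dvd_rfl K := Subsingleton.elim _ _
    exact congrArg (fun g : ZMod 2 →+* K => g (a0 i)) this
  have e2 : residue O (ψ (a0 i)) = φ (a0 i) := by
    have : (residue O).comp ψ = φ := Subsingleton.elim _ _
    exact congrArg (fun g : ZMod 2 →+* _ => g (a0 i)) this
  rw [← e2, ← sub_eq_zero, ← map_sub]
  by_contra hcon
  have := (residue_ne_zero_iff _).mp hcon
  rw [← e1] at h4
  exact h4.ne this

/-- Derivations bounded w.r.t. a valuation descend to the residue field. -/
lemma exists_residue_derivation {L : Type*} [Field L] (V : ValuationSubring L) (D : Derivation ℤ L L)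
    (hD : ∀ a, V.valuation (D a) ≤ V.valuation a) :
    ∃ D' : Derivation ℤ (ResidueField V) (ResidueField V), ∀ (a b : V), D a = b →
      D' (residue V a) = residue V b := by
  have hV : ∀ a : V, D a ∈ V := fun a => by
    rw [← V.valuation_le_one_iff]; exact (hD a).trans (V.valuation_le_one a)
  let s := Function.surjInv (residue_surjective (R := V))
  have hs : ∀ y, residue V (s y) = y := Function.surjInv_eq _
  let δ : V → ResidueField V := fun a => residue V ⟨D a, hV a⟩
  have hδ0 : ∀ a b : V, residue V a = residue V b → δ a = δ b := by
    intro a b hab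
    rw [← sub_eq_zero, ← map_sub, ] at hab
    rw [← sub_eq_zero]
    simp only [δ]
    rw [← map_sub]
    by_contra hcon
    have h1 := (residue_ne_zero_iff _).mp hcon
    have h2 : V.valuation ((a - b : V) : L) ≠ 1 := fun h => (residue_ne_zero_iff _).mpr h hab
    have h3 : V.valuation ((a - b : V) : L) < 1 := lt_of_le_of_ne (V.valuation_le_one _) h2
    have h4 := hD ((a - b : V) : L)
    have e : D ((a - b : V) : L) = D a - D b := by
      have : ((a - b : V) : L) = a - b := rfl
      rw [this, map_sub]
    rw [e] at h4
    exact absurd h1 (h4.trans_lt h3).ne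
  have hadd : ∀ a b, δ (a + b) = δ a + δ b := by
    intro a b
    simp only [δ, ← map_add]
    congr 1
    apply Subtype.ext
    exact map_add D (a : L) b
  have hmul : ∀ a b, δ (a * b) = residue V a * δ b + residue V b * δ a := by
    intro a b
    simp only [δ, ← map_mul, ← map_add]
    congr 1
    apply Subtype.ext
    exact D.leibniz (a : L) b
  let Dl : ResidueField V →+ ResidueField V := AddMonoidHom.mk' (fun y => δ (s y)) (by
    intro y y'
    rw [← hadd]
    apply hδ0
    rw [map_add, hs, hs, hs])
  refine ⟨Derivation.mk' Dl.toIntLinearMap ?_, ?_⟩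
  · intro y y'
    change δ (s (y * y')) = y • δ (s y') + y' • δ (s y)
    rw [hδ0 (s (y * y')) (s y * s y') (by rw [map_mul, hs, hs, hs]), hmul, hs, hs]
    rfl
  · intro a b hab
    change δ (s (residue V a)) = _
    rw [hδ0 _ a (hs _)]
    simp only [δ]
    congr 1
    exact Subtype.ext hab

end center

section prim
variable {K : Type*} [Field K] (O : ValuationSubring K) {τ : Type*}

lemma exists_prim (R : MvPolynomial τ K) (hR : R ≠ 0) : ∃ c : K, c ≠ 0 ∧ ∃ R' : MvPolynomial τ O,
    R = MvPolynomial.C c * MvPolynomial.map (algebraMap O K) R' ∧ MvPolynomial.map (residue O) R' ≠ 0 := by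
  classical
  have : ∃ m ∈ R.support, R.coeff m ≠ 0 := by
    obtain ⟨m, hm⟩ := MvPolynomial.support_nonempty.mpr hR
    exact ⟨m, hm, MvPolynomial.mem_support_iff.mp hm⟩
  obtain ⟨c, hc, h1, m, hm, h2⟩ := exists_max_factor (V := O) R.support (fun m => R.coeff m) this
  let R' : MvPolynomial τ O := ∑ m ∈ R.support.attach, MvPolynomial.monomial m.1 ⟨R.coeff m / c, h1 m m.2⟩
  have e : R = MvPolynomial.C c * MvPolynomial.map (algebraMap O K) R' := by
    conv_lhs => rw [← MvPolynomial.support_sum_monomial_coeff R]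
    rw [← Finset.sum_attach]
    simp only [R', map_sum, MvPolynomial.map_monomial, Finset.mul_sum, MvPolynomial.C_mul_monomial]
    refine Finset.sum_congr rfl fun m _ => ?_
    congr 1
    change _ = c * (R.coeff m / c)
    field_simp
  refine ⟨c, hc, R', e, fun h0 => ?_⟩
  have h3 := congrArg (MvPolynomial.coeff m) h0
  rw [MvPolynomial.coeff_map, MvPolynomial.coeff_zero] at h3
  refine (residue_ne_zero_iff _).mpr ?_ h3
  have h4 := congrArg (MvPolynomial.coeff m) e
  rw [MvPolynomial.coeff_C_mul, MvPolynomial.coeff_map] at h4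
  rw [← h2]
  congr 1
  rw [h4, mul_div_cancel_left₀ _ hc]; rfl

end prim
end SI

namespace SI
open IsLocalRing MvPolynomial

section geom

/-- `f` has leading form `u y^d` in the first variable `y`. -/
def LeadForm {R : Type*} [CommRing R] {m : ℕ} (d : ℕ) (f : MvPolynomial (Fin (m + 1)) R) : Prop :=
  ∃ u R', u ≠ 0 ∧ f = C u * X 0 ^ d + R' ∧ degreeOf 0 R' < d

lemma LeadForm.degOf {R : Type*} [CommRing R] [IsDomain R] {m d : ℕ}
    {f : MvPolynomial (Fin (m + 1)) R} (h : LeadForm d f) : degreeOf 0 f = d := by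
  obtain ⟨u, R', hu, rfl, hR⟩ := h
  have h1 : degreeOf 0 (C u * X 0 ^ d : MvPolynomial (Fin (m + 1)) R) = d := by
    rw [degreeOf_C_mul _ _ (mem_nonZeroDivisors_of_ne_zero hu), degreeOf_X_self_pow]
  have := degreeOf_add_eq_of_degreeOf_lt (i := 0) (p := (C u * X 0 ^ d : MvPolynomial (Fin (m + 1)) R))
    (q := R') (by rw [h1]; exact hR)
  rw [this, h1]

lemma LeadForm.ne_zero {R : Type*} [CommRing R] [IsDomain R] {m d : ℕ} (hd : 0 < d)
    {f : MvPolynomial (Fin (m + 1)) R} (h : LeadForm d f) : f ≠ 0 := by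
  rintro rfl
  have := h.degOf
  rw [degreeOf_zero] at this
  omega

lemma LeadForm.not_dvd {R : Type*} [CommRing R] [IsDomain R] {m d : ℕ} (hd : 0 < d)
    {f : MvPolynomial (Fin (m + 1)) R} (h : LeadForm d f) {r} (hr : degreeOf 0 r < d) (hr0 : r ≠ 0) :
    r ∉ Ideal.span {f} := by
  rw [Ideal.mem_span_singleton]
  rintro ⟨q, rfl⟩
  have hq : q ≠ 0 := fun h0 => hr0 (by rw [h0, mul_zero])
  rw [degreeOf_mul_eq (h.ne_zero hd) hq, h.degOf] at hr
  omega

lemma LeadForm.reduce {R : Type*} [Field R] {m d : ℕ} (hd : 0 < d)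
    {f : MvPolynomial (Fin (m + 1)) R} (h : LeadForm d f) (P : MvPolynomial (Fin (m + 1)) R) :
    ∃ r, degreeOf 0 r < d ∧ P - r ∈ Ideal.span {f} := by
  have hdeg := h.degOf
  obtain ⟨u, R', hu, hf, hR⟩ := h
  let e := finSuccEquiv R m
  let g : Polynomial (MvPolynomial (Fin m) R) := e (C u⁻¹ * f)
  have hg : g = Polynomial.X ^ d + e (C u⁻¹ * R') := by
    simp only [g, e]
    rw [hf, mul_add, ← mul_assoc, ← C_mul, inv_mul_cancel₀ hu, C_1, one_mul, map_add, map_pow,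
      finSuccEquiv_X_zero]
  have hlt : (e (C u⁻¹ * R')).degree < d := by
    refine lt_of_le_of_lt Polynomial.degree_le_natDegree (Nat.cast_lt.mpr ?_)
    simp only [e]
    rw [natDegree_finSuccEquiv]
    exact lt_of_le_of_lt (degreeOf_C_mul_le _ _ _) hR
  have hmon : g.Monic := by
    rw [hg]; exact Polynomial.monic_X_pow_add hlt
  have hgd : g.natDegree = d := by
    simp only [g, e]
    rw [natDegree_finSuccEquiv, degreeOf_C_mul _ _ (mem_nonZeroDivisors_of_ne_zero (inv_ne_zero hu)), hdeg]
  have hm := Polynomial.modByMonic_add_div (e P) g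
  refine ⟨e.symm (e P %ₘ g), ?_, ?_⟩
  · rw [← natDegree_finSuccEquiv]
    have : finSuccEquiv R m (e.symm (e P %ₘ g)) = e P %ₘ g := e.apply_symm_apply _
    rw [this, ← hgd]
    apply Polynomial.natDegree_modByMonic_lt _ hmon
    intro h1
    rw [h1, Polynomial.natDegree_one] at hgd
    omega
  · rw [Ideal.mem_span_singleton]
    refine ⟨C u⁻¹ * e.symm (e P /ₘ g), ?_⟩
    apply e.injective
    rw [map_sub, map_mul, map_mul, e.apply_symm_apply, e.apply_symm_apply]
    have : e f * (e (C u⁻¹) * (e P /ₘ g)) = g * (e P /ₘ g) := by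
      simp only [g, map_mul]; ring
    rw [this]
    linear_combination -hm

variable {K : Type*} [Field K] (O : ValuationSubring K) {m d : ℕ}

/-- special-fibre condition: -/
lemma generic_ne (f P : MvPolynomial (Fin (m + 1)) O)
    (hf : map (residue O) f ≠ 0)
    (hP : map (residue O) P ∉ Ideal.span {map (residue O) f}) :
    map (algebraMap O K) P ∉ Ideal.span {map (algebraMap O K) f} := by
  rw [Ideal.mem_span_singleton] at hP ⊢
  rintro ⟨Q, hQ⟩
  by_cases hQ0 : Q = 0
  · rw [hQ0, mul_zero] at hQ
    have : P = 0 := map_injective _ (IsFractionRing.injective O K) (by rw [hQ, map_zero])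
    exact hP (by rw [this, map_zero]; exact dvd_zero _)
  obtain ⟨c, hc, Q', hQ', hQ1⟩ := exists_prim O Q hQ0
  have hprod : map (residue O) (f * Q') ≠ 0 := by rw [map_mul]; exact mul_ne_zero hf hQ1
  obtain ⟨i, hi⟩ := MvPolynomial.ne_zero_iff.mp hprod
  rw [coeff_map] at hi
  have hv := (residue_ne_zero_iff _).mp hi
  have e : map (algebraMap O K) P = C c * map (algebraMap O K) (f * Q') := by
    rw [hQ, hQ', map_mul]; ring
  have hcO : c ∈ O := by
    rw [← O.valuation_le_one_iff]
    have := congrArg (fun p => O.valuation (coeff i p)) e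
    simp only [coeff_map, coeff_C_mul] at this
    rw [map_mul] at this
    have h2 : O.valuation c = O.valuation ((coeff i P : O) : K) := by
      rw [show (O.valuation) ((algebraMap O K) (coeff i (f * Q'))) = 1 from hv, mul_one] at this
      exact this.symm
    rw [h2]; exact O.valuation_le_one _
  have e2 : P = C ⟨c, hcO⟩ * (f * Q') := by
    apply map_injective _ (IsFractionRing.injective O K)
    rw [e, map_mul (map (algebraMap O K)) (C _), map_C]; rfl
  apply hP
  rw [e2, map_mul, map_mul]
  exact ⟨map (residue O) (C ⟨c, hcO⟩) * map (residue O) Q', by ring⟩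

lemma degreeOf_map_le' {R S τ : Type*} [CommRing R] [CommRing S] (φ : R →+* S) (i : τ) (p : MvPolynomial τ R) :
    degreeOf i (map φ p) ≤ degreeOf i p := by
  rw [degreeOf_le_iff]
  intro m hm
  exact (degreeOf_le_iff (n := i) (f := p)).mp le_rfl m (support_map_subset _ _ hm)

/-- representation of elements -/
lemma exists_rep (f : MvPolynomial (Fin (m + 1)) O) (hd : 0 < d)
    (hlead : LeadForm d (map (residue O) f)) (r : MvPolynomial (Fin (m + 1)) K)
    (hr : degreeOf 0 r < d) (hr0 : r ≠ 0) :
    ∃ c : K, c ≠ 0 ∧ ∃ P : MvPolynomial (Fin (m + 1)) O, r = C c * map (algebraMap O K) P ∧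
      map (residue O) P ∉ Ideal.span {map (residue O) f} := by
  obtain ⟨c, hc, P, hP, hP0⟩ := exists_prim O r hr0
  refine ⟨c, hc, P, hP, hlead.not_dvd hd (lt_of_le_of_lt ?_ hr) hP0⟩
  refine (degreeOf_map_le' _ _ _).trans ?_
  rw [hP, degreeOf_C_mul _ _ (mem_nonZeroDivisors_of_ne_zero hc)]
  refine degreeOf_le_iff.mpr ?_
  intro i hi
  refine (degreeOf_le_iff (n := (0 : Fin (m + 1))) (f := map (algebraMap O K) P)).mp le_rfl i ?_
  rw [support_map_of_injective _ (IsFractionRing.injective O K)]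
  exact hi

lemma exists_rep' (f : MvPolynomial (Fin (m + 1)) O) (hd : 0 < d)
    (hlead : LeadForm d (map (residue O) f)) (hleadK : LeadForm d (map (algebraMap O K) f))
    (b : MvPolynomial (Fin (m + 1)) K) (hb : b ∉ Ideal.span {map (algebraMap O K) f}) :
    ∃ c : K, c ≠ 0 ∧ ∃ P : MvPolynomial (Fin (m + 1)) O,
      b - C c * map (algebraMap O K) P ∈ Ideal.span {map (algebraMap O K) f} ∧
      map (residue O) P ∉ Ideal.span {map (residue O) f} := by
  obtain ⟨r, hr, hbr⟩ := hleadK.reduce hd b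
  have hr0 : r ≠ 0 := by rintro rfl; rw [sub_zero] at hbr; exact hb hbr
  obtain ⟨c, hc, P, h1, h2⟩ := exists_rep O f hd hlead r hr hr0
  exact ⟨c, hc, P, by rw [← h1]; exact hbr, h2⟩

lemma geom_prime (f : MvPolynomial (Fin (m + 1)) O) (hd : 0 < d)
    (hlead : LeadForm d (map (residue O) f)) (hleadK : LeadForm d (map (algebraMap O K) f))
    (hirr : Irreducible (map (residue O) f)) : (Ideal.span {map (algebraMap O K) f}).IsPrime := by
  have hq : (Ideal.span {map (residue O) f}).IsPrime :=
    (Ideal.span_singleton_prime hirr.ne_zero).mpr hirr.prime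
  constructor
  · intro htop
    have := generic_ne O f 1 hirr.ne_zero (by rw [map_one]; exact (Ideal.ne_top_iff_one _).mp hq.ne_top)
    rw [htop] at this
    exact this trivial
  · intro a b hab
    by_contra hcon
    push Not at hcon
    obtain ⟨c, hc, P, h1, h2⟩ := exists_rep' O f hd hlead hleadK a hcon.1
    obtain ⟨c', hc', P', h1', h2'⟩ := exists_rep' O f hd hlead hleadK b hcon.2
    have h3 := generic_ne O f (P * P') hirr.ne_zero (by
      rw [map_mul]; intro h; exact (hq.mem_or_mem h).elim h2 h2')
    apply h3
    set I := Ideal.span {map (algebraMap O K) f}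
    have h4 : (C c * map (algebraMap O K) P) * (C c' * map (algebraMap O K) P') ∈ I := by
      have e : (C c * map (algebraMap O K) P) * (C c' * map (algebraMap O K) P') =
        a * b - (a - C c * map (algebraMap O K) P) * b
         - (C c * map (algebraMap O K) P) * (b - C c' * map (algebraMap O K) P') := by ring
      rw [e]
      exact I.sub_mem (I.sub_mem hab (I.mul_mem_right _ h1)) (I.mul_mem_left _ h1')
    have e2 : map (algebraMap O K) (P * P') = C (c⁻¹ * c'⁻¹) *
        ((C c * map (algebraMap O K) P) * (C c' * map (algebraMap O K) P')) := by
      rw [map_mul]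
      have : (C (c⁻¹ * c'⁻¹) * (C c * C c') : MvPolynomial (Fin (m + 1)) K) = 1 := by
        rw [← C_mul, ← C_mul]
        have : c⁻¹ * c'⁻¹ * (c * c') = 1 := by field_simp
        rw [this, C_1]
      linear_combination (-(map (algebraMap O K) P * map (algebraMap O K) P')) * this
    rw [e2]
    exact I.mul_mem_left _ h4

end geom
end SI

namespace SI
open IsLocalRing MvPolynomial

lemma exists_derivation_quot {A L : Type*} [CommRing A] [Field L] {I : Ideal A} [IsDomain (A ⧸ I)]
    [Algebra (A ⧸ I) L] [IsFractionRing (A ⧸ I) L] (δ : Derivation ℤ A A) (f : A)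
    (hIdef : I = Ideal.span {f}) (hδ : δ f = 0) :
    ∃ D : Derivation ℤ L L, ∀ P, D (algebraMap (A ⧸ I) L (Ideal.Quotient.mk I P)) =
      algebraMap (A ⧸ I) L (Ideal.Quotient.mk I (δ P)) := by
  let β : A →+* L := (algebraMap (A ⧸ I) L).comp (Ideal.Quotient.mk I)
  let g : A → DualNumber L := fun P => (β P, β (δ P))
  have g1 : ∀ P, TrivSqZeroExt.fst (g P) = β P := fun P => rfl
  have g2 : ∀ P, TrivSqZeroExt.snd (g P) = β (δ P) := fun P => rfl
  let χ : A →+* DualNumber L :=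
    { toFun := g
      map_one' := by
        apply TrivSqZeroExt.ext
        · rw [g1, map_one]; rfl
        · rw [g2, Derivation.map_one_eq_zero, map_zero]; rfl
      map_zero' := by
        apply TrivSqZeroExt.ext
        · rw [g1, map_zero]; rfl
        · rw [g2, map_zero, map_zero]; rfl
      map_add' := by
        intro a b
        apply TrivSqZeroExt.ext
        · rw [TrivSqZeroExt.fst_add, g1, g1, g1, map_add]
        · rw [TrivSqZeroExt.snd_add, g2, g2, g2, map_add, map_add]
      map_mul' := by
        intro a b
        apply TrivSqZeroExt.ext
        · rw [TrivSqZeroExt.fst_mul, g1, g1, g1, map_mul]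
        · rw [TrivSqZeroExt.snd_mul, g1, g1, g2, g2, g2, Derivation.leibniz, map_add]
          simp only [smul_eq_mul, map_mul, MulOpposite.smul_eq_mul_unop, MulOpposite.unop_op]
          ring }
  have hf0 : β f = 0 := by
    have : (Ideal.Quotient.mk I) f = 0 := by
      rw [Ideal.Quotient.eq_zero_iff_mem, hIdef]; exact Ideal.mem_span_singleton_self _
    simp only [β, RingHom.comp_apply, this, map_zero]
  have hχ : ∀ P ∈ I, χ P = 0 := by
    intro P hP
    rw [hIdef, Ideal.mem_span_singleton] at hP
    obtain ⟨Q, rfl⟩ := hP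
    rw [map_mul]
    have : χ f = 0 := by
      apply TrivSqZeroExt.ext
      · exact (g1 _).trans hf0
      · refine (g2 _).trans ?_
        rw [hδ, map_zero]; rfl
    rw [this, zero_mul]
  obtain ⟨D, hD⟩ := exists_derivation_of_dual (A := A ⧸ I) (L := L) (Ideal.Quotient.lift I χ hχ) (by
    intro a
    obtain ⟨a, rfl⟩ := Ideal.Quotient.mk_surjective a
    rw [Ideal.Quotient.lift_mk]; rfl)
  refine ⟨D, fun P => ?_⟩
  have := hD (Ideal.Quotient.mk I P)
  rw [Ideal.Quotient.lift_mk] at this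
  exact this

section LV
universe u
variable {K : Type u} [Field K] (O : ValuationSubring K) {m d : ℕ}

/-- integral `K`-linear derivation of `K[x]` preserving the ideal. -/
structure GoodDer (f : MvPolynomial (Fin (m + 1)) O)
    (δ : Derivation ℤ (MvPolynomial (Fin (m + 1)) K) (MvPolynomial (Fin (m + 1)) K)) : Prop where
  killC : ∀ c, δ (C c) = 0
  int : ∀ P : MvPolynomial (Fin (m + 1)) O, ∃ P' : MvPolynomial (Fin (m + 1)) O,
    δ (map (algebraMap O K) P) = map (algebraMap O K) P'
  killf : δ (map (algebraMap O K) f) = 0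

/-- The function field together with a Gauss-type valuation. -/
structure LV (f : MvPolynomial (Fin (m + 1)) O) (L : Type u) [Field L]
    (β : MvPolynomial (Fin (m + 1)) K →+* L) (V : ValuationSubring L) : Prop where
  ker : ∀ P, β P = 0 ↔ P ∈ Ideal.span {map (algebraMap O K) f}
  le : ∀ P, V.valuation (β (map (algebraMap O K) P)) ≤ 1
  eq : ∀ P, map (residue O) P ∉ Ideal.span {map (residue O) f} →
    V.valuation (β (map (algebraMap O K) P)) = 1
  lt : ∀ P, map (residue O) P ∈ Ideal.span {map (residue O) f} →
    V.valuation (β (map (algebraMap O K) P)) < 1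
  rep : ∀ z : L, z ≠ 0 → ∃ c : K, c ≠ 0 ∧ ∃ P Q : MvPolynomial (Fin (m + 1)) O,
    map (residue O) P ∉ Ideal.span {map (residue O) f} ∧
    map (residue O) Q ∉ Ideal.span {map (residue O) f} ∧
    z = β (C c) * (β (map (algebraMap O K) P) / β (map (algebraMap O K) Q))
  der : ∀ δ, GoodDer O f δ → ∃ D : Derivation ℤ L L, ∀ P, D (β P) = β (δ P)

theorem exists_LV (f : MvPolynomial (Fin (m + 1)) O) (hd : 0 < d)
    (hlead : LeadForm d (map (residue O) f)) (hleadK : LeadForm d (map (algebraMap O K) f))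
    (hirr : Irreducible (map (residue O) f)) :
    ∃ (L : Type u) (_ : Field L) (β : MvPolynomial (Fin (m + 1)) K →+* L) (V : ValuationSubring L),
      LV O f L β V := by
  have hI := geom_prime O f hd hlead hleadK hirr
  have hq : (Ideal.span {map (residue O) f}).IsPrime :=
    (Ideal.span_singleton_prime hirr.ne_zero).mpr hirr.prime
  set I := Ideal.span {map (algebraMap O K) f} with hIdef
  let B := MvPolynomial (Fin (m + 1)) K ⧸ I
  let L := FractionRing B
  let β : MvPolynomial (Fin (m + 1)) K →+* L := (algebraMap B L).comp (Ideal.Quotient.mk I)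
  have hβ : ∀ P, β P = 0 ↔ P ∈ I := by
    intro P
    simp only [β, RingHom.comp_apply]
    rw [map_eq_zero_iff _ (IsFractionRing.injective B L), Ideal.Quotient.eq_zero_iff_mem]
  let 𝔮 : Ideal (MvPolynomial (Fin (m + 1)) O) :=
    Ideal.comap (map (residue O)) (Ideal.span {map (residue O) f})
  have hqp : 𝔮.IsPrime := Ideal.comap_isPrime _ _
  have hmem : ∀ P, P ∈ 𝔮 ↔ map (residue O) P ∈ Ideal.span {map (residue O) f} := fun P => Iff.rfl
  obtain ⟨V, h1, h2, h3⟩ := exists_center (β.comp (map (algebraMap O K))) 𝔮 (by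
    intro s hs h0
    exact generic_ne O f s hirr.ne_zero hs ((hβ _).mp h0))
  have hrepB : ∀ b : MvPolynomial (Fin (m + 1)) K, β b ≠ 0 → ∃ c : K, c ≠ 0 ∧
      ∃ P : MvPolynomial (Fin (m + 1)) O, β b = β (C c) * β (map (algebraMap O K) P) ∧
      map (residue O) P ∉ Ideal.span {map (residue O) f} := by
    intro b hb
    obtain ⟨c, hc, P, h4, h5⟩ := exists_rep' O f hd hlead hleadK b (fun h => hb ((hβ b).mpr h))
    refine ⟨c, hc, P, ?_, h5⟩
    rw [← map_mul, ← sub_eq_zero, ← map_sub, hβ]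
    exact h4
  refine ⟨L, inferInstance, β, V, hβ, h1, h2, h3, ?_, ?_⟩
  · intro z hz
    obtain ⟨a, b, hb, rfl⟩ := IsFractionRing.div_surjective (A := B) z
    obtain ⟨a, rfl⟩ := Ideal.Quotient.mk_surjective a
    obtain ⟨b, rfl⟩ := Ideal.Quotient.mk_surjective b
    change β a / β b ≠ 0 at hz
    change ∃ c : K, c ≠ 0 ∧ ∃ P Q : MvPolynomial (Fin (m + 1)) O, _ ∧ _ ∧ β a / β b = _
    have ha0 : β a ≠ 0 := fun h => hz (by rw [h, zero_div])
    have hb0 : β b ≠ 0 := fun h => hz (by rw [h, div_zero])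
    obtain ⟨c, hc, P, e, hP⟩ := hrepB a ha0
    obtain ⟨c', hc', P', e', hP'⟩ := hrepB b hb0
    refine ⟨c / c', div_ne_zero hc hc', P, P', hP, hP', ?_⟩
    rw [e, e']
    have : β (C (c / c')) = β (C c) / β (C c') := by
      have h := map_div₀ (β.comp C) c c'
      exact h
    rw [this, mul_div_mul_comm]
  · intro δ hδ
    obtain ⟨D, hD⟩ := exists_derivation_quot (I := I) (L := L) δ (map (algebraMap O K) f) rfl hδ.killf
    exact ⟨D, hD⟩

variable {O}
variable {f : MvPolynomial (Fin (m + 1)) O} {L : Type u} [Field L]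
    {β : MvPolynomial (Fin (m + 1)) K →+* L} {V : ValuationSubring L}

lemma LV.div [IsAlgClosed K] (h : LV O f L β V) (z : L) (hz : z ≠ 0) (n : ℕ) (hn : 0 < n) :
    ∃ b, V.valuation b ^ n = V.valuation z := by
  obtain ⟨c, hc, P, Q, hP, hQ, rfl⟩ := h.rep z hz
  obtain ⟨b, rfl⟩ := IsAlgClosed.exists_pow_nat_eq c hn
  refine ⟨β (C b), ?_⟩
  rw [map_mul, map_div₀, h.eq P hP, h.eq Q hQ, div_one, mul_one, map_pow, map_pow, map_pow]

lemma LV.der' (h : LV O f L β V) (δ) (hδ : GoodDer O f δ) :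
    ∃ D : Derivation ℤ L L, (∀ P, D (β P) = β (δ P)) ∧ ∀ a, V.valuation (D a) ≤ V.valuation a := by
  obtain ⟨D, hD⟩ := h.der δ hδ
  refine ⟨D, hD, fun z => ?_⟩
  by_cases hz : z = 0
  · rw [hz, map_zero]
  obtain ⟨c, hc, P, Q, hP, hQ, rfl⟩ := h.rep z hz
  have hc0 : D (β (C c)) = 0 := by rw [hD, hδ.killC, map_zero]
  obtain ⟨P', hP'⟩ := hδ.int P
  obtain ⟨Q', hQ'⟩ := hδ.int Q
  have hvQ := h.eq Q hQ
  have hvP := h.eq P hP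
  rw [Derivation.leibniz, hc0, smul_zero, add_zero, smul_eq_mul, map_mul, map_mul]
  refine mul_le_mul_right ?_ _
  have : D (β (map (algebraMap O K) P) / β (map (algebraMap O K) Q)) =
      β (map (algebraMap O K) (Q * P' - P * Q')) / (β (map (algebraMap O K) Q)) ^ 2 := by
    rw [Derivation.leibniz_div, hD, hD, hP', hQ', map_sub, map_sub, map_mul, map_mul, map_mul, map_mul]
    simp only [smul_eq_mul]
    rw [div_eq_inv_mul, inv_pow]
  rw [this, map_div₀, map_div₀, map_pow, hvQ, hvP, one_pow, div_one, div_one]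
  exact h.le _

end LV
end SI

namespace SI
open MvPolynomial

section setup

/-- dehomogenization -/
def ch {R : Type*} [CommRing R] {ν : ℕ} (F : MvPolynomial (Fin (ν + 1)) R) : MvPolynomial (Fin ν) R :=
  aeval (Fin.cases (1 : MvPolynomial (Fin ν) R) (fun i => X i)) F

lemma map_ch {R S : Type*} [CommRing R] [CommRing S] (φ : R →+* S) {ν : ℕ}
    (F : MvPolynomial (Fin (ν + 1)) R) : map φ (ch F) = ch (map φ F) := by
  simp only [ch, aeval_def]
  rw [hom_eval₂, eval₂_map]
  have e1 : (map φ).comp (algebraMap R (MvPolynomial (Fin ν) R)) =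
      (algebraMap S (MvPolynomial (Fin ν) S)).comp φ := by
    ext1 x
    simp [algebraMap_eq]
  rw [e1]
  congr 1
  funext i
  refine Fin.cases ?_ (fun j => ?_) i <;> simp

lemma hom_ch {R S : Type*} [CommRing R] [CommRing S] {ν : ℕ} (ψ : MvPolynomial (Fin ν) R →+* S)
    (F : MvPolynomial (Fin (ν + 1)) R) :
    ψ (ch F) = eval₂ (ψ.comp C) (Fin.cases 1 (fun i => ψ (X i))) F := by
  simp only [ch, aeval_def]
  rw [hom_eval₂]
  congr 1
  funext i
  refine Fin.cases ?_ (fun j => ?_) i <;> simp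

open Paper in
theorem setup {k L : Type*} [Field k] [Infinite k] [Field L] {ν : ℕ}
    (F : MvPolynomial (Fin (ν + 1)) k) {d : ℕ} (hF : F.IsHomogeneous d) (r N : ℕ)
    (e : FractionRing (MvPolynomial (Fin r) (chartRing F)) ≃+*
        FractionRing (MvPolynomial (Fin (N + r)) k))
    (he : ∀ x : k,
        e ((algebraMap (MvPolynomial (Fin r) (chartRing F)) (FractionRing (MvPolynomial (Fin r) (chartRing F))))
            (MvPolynomial.C (chartRingMap F x))) =
          (algebraMap (MvPolynomial (Fin (N + r)) k)
              (FractionRing (MvPolynomial (Fin (N + r)) k))) (MvPolynomial.C x))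
    (Ψ : MvPolynomial (Fin r) (chartRing F) →+* L) (hΨ : Function.Injective Ψ)
    (ι : k →+* L) (hι : ∀ x, ι x = Ψ (C (chartRingMap F x))) :
    ∃ f : Fin (ν + 1) → Polynomial L, eval₂ (Polynomial.C.comp ι) f F = 0 ∧
      (∃ p : Fin (ν + 1) → k, (∃ s, p s ≠ 0) ∧ ∀ s, (f s).eval 0 = ι (p s)) ∧
      ∃ a : L, a ≠ 0 ∧ ∀ s, (f s).eval 1 = a *
        (Fin.cases 1 (fun i => Ψ (C (Ideal.Quotient.mk (Ideal.span {chartEquation F}) (X i)))) s : L) := by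
  classical
  have : IsDomain (MvPolynomial (Fin r) (chartRing F)) := hΨ.isDomain Ψ
  let A : Type _ := MvPolynomial (Fin r) (chartRing F)
  let Ψ' : FractionRing A →+* L := IsFractionRing.lift (A := MvPolynomial (Fin r) (chartRing F)) (K := FractionRing (MvPolynomial (Fin r) (chartRing F))) (g := Ψ) hΨ
  have hΨ' : ∀ a, Ψ' (algebraMap A _ a) = Ψ a := fun a => IsFractionRing.lift_algebraMap (A := MvPolynomial (Fin r) (chartRing F)) hΨ a
  let E := FractionRing (MvPolynomial (Fin (N + r)) k)
  let θ : E →+* L := Ψ'.comp (e.symm : E →+* FractionRing A)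
  have hθ : ∀ a : A, θ (e (algebraMap A _ a)) = Ψ a := by
    intro a
    simp only [θ, RingHom.comp_apply, RingHom.coe_coe, RingEquiv.symm_apply_apply]
    exact hΨ' a
  have hθC : ∀ x, θ (algebraMap (MvPolynomial (Fin (N + r)) k) E (C x)) = ι x := by
    intro x
    rw [← he, hθ, hι]
  let w : Fin (ν + 1) → E := Fin.cases 1 (fun i => e (algebraMap A _ (C (Ideal.Quotient.mk (Ideal.span {chartEquation F}) (X i)))))
  have hw : eval₂ ((algebraMap (MvPolynomial (Fin (N + r)) k) E).comp C) w F = 0 := by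
    let ψ : MvPolynomial (Fin ν) k →+* E :=
      (e : FractionRing A →+* E).comp ((algebraMap A (FractionRing A)).comp (C.comp (Ideal.Quotient.mk (Ideal.span {chartEquation F}))))
    have h1 := hom_ch ψ F
    have h2 : ψ (ch F) = 0 := by
      have : Ideal.Quotient.mk (Ideal.span {chartEquation F}) (ch F) = 0 := by
        rw [Ideal.Quotient.eq_zero_iff_mem]; exact Ideal.mem_span_singleton_self _
      simp only [ψ, RingHom.comp_apply, this, map_zero]
    rw [h2] at h1
    rw [h1]
    have h3 : (algebraMap (MvPolynomial (Fin (N + r)) k) E).comp C = ψ.comp C := by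
      ext1 x
      exact (he x).symm
    rw [h3]
    rfl
  obtain ⟨b, hb⟩ := IsLocalization.exist_integer_multiples_of_finite (nonZeroDivisors (MvPolynomial (Fin (N + r)) k)) w
  have hb0 : (b : MvPolynomial (Fin (N + r)) k) ≠ 0 := nonZeroDivisors.ne_zero b.2
  choose G hG using hb
  have hG' : ∀ s, algebraMap (MvPolynomial (Fin (N + r)) k) E (G s) = algebraMap (MvPolynomial (Fin (N + r)) k) E (b : MvPolynomial (Fin (N + r)) k) * w s := by
    intro s
    rw [hG s, Algebra.smul_def]
  have hinj : Function.Injective (algebraMap (MvPolynomial (Fin (N + r)) k) E) := IsFractionRing.injective _ _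
  have hFG : eval₂ C G F = 0 := by
    apply hinj
    rw [map_zero, hom_eval₂]
    have := homog_eval₂ ((algebraMap (MvPolynomial (Fin (N + r)) k) E).comp C) hF
      (algebraMap (MvPolynomial (Fin (N + r)) k) E (b : MvPolynomial (Fin (N + r)) k)) w
    rw [hw, mul_zero] at this
    rw [← this]
    congr 1
    funext s; exact hG' s
  have hGb : G 0 = b := by
    apply hinj
    rw [hG' 0]
    exact mul_one _
  obtain ⟨c, hc⟩ : ∃ c : Fin (N + r) → k, eval c (b : MvPolynomial (Fin (N + r)) k) ≠ 0 := by
    by_contra hcon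
    push Not at hcon
    exact hb0 (MvPolynomial.funext fun c => by rw [hcon c, map_zero])
  let η : Fin (N + r) → L := fun j => θ (algebraMap (MvPolynomial (Fin (N + r)) k) E (X j))
  let Λ : MvPolynomial (Fin (N + r)) k →+* Polynomial L :=
    eval₂Hom (Polynomial.C.comp ι) (fun j => Polynomial.C (ι (c j)) + Polynomial.X * Polynomial.C (η j - ι (c j)))
  refine ⟨fun s => Λ (G s), ?_, ⟨fun s => eval c (G s), ⟨0, by beta_reduce; rw [hGb]; exact hc⟩, ?_⟩,
    θ (algebraMap (MvPolynomial (Fin (N + r)) k) E (b : MvPolynomial (Fin (N + r)) k)), ?_, ?_⟩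
  · have := congrArg Λ hFG
    rw [map_zero, hom_eval₂] at this
    have e1 : Λ.comp C = Polynomial.C.comp ι := by ext1 x; simp [Λ]
    rw [e1] at this
    exact this
  · have : (Polynomial.evalRingHom 0).comp Λ = ι.comp (eval c) := by
      apply MvPolynomial.ringHom_ext
      · intro x; simp [Λ]
      · intro j; simp [Λ]
    intro s
    exact congrArg (fun g : MvPolynomial (Fin (N + r)) k →+* L => g (G s)) this
  · intro h0
    rw [map_eq_zero_iff _ θ.injective, map_eq_zero_iff _ hinj] at h0
    exact hb0 h0
  · have : (Polynomial.evalRingHom 1).comp Λ = θ.comp (algebraMap (MvPolynomial (Fin (N + r)) k) E) := by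
      apply MvPolynomial.ringHom_ext
      · intro x
        simp only [Λ, RingHom.comp_apply, coe_eval₂Hom, eval₂_C, hθC]; simp
      · intro j; simp [Λ, η]
    intro s
    have h1 := congrArg (fun g : MvPolynomial (Fin (N + r)) k →+* L => g (G s)) this
    refine h1.trans ?_
    change θ (algebraMap (MvPolynomial (Fin (N + r)) k) E (G s)) = _
    rw [hG', map_mul]
    congr 1
    refine Fin.cases ?_ (fun i => ?_) s
    · exact map_one θ
    · exact hθ _

end setup
end SI

namespace SI
open MvPolynomial

section psi

lemma ch_monomial {R : Type*} [CommRing R] {ν : ℕ} (v : Fin (ν + 1) →₀ ℕ) (a : R) :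
    ch (monomial v a) = monomial (Finsupp.tail v) a := by
  rw [ch, aeval_monomial, algebraMap_eq, monomial_eq]
  congr 1
  rw [Finsupp.prod_fintype _ _ (by intro i; simp), Fin.prod_univ_succ,
    Finsupp.prod_fintype _ _ (by intro i; simp)]
  simp [Finsupp.tail_apply]

lemma ch_leadForm {R : Type*} [CommRing R] [IsDomain R] {m d : ℕ} (hd : 0 < d)
    (F : MvPolynomial (Fin (m + 2)) R)
    (hF : F.IsHomogeneous d) (hc : coeff (Finsupp.single 1 d) F ≠ 0) : LeadForm d (ch F) := by
  classical
  let v : Fin (m + 2) →₀ ℕ := Finsupp.single 1 d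
  refine ⟨coeff v F, ∑ w ∈ F.support.erase v, ch (monomial w (coeff w F)), hc, ?_, ?_⟩
  · have hv : v ∈ F.support := mem_support_iff.mpr hc
    conv_lhs => rw [← support_sum_monomial_coeff F]
    have : ∀ (s : Finset (Fin (m + 2) →₀ ℕ)), ch (∑ w ∈ s, monomial w (coeff w F)) =
        ∑ w ∈ s, ch (monomial w (coeff w F)) := fun s => by simp only [ch, map_sum]
    rw [this, ← Finset.add_sum_erase _ _ hv]
    congr 1
    rw [ch_monomial, monomial_eq]
    congr 1
    rw [Finsupp.prod_fintype _ _ (by intro i; simp), Fin.prod_univ_succ]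
    have h0 : (Finsupp.tail v) 0 = d := by
      simp [Finsupp.tail_apply, v]
    have h1 : ∀ i : Fin m, (Finsupp.tail v) i.succ = 0 := by
      intro i
      rw [Finsupp.tail_apply]
      simp only [v]
      rw [Finsupp.single_eq_of_ne]
      intro h
      have := congrArg Fin.val h
      simp at this
    rw [h0]
    simp [h1]
  · refine lt_of_le_of_lt (degreeOf_sum_le _ _ _) ?_
    rw [Finset.sup_lt_iff (by exact hd)]
    intro w hw
    rw [Finset.mem_erase, mem_support_iff] at hw
    rw [ch_monomial]
    have hdw : w.degree = d := by
      have := hF hw.2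
      exact (congrFun (congrArg DFunLike.coe (Finsupp.degree_eq_weight_one (σ := Fin (m+2)) (R := ℕ))) w).trans this
    rw [degreeOf_monomial_eq _ _ hw.2, Finsupp.tail_apply]
    change w 1 < d
    have hle : w 1 ≤ d := by rw [← hdw]; exact Finsupp.le_degree 1 w
    refine lt_of_le_of_ne hle (fun h1 => hw.1 ?_)
    have h2 := Finsupp.degree_eq_sum w
    rw [hdw, ← Finset.add_sum_erase _ _ (Finset.mem_univ (1 : Fin (m + 2))), h1] at h2
    have h3 : ∑ x ∈ Finset.univ.erase 1, w x = 0 := by omega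
    rw [Finset.sum_eq_zero_iff] at h3
    ext i
    simp only [v]
    by_cases hi : i = 1
    · rw [hi, h1, Finsupp.single_eq_same]
    · rw [Finsupp.single_eq_of_ne hi]
      exact h3 i (Finset.mem_erase.mpr ⟨hi, Finset.mem_univ _⟩)

lemma degreeOf_sum_lt {R ι τ : Type*} [CommRing R] (i : τ) {d : ℕ} (hd : 0 < d) (s : Finset ι)
    (p : ι → MvPolynomial τ R) (h : ∀ j ∈ s, degreeOf i (p j) < d) : degreeOf i (∑ j ∈ s, p j) < d := by
  refine lt_of_le_of_lt (degreeOf_sum_le _ _ _) ?_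
  rw [Finset.sup_lt_iff (by exact hd)]
  exact h

theorem psi_inj {k K L : Type*} [Field k] [Field K] [Field L] {m d r : ℕ} (hd : 0 < d)
    (f : MvPolynomial (Fin (m + 1)) k) (hf : LeadForm d f) (i0 : k →+* K) (t : Fin r → K)
    (ht : Function.Injective (eval₂Hom i0 t)) (hfK : LeadForm d (map i0 f))
    (β : MvPolynomial (Fin (m + 1)) K →+* L) (hβ : ∀ P, β P = 0 ↔ P ∈ Ideal.span {map i0 f}) :
    ∃ Ψ : MvPolynomial (Fin r) (MvPolynomial (Fin (m + 1)) k ⧸ Ideal.span {f}) →+* L,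
      Function.Injective Ψ ∧ ∀ P, Ψ (C (Ideal.Quotient.mk _ P)) = β (map i0 P) := by
  classical
  have hlift : ∀ a ∈ Ideal.span {f}, (β.comp (map i0)) a = 0 := by
    intro a ha
    rw [Ideal.mem_span_singleton] at ha
    obtain ⟨b, rfl⟩ := ha
    rw [RingHom.comp_apply, map_mul, hβ]
    exact Ideal.mul_mem_right _ _ (Ideal.mem_span_singleton_self _)
  let q := Ideal.Quotient.lift (Ideal.span {f}) (β.comp (map i0)) hlift
  have hq : ∀ P, q (Ideal.Quotient.mk _ P) = β (map i0 P) := fun P => Ideal.Quotient.lift_mk _ _ _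
  refine ⟨eval₂Hom q (fun i => β (C (t i))), ?_, fun P => by rw [coe_eval₂Hom, eval₂_C, hq]⟩
  rw [injective_iff_map_eq_zero]
  intro g hg
  have hred : ∀ α, ∃ R, degreeOf 0 R < d ∧ Ideal.Quotient.mk (Ideal.span {f}) R = coeff α g := by
    intro α
    obtain ⟨P, hP⟩ := Ideal.Quotient.mk_surjective (coeff α g)
    obtain ⟨R, h1, h2⟩ := hf.reduce hd P
    refine ⟨R, h1, ?_⟩
    rw [← hP, eq_comm, Ideal.Quotient.eq]; exact h2
  choose R hR1 hR2 using hred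
  let S : MvPolynomial (Fin (m + 1)) K := ∑ α ∈ g.support, C (ev α t) * map i0 (R α)
  have hS : β S = 0 := by
    rw [← hg, coe_eval₂Hom, eval₂_eq]
    simp only [S, map_sum]
    refine Finset.sum_congr rfl fun α _ => ?_
    rw [← hR2, hq, map_mul, mul_comm]
    congr 1
    have : ev α t = α.prod fun s e => t s ^ e := rfl
    rw [this, Finsupp.prod, map_prod, map_prod]
    simp only [map_pow]
  have hSdeg : degreeOf 0 S < d := by
    apply degreeOf_sum_lt _ hd
    intro α _
    exact lt_of_le_of_lt (degreeOf_C_mul_le _ _ _) (lt_of_le_of_lt (degreeOf_map_le' _ _ _) (hR1 α))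
  have hS0 : S = 0 := by
    by_contra h0
    exact hfK.not_dvd hd hSdeg h0 ((hβ _).mp hS)
  by_contra hg0
  obtain ⟨α, hα⟩ := support_nonempty.mpr hg0
  have hRα : R α = 0 := by
    ext i
    rw [coeff_zero]
    have h1 : eval₂Hom i0 t (∑ α ∈ g.support, monomial α (coeff i (R α))) = 0 := by
      have := congrArg (coeff i) hS0
      simp only [S, coeff_sum, coeff_C_mul, coeff_map, coeff_zero] at this
      rw [← this, map_sum]
      refine Finset.sum_congr rfl fun α _ => ?_
      rw [eval₂Hom_monomial, mul_comm]; rfl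
    have h2 := (injective_iff_map_eq_zero _).mp ht _ h1
    have h3 := congrArg (coeff α) h2
    rw [coeff_sum, Finset.sum_eq_single α] at h3
    · simpa using h3
    · intro b _ hb
      rw [coeff_monomial, if_neg hb]
    · intro h; exact absurd hα h
  have := hR2 α
  rw [hRα, map_zero] at this
  exact mem_support_iff.mp hα this.symm

end psi
end SI

namespace SI
open MvPolynomial IsLocalRing

section core
universe u

/-- the derivation `∂_z f ∂_x - ∂_x f ∂_z`. -/
def jac {R : Type*} [CommRing R] {τ : Type*} (x z : τ) (f : MvPolynomial τ R) :
    Derivation ℤ (MvPolynomial τ R) (MvPolynomial τ R) :=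
  (pderiv z f • (pderiv x : Derivation R _ _) - pderiv x f • (pderiv z : Derivation R _ _)).restrictScalars ℤ

lemma jac_apply {R : Type*} [CommRing R] {τ : Type*} (x z : τ) (f P : MvPolynomial τ R) :
    jac x z f P = pderiv z f * pderiv x P - pderiv x f * pderiv z P := by
  simp [jac]

lemma jac_map {R S : Type*} [CommRing R] [CommRing S] (φ : R →+* S) {τ : Type*} (x z : τ) (f P : MvPolynomial τ R) :
    jac x z (map φ f) (map φ P) = map φ (jac x z f P) := by
  simp [jac_apply, pderiv_map]

lemma Comb.map_F0 {σ : Type*} {n d : ℕ} (c : Comb σ n d) {R S : Type*} [CommRing R] [CommRing S] (φ : R →+* S) :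
    map φ (c.F0 R) = c.F0 S := by
  simp [Comb.F0]

lemma phi_zero {E : Type*} [Field E] {n : ℕ} (hn : 1 ≤ n) (D : Fin n → Derivation ℤ E E)
    (x : Fin (n + 1) → E) (h : ∀ i j, D i (x j) = 0) : phi D x = 0 := by
  apply Matrix.det_eq_zero_of_row_eq_zero ⟨0, hn⟩
  intro j
  simp only [Matrix.of_apply]
  rw [Derivation.leibniz_div, h, h]
  simp

lemma phi_diag {E : Type*} [Field E] {n : ℕ} (D : Fin n → Derivation ℤ E E)
    (x : Fin (n + 1) → E) (h0 : x 0 = 1) (hx : ∀ j : Fin n, x j.succ ≠ 0) (u : E) (hu : u ≠ 0)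
    (h : ∀ i j : Fin n, D i (x j.succ) = if i = j then u else 0) : phi D x ≠ 0 := by
  have em : (Matrix.of fun i j : Fin n => D i (x j.succ / x 0) / (x j.succ / x 0)) =
      Matrix.diagonal (fun j => u / x j.succ) := by
    ext i j
    by_cases hij : i = j
    · subst hij
      simp [h, h0]
    · simp [h, h0, hij]
  rw [phi, em, Matrix.det_diagonal, Finset.prod_ne_zero_iff]
  intro i _
  exact div_ne_zero hu (hx _)

theorem core {K : Type u} [Field K] [IsAlgClosed K] (O : ValuationSubring K)
    [CharP (ResidueField O) 2] {N n d : ℕ} (hd : 2 ≤ d) (c : Comb (Fin (N + 2)) n d)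
    (xi : Fin n → Fin (N + 1)) (hx0 : c.x 0 = 0) (hxi : ∀ i, c.x i.succ = (xi i).succ)
    (zi : Fin (N + 1)) (hz : ∀ i, xi i ≠ zi)
    (h1 : coeff (Finsupp.single 1 d) (c.F0 (ResidueField O)) ≠ 0)
    (hirr : Irreducible (ch (c.F0 (ResidueField O))))
    (hpd : pderiv zi (ch (c.F0 (ResidueField O))) ≠ 0)
    (hpd' : degreeOf 0 (pderiv zi (ch (c.F0 (ResidueField O)))) < d)
    (FO : MvPolynomial (Fin (N + 2)) O) (hFO : FO.IsHomogeneous d)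
    (hres : map (residue O) FO = c.F0 (ResidueField O)) :
    ∃ (L : Type u) (_ : Field L) (β : MvPolynomial (Fin (N + 1)) K →+* L),
      (∀ P, β P = 0 ↔ P ∈ Ideal.span {map (algebraMap O K) (ch FO)}) ∧
      ∀ (f : Fin (N + 2) → Polynomial L),
        eval₂ (Polynomial.C.comp (β.comp (C.comp (algebraMap O K)))) f FO = 0 →
        (∃ p : Fin (N + 2) → K, (∃ s, p s ≠ 0) ∧ ∀ s, (f s).eval 0 = β (C (p s))) →
        (∃ a : L, a ≠ 0 ∧ ∀ s, (f s).eval 1 = a * (Fin.cases 1 (fun i => β (X i)) s : L)) → False := by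
  classical
  have hd0 : 0 < d := by omega
  have hlead : LeadForm d (map (residue O) (ch FO)) := by
    rw [map_ch, hres]
    refine ch_leadForm hd0 _ ?_ h1
    rw [← hres]; exact hFO.map _
  have hleadK : LeadForm d (map (algebraMap O K) (ch FO)) := by
    rw [map_ch]
    refine ch_leadForm hd0 _ (hFO.map _) ?_
    rw [coeff_map]
    intro h0
    have : coeff (Finsupp.single 1 d) FO = 0 := by
      exact Subtype.ext h0
    apply h1
    rw [← hres, coeff_map, this, map_zero]
  have hirr' : Irreducible (map (residue O) (ch FO)) := by rw [map_ch, hres]; exact hirr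
  obtain ⟨L, _, β, V, hLV⟩ := exists_LV O (ch FO) hd0 hlead hleadK hirr'
  refine ⟨L, inferInstance, β, hLV.ker, ?_⟩
  rintro f hf ⟨p, ⟨s1, hs1⟩, hp⟩ ⟨a, ha, hfa⟩
  let bV : MvPolynomial (Fin (N + 1)) O →+* V :=
    (β.comp (map (algebraMap O K))).codRestrict V (fun P => (V.valuation_le_one_iff _).mp (hLV.le P))
  have bV_coe : ∀ P, (bV P : L) = β (map (algebraMap O K) P) := fun P => rfl
  let ρ := residue V
  have resne : ∀ y : V, ρ y ≠ 0 ↔ V.valuation (y : L) = 1 := fun y => residue_ne_zero_iff y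
  -- residue field hom
  have hker : ∀ a : O, residue O a = 0 → ρ (bV (C a)) = 0 := by
    intro a ha
    by_contra h
    replace h := (resne _).mp h
    rw [bV_coe] at h
    have := hLV.lt (C a) (by rw [map_C, ha, C_0]; exact Submodule.zero_mem _)
    exact absurd h this.ne
  let lf : ResidueField O →+* ResidueField V :=
    Ideal.Quotient.lift (maximalIdeal O) ((ρ.comp bV).comp C) (by
      intro a ha
      exact hker a (Ideal.Quotient.eq_zero_iff_mem.mpr ha))
  have hlf : lf.comp (residue O) = (ρ.comp bV).comp C := by
    ext a; rfl
  have : CharP (ResidueField V) 2 := charP_of_injective_ringHom lf.injective 2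
  have hred : map ρ (map (bV.comp C) FO) = c.F0 (ResidueField V) := by
    rw [map_map, ← RingHom.comp_assoc, ← hlf, ← map_map, hres, Comb.map_F0]
  have nz : ∀ P, map (residue O) P ≠ 0 → degreeOf 0 (map (residue O) P) < d → ρ (bV P) ≠ 0 := by
    intro P h0 h1
    rw [resne, bV_coe]
    exact hLV.eq P (hlead.not_dvd hd0 h1 h0)
  -- derivations
  have hgood : ∀ i, GoodDer O (ch FO) (jac (xi i) zi (map (algebraMap O K) (ch FO))) := by
    intro i
    refine ⟨fun c => by simp [jac_apply], fun P => ⟨_, jac_map _ _ _ _ _⟩, ?_⟩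
    rw [jac_apply]; ring
  choose D hD hDv using fun i => hLV.der' _ (hgood i)
  choose Db hDb using fun i => exists_residue_derivation V (D i) (hDv i)
  have hDbP : ∀ i P, Db i (ρ (bV P)) = ρ (bV (jac (xi i) zi (ch FO) P)) := by
    intro i P
    apply hDb
    rw [bV_coe, bV_coe, hD, jac_map]
  have hDbC : ∀ i (y : V) (b : K), (y : L) = β (C b) → Db i (ρ y) = 0 := by
    intro i y b hy
    have : Db i (ρ y) = ρ 0 := by
      apply hDb
      rw [hy, hD, jac_apply]
      simp
    rw [this, map_zero]
  -- first reduction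
  have hβC : Function.Injective (fun b : K => β (C b)) := (β.comp C).injective
  obtain ⟨α, hα, hαV, i0, -, hi0⟩ := exists_max_factor (V := V) Finset.univ (fun s => β (C (p s)))
    ⟨s1, Finset.mem_univ _, by
      intro h; exact hs1 (hβC (by simpa using h))⟩
  have hpi0 : β (C (p i0)) ≠ 0 := by
    intro h
    simp [h] at hi0
  have hpi0' : p i0 ≠ 0 := by
    intro h; simp [h] at hpi0
  have hmem : ∀ s, β (C (p s / p i0)) ∈ V := by
    intro s
    have e : β (C (p s / p i0)) = (β (C (p s)) / α) * (β (C (p i0)) / α)⁻¹ := by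
      have : β (C (p s / p i0)) * β (C (p i0)) = β (C (p s)) := by
        rw [← map_mul, ← C_mul, div_mul_cancel₀ _ hpi0']
      field_simp
      exact this
    rw [e]
    refine V.mul_mem _ _ (hαV s (Finset.mem_univ _)) ?_
    rw [← V.valuation_le_one_iff, map_inv₀, hi0, inv_one]
  let pV : Fin (N + 2) → V := fun s => ⟨_, hmem s⟩
  have hq : IsRed V (fun s => (f s).eval 0) (fun s => ρ (pV s)) := by
    refine ⟨β (C (p i0)), hpi0, pV, fun s => ?_, fun s => rfl, i0, ?_⟩
    · refine (hp s).trans ?_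
      change _ = _ * β (C (p s / p i0))
      rw [← map_mul, ← C_mul, mul_div_cancel₀ _ hpi0']
    · have : pV i0 = 1 := by
        apply Subtype.ext
        change β (C (p i0 / p i0)) = 1
        rw [div_self hpi0', C_1, map_one]
      simp only [this, map_one]
      exact one_ne_zero
  let gx : Fin (N + 2) → MvPolynomial (Fin (N + 1)) O := Fin.cases 1 (fun i => X i)
  have hq' : IsRed V (fun s => (f s).eval 1) (fun s => ρ (bV (gx s))) := by
    refine ⟨a, ha, fun s => bV (gx s), fun s => ?_, fun s => rfl, 0, ?_⟩
    · refine (hfa s).trans ?_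
      rw [bV_coe]
      congr 1
      refine Fin.cases ?_ (fun j => ?_) s
      · simp [gx]
      · simp [gx]
    · simp [gx]
  have hfV : eval₂ (Polynomial.C.comp (algebraMap V L)) f (map (bV.comp C) FO) = 0 := by
    rw [eval₂_map]
    have e : (Polynomial.C.comp (algebraMap V L)).comp (bV.comp C) =
        Polynomial.C.comp (β.comp (C.comp (algebraMap O K))) := by
      ext1 y
      simp only [RingHom.comp_apply]
      congr 1
      change ((bV (C y) : V) : L) = _
      rw [bV_coe, map_C]
    rw [e]; exact hf
  have key := newton_final (c := c) Db (fun z hz m hm => hLV.div z hz m hm) (hFO.map _) hred f hfV _ hq _ hq'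
  have hL : phi Db (fun i => ρ (pV (c.x i))) = 0 := by
    refine phi_zero c.npos Db _ (fun i j => hDbC i _ _ rfl)
  have hR : phi Db (fun i => ρ (bV (gx (c.x i)))) ≠ 0 := by
    have hfz : ρ (bV (pderiv zi (ch FO))) ≠ 0 := by
      apply nz
      · rw [← pderiv_map, map_ch, hres]; exact hpd
      · rw [← pderiv_map, map_ch, hres]; exact hpd'
    have hX : ∀ i, ρ (bV (X i)) ≠ 0 := by
      intro i
      apply nz
      · rw [map_X]; exact X_ne_zero _
      · rw [map_X]
        refine lt_of_le_of_lt (degreeOf_le_totalDegree _ _) ?_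
        rw [totalDegree_X]; omega
    have g0 : gx (c.x 0) = 1 := by rw [hx0]; rfl
    have g1 : ∀ j : Fin n, gx (c.x j.succ) = X (xi j) := by intro j; rw [hxi]; simp [gx]
    refine phi_diag Db _ (by simp only [g0, map_one]) (fun j => by simp only [g1]; exact hX _) _ hfz ?_
    intro i j
    simp only [g1]
    refine (hDbP _ _).trans ?_
    rw [jac_apply]
    by_cases hij : i = j
    · subst hij
      simp [pderiv_X_of_ne (hz i)]
    · have : xi j ≠ xi i := by
        intro h
        have := c.xinj ((hxi i).trans ((congrArg Fin.succ h.symm).trans (hxi j).symm))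
        exact hij (Fin.succ_injective _ this)
      simp [pderiv_X_of_ne (hz j), pderiv_X_of_ne this, hij]
  exact hR (key.symm.trans hL)

end core
end SI

namespace SI
open MvPolynomial IsLocalRing

section gfinal
universe u

lemma degree_eq_of_hom {R σ : Type*} [CommSemiring R] {F : MvPolynomial σ R} {d : ℕ} (hF : F.IsHomogeneous d)
    {m : σ →₀ ℕ} (h : coeff m F ≠ 0) : m.degree = d :=
  (congrFun (congrArg DFunLike.coe (Finsupp.degree_eq_weight_one (σ := σ) (R := ℕ))) m).trans (hF h)

lemma hom_of_degree {R σ : Type*} [CommSemiring R] {F : MvPolynomial σ R} {d : ℕ}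
    (hF : ∀ m, coeff m F ≠ 0 → m.degree = d) : F.IsHomogeneous d := fun m h =>
  (congrFun (congrArg DFunLike.coe (Finsupp.degree_eq_weight_one (σ := σ) (R := ℕ))) m).symm.trans (hF m h)

lemma Comb.F0_hom {σ : Type*} {n d : ℕ} (c : Comb σ n d) (R : Type*) [CommRing R] :
    (c.F0 R).IsHomogeneous d := by
  refine IsHomogeneous.add (IsHomogeneous.sum _ _ _ fun m hm => ?_) ?_
  · exact isHomogeneous_monomial _ (c.deg m hm)
  · exact isHomogeneous_monomial _ c.deg0

/-- a form with algebraically independent coefficients specializes to any form over `ZMod 2`. -/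
lemma specialize {σ k K : Type*} [Field k] [CharP k 2] [Field K] (i0 : k →+* K) {d : ℕ}
    (F : MvPolynomial σ k) (hF : F.IsHomogeneous d)
    (hAI : Function.Injective (eval₂Hom (ZMod.castHom dvd_rfl k)
      (fun m : {m : σ →₀ ℕ // m.degree = d} => coeff m.1 F)))
    (F0 : MvPolynomial σ (ZMod 2)) (hF0 : F0.IsHomogeneous d) :
    ∃ (O : ValuationSubring K) (_ : CharP (ResidueField O) 2) (FO : MvPolynomial σ O), FO.IsHomogeneous d ∧
      map (algebraMap O K) FO = map i0 F ∧
      map (residue O) FO = map (ZMod.castHom dvd_rfl (ResidueField O)) F0 := by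
  have : CharP K 2 := charP_of_injective_ringHom i0.injective 2
  have hinj : Function.Injective (eval₂Hom (ZMod.castHom dvd_rfl K)
      (fun m : {m : σ →₀ ℕ // m.degree = d} => i0 (coeff m.1 F))) := by
    have e : eval₂Hom (ZMod.castHom dvd_rfl K)
      (fun m : {m : σ →₀ ℕ // m.degree = d} => i0 (coeff m.1 F)) = i0.comp (eval₂Hom (ZMod.castHom dvd_rfl k)
      (fun m : {m : σ →₀ ℕ // m.degree = d} => coeff m.1 F)) := by
      apply ringHom_ext'
      · exact Subsingleton.elim _ _
      · intro i; simp
    rw [e]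
    exact i0.injective.comp hAI
  obtain ⟨O, hO, hchar, hres⟩ := exists_place _ (fun m : {m : σ →₀ ℕ // m.degree = d} => coeff m.1 F0) hinj
  have hex : map i0 F ∈ Set.range (map (algebraMap O K)) := by
    rw [mem_range_map_iff_coeffs_subset]
    intro y hy
    rw [Finset.mem_coe, mem_coeffs_iff] at hy
    obtain ⟨m, hm, rfl⟩ := hy
    have hdeg := degree_eq_of_hom (hF.map i0) (mem_support_iff.mp hm)
    rw [coeff_map]
    exact ⟨⟨_, hO ⟨m, hdeg⟩⟩, rfl⟩
  obtain ⟨FO, hFO⟩ := hex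
  have hco : ∀ m, ((coeff m FO : O) : K) = i0 (coeff m F) := by
    intro m
    have := congrArg (coeff m) hFO
    rwa [coeff_map, coeff_map] at this
  have hhom : FO.IsHomogeneous d := by
    apply hom_of_degree
    intro m hm
    apply degree_eq_of_hom hF
    intro h
    apply hm
    apply Subtype.ext
    rw [hco, h, map_zero]; rfl
  refine ⟨O, hchar, FO, hhom, hFO, ?_⟩
  ext m
  by_cases hdeg : m.degree = d
  · rw [coeff_map, coeff_map, ← hres ⟨m, hdeg⟩]
    congr 1
    exact Subtype.ext (hco m)
  · have h1 : coeff m FO = 0 := by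
      by_contra h; exact hdeg (degree_eq_of_hom hhom h)
    have h2 : coeff m F0 = 0 := by
      by_contra h; exact hdeg (degree_eq_of_hom hF0 h)
    rw [coeff_map, coeff_map, h1, h2, map_zero, map_zero]

open Paper in
theorem geom_final {k : Type u} [Field k] [Infinite k] [CharP k 2] {N n d : ℕ} (hd : 2 ≤ d)
    (c : Comb (Fin (N + 2)) n d)
    (xi : Fin n → Fin (N + 1)) (hx0 : c.x 0 = 0) (hxi : ∀ i, c.x i.succ = (xi i).succ)
    (zi : Fin (N + 1)) (hz : ∀ i, xi i ≠ zi)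
    (h1 : ∀ (κ : Type u) [Field κ] [CharP κ 2], coeff (Finsupp.single 1 d) (c.F0 κ) ≠ 0)
    (hirr : ∀ (κ : Type u) [Field κ] [CharP κ 2], Irreducible (ch (c.F0 κ)))
    (hpd : ∀ (κ : Type u) [Field κ] [CharP κ 2], pderiv zi (ch (c.F0 κ)) ≠ 0)
    (hpd' : ∀ (κ : Type u) [Field κ] [CharP κ 2], degreeOf 0 (pderiv zi (ch (c.F0 κ))) < d)
    (F : MvPolynomial (Fin (N + 2)) k) (hF : F.IsHomogeneous d)
    (hAI : Function.Injective (eval₂Hom (ZMod.castHom dvd_rfl k)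
      (fun m : {m : Fin (N + 2) →₀ ℕ // m.degree = d} => coeff m.1 F))) :
    StablyIrrationalOver (chartRingMap (ν := N + 1) F) N := by
  rintro r ⟨e, he⟩
  let E := FractionRing (MvPolynomial (Fin r) k)
  let K := AlgebraicClosure E
  let j : MvPolynomial (Fin r) k →+* K := (algebraMap E K).comp (algebraMap (MvPolynomial (Fin r) k) E)
  have hj : Function.Injective j :=
    (algebraMap E K).injective.comp (IsFractionRing.injective (MvPolynomial (Fin r) k) E)
  let i0 : k →+* K := j.comp C
  let t : Fin r → K := fun i => j (X i)
  have ht : Function.Injective (eval₂Hom i0 t) := by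
    have : eval₂Hom i0 t = j := by
      apply ringHom_ext <;> intros <;> simp [i0, t]
    rw [this]; exact hj
  obtain ⟨O, hchar, FO, hFO, hFK, hres⟩ := specialize i0 F hF hAI (c.F0 (ZMod 2)) (c.F0_hom _)
  rw [Comb.map_F0] at hres
  have hd0 : 0 < d := by omega
  have hco : coeff (Finsupp.single 1 d) F ≠ 0 := by
    intro h
    have h2 : coeff (Finsupp.single 1 d) FO = 0 := by
      apply Subtype.ext
      have := congrArg (coeff (Finsupp.single 1 d)) hFK
      rw [coeff_map, coeff_map, h, map_zero] at this
      exact this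
    apply h1 (ResidueField O)
    rw [← hres, coeff_map, h2, map_zero]
  obtain ⟨L, _, β, hker, hfin⟩ := core O hd c xi hx0 hxi zi hz (h1 _) (hirr _) (hpd _) (hpd' _) FO hFO hres
  have hchK : map (algebraMap O K) (ch FO) = map i0 (ch F) := by
    rw [map_ch, map_ch, hFK]
  rw [hchK] at hker
  obtain ⟨Ψ, hΨ, hΨ'⟩ := psi_inj (r := r) hd0 (ch F) (ch_leadForm hd0 F hF hco) i0 t ht (by
    rw [map_ch]
    refine ch_leadForm hd0 _ (hF.map _) ?_
    rw [coeff_map]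
    exact (map_ne_zero i0).mpr hco) β hker
  obtain ⟨f, hf, ⟨p, hp0, hp⟩, a, ha, hfa⟩ := setup (L := L) F hF r N e he Ψ hΨ (β.comp (C.comp i0)) (by
    intro x
    refine Eq.trans ?_ (hΨ' (C x)).symm
    simp)
  refine hfin f ?_ ⟨fun s => i0 (p s), ?_, fun s => ?_⟩ ⟨a, ha, fun s => ?_⟩
  · have e1 : eval₂ (Polynomial.C.comp (β.comp C)) f (map (algebraMap O K) FO) = 0 := by
      rw [hFK, eval₂_map]
      exact hf
    rw [eval₂_map] at e1
    exact e1
  · obtain ⟨s, hs⟩ := hp0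
    exact ⟨s, (map_ne_zero i0).mpr hs⟩
  · rw [hp]; rfl
  · rw [hfa]
    congr 1
    refine Fin.cases rfl (fun i => ?_) s
    refine (hΨ' (X i)).trans ?_
    rw [map_X]
    rfl

end gfinal
end SI

namespace SI
open Finset

set_option linter.unusedSectionVars false
section combi
variable {σ : Type*} [Fintype σ] [DecidableEq σ] {n d : ℕ}

lemma ev_single {M : Type*} [CommMonoid M] (s : σ) (e : ℕ) (w : σ → M) :
    ev (Finsupp.single s e) w = w s ^ e := by
  simp [ev]

lemma ev_zero {M : Type*} [CommMonoid M] (w : σ → M) : ev (0 : σ →₀ ℕ) w = 1 := by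
  simp [ev]

lemma ev_sum {ι M : Type*} [CommMonoid M] (t : Finset ι) (m : ι → σ →₀ ℕ) (w : σ → M) :
    ev (∑ i ∈ t, m i) w = ∏ i ∈ t, ev (m i) w := by
  classical
  induction t using Finset.induction_on with
  | empty => simp [ev_zero]
  | insert i t hi ih => rw [Finset.sum_insert hi, Finset.prod_insert hi, ev_add, ih]

lemma ev_le_pow {Γ : Type*} [LinearOrderedCommGroupWithZero Γ] (m : σ →₀ ℕ) (w : σ → Γ) (μ : Γ)
    (h : ∀ s, w s ≤ μ) : ev m w ≤ μ ^ m.degree := by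
  have : μ ^ m.degree = ∏ s ∈ m.support, μ ^ (m s) := by
    rw [Finset.prod_pow_eq_pow_sum]; rfl
  rw [this, ev, Finsupp.prod]
  exact Finset.prod_le_prod' (fun i _ => pow_le_pow_left' (h i) _)

lemma dom_key {Γ : Type*} [LinearOrderedCommGroupWithZero Γ] (T0 T B : σ →₀ ℕ) (s t : σ) (r : ℕ)
    (hT : T = B + Finsupp.single t r) (hle : B + Finsupp.single s 1 ≤ T0) (hdeg : T.degree = T0.degree)
    (w : σ → Γ) (hB : ∀ u, B u ≠ 0 → w u ≠ 0) (hmax : ∀ u, w u ≤ w t) (hs : w s < w t) :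
    ev T0 w < ev T w := by
  obtain ⟨R, hR⟩ : ∃ R, T0 = B + Finsupp.single s 1 + R := ⟨T0 - (B + Finsupp.single s 1), by
    rw [add_tsub_cancel_of_le hle]⟩
  have hr : r = R.degree + 1 := by
    rw [hT, hR] at hdeg
    simp only [map_add, Finsupp.degree_single] at hdeg
    omega
  have hμ : 0 < w t := lt_of_le_of_lt zero_le hs
  have hB0 : 0 < ev B w := by
    rw [ev, Finsupp.prod, zero_lt_iff, Finset.prod_ne_zero_iff]
    intro u hu
    exact pow_ne_zero _ (hB u (by simpa using hu))
  have hR1 : ev R w ≤ w t ^ R.degree := ev_le_pow R w _ hmax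
  rw [hT, hR, ev_add, ev_add, ev_add, ev_single, ev_single, hr, mul_assoc]
  refine mul_lt_mul_of_pos_left ?_ hB0
  rw [pow_one, pow_succ']
  calc w s * ev R w ≤ w s * w t ^ R.degree := by gcongr
    _ < w t * w t ^ R.degree := mul_lt_mul_of_pos_right hs (pow_pos hμ _)

variable (x : Fin (n + 1) → σ) (z0 : σ) (τ : Fin (n + 1) → Fin (n + 1)) (ε : σ → Finset (Fin n)) (d)

def TA (i : Fin (n + 1)) : σ →₀ ℕ := Finsupp.single (x i) (d - 1) + Finsupp.single (x (τ i)) 1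

def XS (t : Finset (Fin n)) : σ →₀ ℕ := ∑ j ∈ t, Finsupp.single (x j.succ) 1

def TZB (s : σ) : σ →₀ ℕ := XS x (ε s) + Finsupp.single (x 0) ((d - #(ε s)) % 2)

def TZ (s : σ) : σ →₀ ℕ := TZB d x ε s + Finsupp.single s (d - #(ε s) - (d - #(ε s)) % 2)

def TT0 : σ →₀ ℕ := XS x univ + Finsupp.single (x 0) (d - n - 1) + Finsupp.single z0 1

variable {x}

lemma XS_succ (hx : Function.Injective x) (t : Finset (Fin n)) (j : Fin n) :
    XS x t (x j.succ) = if j ∈ t then 1 else 0 := by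
  simp only [XS, Finsupp.coe_finsetSum, Finset.sum_apply, Finsupp.single_apply, hx.eq_iff, Fin.succ_inj]
  simp

lemma XS_zero (hx : Function.Injective x) (t : Finset (Fin n)) : XS x t (x 0) = 0 := by
  simp only [XS, Finsupp.coe_finsetSum, Finset.sum_apply, Finsupp.single_apply, hx.eq_iff]
  simp [Fin.succ_ne_zero]

lemma XS_other (t : Finset (Fin n)) {s : σ} (hs : s ∉ Set.range x) : XS x t s = 0 := by
  simp only [XS, Finsupp.coe_finsetSum, Finset.sum_apply, Finsupp.single_apply]
  refine Finset.sum_eq_zero fun j _ => if_neg fun h => hs ⟨_, h⟩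

lemma XS_degree (t : Finset (Fin n)) : (XS x t).degree = #t := by
  simp [XS, map_sum]

lemma card_le_n (t : Finset (Fin n)) : #t ≤ n := by simpa using Finset.card_le_univ t

variable {d} {z0} {ε}

lemma sx (hx : Function.Injective x) (i j : Fin (n + 1)) (e : ℕ) :
    Finsupp.single (x i) e (x j) = if i = j then e else 0 := by
  rw [Finsupp.single_apply]; simp [hx.eq_iff]

lemma so {s : σ} (hs : s ∉ Set.range x) (i : Fin (n + 1)) (e : ℕ) :
    Finsupp.single (x i) e s = 0 := by
  rw [Finsupp.single_apply, if_neg fun h => hs ⟨_, h⟩]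

lemma so' {s : σ} (hs : s ∉ Set.range x) (i : Fin (n + 1)) (e : ℕ) :
    Finsupp.single s e (x i) = 0 := by
  rw [Finsupp.single_apply, if_neg fun h => hs ⟨_, h.symm⟩]

lemma TT0_x (hx : Function.Injective x) (hz : z0 ∉ Set.range x) (hnd : n + 2 ≤ d) (i : Fin (n + 1)) :
    1 ≤ TT0 d x z0 (x i) := by
  simp only [TT0, Finsupp.add_apply, so' hz]
  induction i using Fin.cases with
  | zero => rw [XS_zero hx, sx hx]; simp; omega
  | succ j => rw [XS_succ hx, sx hx]; simp

lemma TT0_z (hz : z0 ∉ Set.range x) : TT0 d x z0 z0 = 1 := by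
  simp [TT0, so hz, XS_other _ hz]

lemma TT0_degree (hnd : n + 2 ≤ d) : (TT0 d x z0).degree = d := by
  simp only [TT0, map_add, XS_degree, Finsupp.degree_single, Finset.card_univ, Fintype.card_fin]; omega

lemma TZ_degree (hnd : n + 2 ≤ d) (s : σ) : (TZ d x ε s).degree = d := by
  have := card_le_n (ε s)
  simp only [TZ, TZB, map_add, XS_degree, Finsupp.degree_single]; omega

lemma TA_degree (hnd : n + 2 ≤ d) (i) : (TA d x τ i).degree = d := by
  simp only [TA, map_add, Finsupp.degree_single]; omega

lemma TZ_succ (hx : Function.Injective x) {s : σ} (hs : s ∉ Set.range x) (j : Fin n) :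
    TZ d x ε s (x j.succ) = if j ∈ ε s then 1 else 0 := by
  simp [TZ, TZB, XS_succ hx, sx hx, so' hs, (Fin.succ_ne_zero j).symm]

def mkComb (hx : Function.Injective x) (hz : z0 ∉ Set.range x) (hn : 2 ≤ n) (hnd : n + 2 ≤ d)
    (hτ : Function.Injective τ)
    (hcl : ∀ i i', (∀ j : Fin n, (Even (TA d x τ i (x j.succ)) ↔ Even (TA d x τ i' (x j.succ)))) → i = i')
    (hε : ∀ s s', s ∉ Set.range x → s' ∉ Set.range x → ε s = ε s' → s = s')
    (hεA : ∀ s, s ∉ Set.range x → ∀ i, ¬ ∀ j : Fin n, (Even (TA d x τ i (x j.succ)) ↔ j ∉ ε s)) :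
    Comb σ n d where
  x := x
  z0 := z0
  S := univ.image (TA d x τ) ∪ (univ.filter (· ∉ Set.range x)).image (TZ d x ε)
  T0 := TT0 d x z0
  xinj := hx
  npos := by omega
  par := by
    intro m hm s hs
    rcases Finset.mem_union.mp hm with h | h
    · obtain ⟨i, -, rfl⟩ := Finset.mem_image.mp h
      simp [TA, so hs]
    · obtain ⟨z, hz, rfl⟩ := Finset.mem_image.mp h
      simp only [TZ, TZB, Finsupp.add_apply, so hs, XS_other _ hs, zero_add]
      rw [Finsupp.single_apply]
      split_ifs
      · rw [Nat.even_iff]; omega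
      · simp
  cls := by
    have hcl2 : ∀ s, s ∉ Set.range x → ∀ j : Fin n, Even (TZ d x ε s (x j.succ)) ↔ j ∉ ε s := by
      intro s hs j
      rw [TZ_succ hx hs]
      split_ifs <;> simp [*]
    intro m hm m' hm' h
    rcases Finset.mem_union.mp hm with h1 | h1 <;> rcases Finset.mem_union.mp hm' with h2 | h2 <;>
      obtain ⟨a, ha, rfl⟩ := Finset.mem_image.mp h1 <;> obtain ⟨b, hb, rfl⟩ := Finset.mem_image.mp h2
    · rw [hcl a b h]
    · have hb' := (Finset.mem_filter.mp hb).2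
      exact absurd (fun j => (h j).trans (hcl2 b hb' j)) (hεA b hb' a)
    · have ha' := (Finset.mem_filter.mp ha).2
      exact absurd (fun j => (h j).symm.trans (hcl2 a ha' j)) (hεA a ha' b)
    · have hb' := (Finset.mem_filter.mp hb).2
      have ha' := (Finset.mem_filter.mp ha).2
      rw [hε a b ha' hb']
      ext j
      have := (hcl2 a ha' j).symm.trans ((h j).trans (hcl2 b hb' j))
      tauto
  deg := by
    intro m hm
    rcases Finset.mem_union.mp hm with h | h
    · obtain ⟨i, -, rfl⟩ := Finset.mem_image.mp h
      exact TA_degree τ hnd i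
    · obtain ⟨z, hz, rfl⟩ := Finset.mem_image.mp h
      exact TZ_degree hnd z
  deg0 := TT0_degree hnd
  dom := by
    intro Γ _ w hw hS
    have : Nonempty σ := ⟨z0⟩
    obtain ⟨t, ht⟩ := Finite.exists_max w
    have hA : ∀ i, ev (TA d x τ i) w ≤ ev (TT0 d x z0) w := fun i => hS _ (by simp)
    have hZ : ∀ s, s ∉ Set.range x → ev (TZ d x ε s) w ≤ ev (TT0 d x z0) w := fun s hs =>
      hS _ (Finset.mem_union_right _ (Finset.mem_image_of_mem _ (by simpa using hs)))
    have step : ∀ i, w (x i) = w t → ∀ j, j ≠ τ i → w (x j) = w t := by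
      intro i hi j hj
      by_contra hne
      have hlt : w (x j) < w t := lt_of_le_of_ne (ht _) hne
      refine absurd (hA i) (not_le.mpr ?_)
      refine dom_key _ _ (Finsupp.single (x (τ i)) 1) (x j) (x i) (d - 1) (by rw [TA, add_comm]) ?_
        (by rw [TA_degree τ hnd, TT0_degree hnd]) w ?_ (by rw [hi]; exact ht) (by rw [hi]; exact hlt)
      · intro u
        simp only [Finsupp.add_apply]
        by_cases hu : u ∈ Set.range x
        · obtain ⟨i', rfl⟩ := hu
          rw [sx hx, sx hx]
          have := TT0_x hx hz hnd i'
          split_ifs with h1 h2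
          · exact absurd (h2.trans h1.symm) hj
          · simpa using this
          · simpa using this
          · simp
        · simp [so hu]
      · intro u hu
        rw [Finsupp.single_apply] at hu
        split_ifs at hu with h
        · rw [← h]; exact hw _
        · exact absurd rfl hu
    by_cases hex : ∃ i, w (x i) = w t
    · obtain ⟨i, hi⟩ := hex
      have hs1 := step i hi
      obtain ⟨i2, hi2⟩ : ∃ i2 : Fin (n + 1), i2 ∉ ({i, τ i} : Finset _) := by
        by_contra! hcon
        have h1 : (univ : Finset (Fin (n + 1))) ⊆ {i, τ i} := fun a _ => hcon a
        have h2 := (Finset.card_le_card h1).trans (Finset.card_le_two)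
        simp at h2
        omega
      simp only [Finset.mem_insert, Finset.mem_singleton, not_or] at hi2
      have hs2 := step i2 (hs1 i2 hi2.2) (τ i) (fun h => hi2.1 (hτ h).symm)
      intro j s
      by_cases hj : j = τ i
      · rw [hj, hs2]; exact ht s
      · rw [hs1 j hj]; exact ht s
    · exfalso
      push Not at hex
      have hlt : ∀ i, w (x i) < w t := fun i => lt_of_le_of_ne (ht _) (hex i)
      have htr : t ∉ Set.range x := by
        rintro ⟨i, rfl⟩; exact hex i rfl
      have hcard := card_le_n (ε t)
      obtain ⟨i, hi⟩ : ∃ i, TZB d x ε t + Finsupp.single (x i) 1 ≤ TT0 d x z0 := by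
        by_cases hfull : ε t = univ
        · refine ⟨0, ?_⟩
          have hc : #(ε t) = n := by rw [hfull]; simp
          intro u
          simp only [TZB, TT0, Finsupp.add_apply, hfull]
          by_cases hu : u ∈ Set.range x
          · obtain ⟨i', rfl⟩ := hu
            simp only [sx hx, so' hz]
            rw [← hfull, hc]
            split_ifs <;> omega
          · simp [so hu]
        · obtain ⟨j, hj⟩ : ∃ j, j ∉ ε t := by
            by_contra! h; exact hfull (Finset.eq_univ_iff_forall.mpr h)
          refine ⟨j.succ, ?_⟩
          intro u
          simp only [TZB, TT0, Finsupp.add_apply]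
          by_cases hu : u ∈ Set.range x
          · obtain ⟨i', rfl⟩ := hu
            simp only [sx hx, so' hz]
            induction i' using Fin.cases with
            | zero =>
              simp only [XS_zero hx, Fin.succ_ne_zero, if_true, if_false]
              omega
            | succ j' =>
              simp only [XS_succ hx, Fin.succ_inj, (Fin.succ_ne_zero _).symm, if_false, Finset.mem_univ, if_true]
              by_cases h : j = j'
              · subst h; simp [hj]
              · simp only [h, if_false]; split_ifs <;> omega
          · simp [so hu, XS_other _ hu]
      refine absurd (hZ t htr) (not_le.mpr ?_)
      refine dom_key _ _ (TZB d x ε t) (x i) t _ rfl hi ((TZ_degree hnd _).trans (TT0_degree hnd).symm) w ?_ ht (hlt i)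
      intro u hu
      by_cases hur : u ∈ Set.range x
      · obtain ⟨i', rfl⟩ := hur; exact hw _
      · simp [TZB, so hur, XS_other _ hur] at hu

end combi
end SI

namespace SI
open Finset

section irr

lemma eisen {κ : Type*} [Field κ] {d : ℕ} (hd : 0 < d) (g : Polynomial κ) (hg : Polynomial.X ∣ g)
    (hg2 : ¬ Polynomial.X ^ 2 ∣ g) :
    Irreducible (Polynomial.X ^ d + Polynomial.C g : Polynomial (Polynomial κ)) := by
  have hm : (Polynomial.X ^ d + Polynomial.C g : Polynomial (Polynomial κ)).Monic :=
    Polynomial.monic_X_pow_add_C g hd.ne'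
  have hdeg : (Polynomial.X ^ d + Polynomial.C g : Polynomial (Polynomial κ)).degree = d :=
    Polynomial.degree_X_pow_add_C hd g
  have hP : (Ideal.span {(Polynomial.X : Polynomial κ)}).IsPrime :=
    (Ideal.span_singleton_prime Polynomial.X_ne_zero).mpr Polynomial.prime_X
  refine Polynomial.irreducible_of_eisenstein_criterion hP ?_ ?_ ?_ ?_ hm.isPrimitive
  · rw [hm.leadingCoeff]
    exact (Ideal.ne_top_iff_one _).mp hP.ne_top
  · intro n hn
    rw [hdeg] at hn
    have hn' : n < d := by exact_mod_cast hn
    rw [Polynomial.coeff_add, Polynomial.coeff_X_pow, if_neg hn'.ne, zero_add, Polynomial.coeff_C]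
    split_ifs
    · exact Ideal.mem_span_singleton.mpr hg
    · exact Submodule.zero_mem _
  · rw [hdeg]; exact_mod_cast hd
  · rw [Polynomial.coeff_add, Polynomial.coeff_X_pow, if_neg hd.ne, zero_add, Polynomial.coeff_C_zero,
      Ideal.span_singleton_pow, Ideal.mem_span_singleton]
    exact hg2

theorem irr_crit {κ : Type*} [Field κ] {N d : ℕ} (hd : 0 < d) (F : MvPolynomial (Fin (N + 2)) κ)
    (hF : F.IsHomogeneous d) (hc : MvPolynomial.coeff (Finsupp.single 1 d) F ≠ 0)
    (u : Fin N → Polynomial κ) (g : Polynomial κ) (hg : Polynomial.X ∣ g)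
    (hg2 : ¬ Polynomial.X ^ 2 ∣ g)
    (h : MvPolynomial.eval₂ ((Polynomial.C.comp Polynomial.C : κ →+* Polynomial (Polynomial κ)))
      (Fin.cases 1 (Fin.cases Polynomial.X (fun i => Polynomial.C (u i)))) F =
      Polynomial.X ^ d + Polynomial.C g) : Irreducible (ch F) := by
  obtain ⟨v, R', hv, hf, hR'⟩ := ch_leadForm hd F hF hc
  let φ : MvPolynomial (Fin N) κ →+* Polynomial κ := MvPolynomial.eval₂Hom Polynomial.C u
  let ψ : MvPolynomial (Fin (N + 1)) κ →+* Polynomial (Polynomial κ) :=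
    (Polynomial.mapRingHom φ).comp (MvPolynomial.finSuccEquiv κ N : _ →+* _)
  have hψX : ∀ i, ψ (MvPolynomial.X i) = (Fin.cases Polynomial.X (fun i => Polynomial.C (u i)) i) := by
    intro i
    refine Fin.cases ?_ (fun j => ?_) i
    · simp [ψ, MvPolynomial.finSuccEquiv_X_zero]
    · simp [ψ, MvPolynomial.finSuccEquiv_X_succ, φ]
  have hψC : ψ.comp MvPolynomial.C = Polynomial.C.comp Polynomial.C := by
    ext1 a
    simp [ψ, MvPolynomial.finSuccEquiv_apply, φ]
  have himg : ψ (ch F) = Polynomial.X ^ d + Polynomial.C g := by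
    rw [hom_ch, hψC, ← h]
    congr 1
    funext i
    refine Fin.cases rfl (fun j => ?_) i
    exact hψX j
  set p := MvPolynomial.finSuccEquiv κ N (ch F) with hp
  have hp2 : p = Polynomial.C (MvPolynomial.C v) * Polynomial.X ^ d + MvPolynomial.finSuccEquiv κ N R' := by
    rw [hp, hf, map_add, map_mul, map_pow, MvPolynomial.finSuccEquiv_X_zero]
    simp [MvPolynomial.finSuccEquiv_apply]
  have hdR : (MvPolynomial.finSuccEquiv κ N R').natDegree < d := by
    rw [MvPolynomial.natDegree_finSuccEquiv]; exact hR'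
  have hco : p.coeff d = MvPolynomial.C v := by
    rw [hp2, Polynomial.coeff_add, Polynomial.coeff_C_mul_X_pow, if_pos rfl,
      Polynomial.coeff_eq_zero_of_natDegree_lt hdR, add_zero]
  have hmap : p.map φ = Polynomial.X ^ d + Polynomial.C g := himg
  have hv1 : v = 1 := by
    have := congrArg (fun q => q.coeff d) hmap
    simp only [Polynomial.coeff_map, hco, Polynomial.coeff_add, Polynomial.coeff_X_pow, if_true,
      Polynomial.coeff_C, hd.ne', if_false, add_zero] at this
    have h3 : φ (MvPolynomial.C v) = Polynomial.C v := by simp [φ]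
    rw [h3] at this
    exact Polynomial.C_injective (this.trans Polynomial.C_1.symm)
  have hmonic : p.Monic := by
    refine Polynomial.monic_of_natDegree_le_of_coeff_eq_one d ?_ ?_
    · rw [hp2]
      refine (Polynomial.natDegree_add_le _ _).trans (max_le ?_ hdR.le)
      exact Polynomial.natDegree_C_mul_X_pow_le _ _
    · rw [hco, hv1, MvPolynomial.C_1]
  have hirr : Irreducible p := by
    refine Polynomial.Monic.irreducible_of_irreducible_map φ p hmonic ?_
    rw [hmap]
    exact eisen hd g hg hg2
  exact (MulEquiv.irreducible_iff (MvPolynomial.finSuccEquiv κ N)).mp hirr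

end irr

section eps
variable {σ : Type*} [Fintype σ] [DecidableEq σ] {n d : ℕ}

lemma exists_eps {x : Fin (n + 1) → σ} (hx : Function.Injective x) (A : Fin (n + 1) → σ →₀ ℕ)
    (hcard : Fintype.card σ + 1 ≤ 2 ^ n + 1) :
    ∃ ε : σ → Finset (Fin n), (∀ s s', s ∉ Set.range x → s' ∉ Set.range x → ε s = ε s' → s = s') ∧
    (∀ s, s ∉ Set.range x → ∀ i, ¬ ∀ j : Fin n, (Even (A i (x j.succ)) ↔ j ∉ ε s)) := by
  classical
  let clA : Fin (n + 1) → Finset (Fin n) := fun i => univ.filter fun j => ¬ Even (A i (x j.succ))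
  let Z := {s // s ∉ Set.range x}
  let Tg := {t : Finset (Fin n) // t ∉ univ.image clA}
  have h1 : Fintype.card Z + (n + 1) = Fintype.card σ := by
    have e1 := Fintype.card_subtype_compl (fun s => s ∈ Set.range x)
    have e2 : Fintype.card {s // s ∈ Set.range x} = n + 1 := by
      have := Set.card_range_of_injective hx
      rw [Fintype.card_fin] at this
      exact (Fintype.card_congr (Equiv.refl _)).trans this
    have e3 : Fintype.card {s // s ∈ Set.range x} ≤ Fintype.card σ := Fintype.card_subtype_le _
    have e4 : Fintype.card Z = Fintype.card {s // ¬ s ∈ Set.range x} := Fintype.card_congr (Equiv.refl _)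
    omega
  have h2 : 2 ^ n ≤ Fintype.card Tg + (n + 1) := by
    have e1 := Fintype.card_subtype_compl (fun t => t ∈ univ.image clA)
    have e2 : Fintype.card {t // t ∈ univ.image clA} ≤ n + 1 := by
      rw [Fintype.card_coe]
      refine Finset.card_image_le.trans ?_
      simp
    have e3 : Fintype.card (Finset (Fin n)) = 2 ^ n := by simp
    have e4 : Fintype.card Tg = Fintype.card {t // ¬ t ∈ univ.image clA} := Fintype.card_congr (Equiv.refl _)
    omega
  obtain ⟨f⟩ : Nonempty (Z ↪ Tg) := Function.Embedding.nonempty_of_card_le (by omega)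
  refine ⟨fun s => if h : s ∉ Set.range x then (f ⟨s, h⟩).1 else ∅, ?_, ?_⟩
  · intro s s' hs hs' h
    simp only [dif_pos hs, dif_pos hs'] at h
    have := f.injective (Subtype.ext h)
    exact congrArg Subtype.val this
  · intro s hs i h
    simp only [dif_pos hs] at h
    apply (f ⟨s, hs⟩).2
    rw [Finset.mem_image]
    refine ⟨i, Finset.mem_univ _, ?_⟩
    ext j
    have := h j
    simp only [clA, Finset.mem_filter, Finset.mem_univ, true_and]
    tauto

lemma exists_eps' {x : Fin (n + 1) → σ} (hx : Function.Injective x) (A : Fin (n + 1) → σ →₀ ℕ)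
    (hcard : Fintype.card σ + 1 ≤ 2 ^ n + 1) (z0 : σ) (hz0 : z0 ∉ Set.range x)
    (hA : ∀ i, ∃ j : Fin n, ¬ Even (A i (x j.succ))) :
    ∃ ε : σ → Finset (Fin n), (∀ s s', s ∉ Set.range x → s' ∉ Set.range x → ε s = ε s' → s = s') ∧
    (∀ s, s ∉ Set.range x → ∀ i, ¬ ∀ j : Fin n, (Even (A i (x j.succ)) ↔ j ∉ ε s)) ∧ ε z0 = ∅ := by
  obtain ⟨ε, h1, h2⟩ := exists_eps hx A hcard
  refine ⟨fun s => Equiv.swap (ε z0) ∅ (ε s), ?_, ?_, by simp⟩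
  · intro s s' hs hs' h
    exact h1 s s' hs hs' ((Equiv.swap _ _).injective h)
  · intro s hs i h
    beta_reduce at h
    by_cases e1 : ε s = ε z0
    · rw [e1, Equiv.swap_apply_left] at h
      obtain ⟨j, hj⟩ := hA i
      exact hj ((h j).mpr (by simp))
    · by_cases e2 : ε s = ∅
      · rw [e2, Equiv.swap_apply_right] at h
        exact h2 z0 hz0 i h
      · rw [Equiv.swap_apply_of_ne_of_ne e1 e2] at h
        exact h2 s hs i h

end eps
end SI

namespace SI
open Finset

section pack
universe u
variable {N n d : ℕ} {x : Fin (n + 1) → Fin (N + 2)} {z0 : Fin (N + 2)} {τ : Fin (n + 1) → Fin (n + 1)}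
  {ε : Fin (N + 2) → Finset (Fin n)}

lemma XS_le_one (hx : Function.Injective x) (t : Finset (Fin n)) (s) : XS x t s ≤ 1 := by
  by_cases hs : s ∈ Set.range x
  · obtain ⟨i, rfl⟩ := hs
    induction i using Fin.cases with
    | zero => rw [XS_zero hx]; omega
    | succ j => rw [XS_succ hx]; split_ifs <;> omega
  · rw [XS_other _ hs]; omega

lemma TT0_lt (hx : Function.Injective x) (hn : 2 ≤ n) (hnd : n + 2 ≤ d) (s) : TT0 d x z0 s < d := by
  have h1 := XS_le_one hx univ s
  have h2 : Finsupp.single (x 0) (d - n - 1) s ≤ d - n - 1 := by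
    rw [Finsupp.single_apply]; split_ifs <;> omega
  have h3 : Finsupp.single z0 1 s ≤ 1 := by
    rw [Finsupp.single_apply]; split_ifs <;> omega
  simp only [TT0, Finsupp.add_apply]
  omega

/-- The output of the combinatorial construction. -/
def GoodComb (N d : ℕ) : Prop :=
  ∃ (n : ℕ) (c : Comb (Fin (N + 2)) n d) (xi : Fin n → Fin (N + 1)) (zi : Fin (N + 1)),
    c.x 0 = 0 ∧ (∀ i, c.x i.succ = (xi i).succ) ∧ (∀ i, xi i ≠ zi) ∧
    ∀ (κ : Type u) [Field κ] [CharP κ 2], MvPolynomial.coeff (Finsupp.single 1 d) (c.F0 κ) ≠ 0 ∧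
      Irreducible (ch (c.F0 κ)) ∧ MvPolynomial.pderiv zi (ch (c.F0 κ)) ≠ 0 ∧
      MvPolynomial.degreeOf 0 (MvPolynomial.pderiv zi (ch (c.F0 κ))) < d

lemma pderiv_ch_F0 {κ : Type*} [Field κ] [CharP κ 2] (c : Comb (Fin (N + 2)) n d) (zi : Fin (N + 1))
    (hz : c.z0 = zi.succ) (hzr : c.z0 ∉ Set.range c.x) (hT : c.T0 c.z0 = 1) :
    MvPolynomial.pderiv zi (ch (c.F0 κ)) =
      MvPolynomial.monomial (Finsupp.tail c.T0 - Finsupp.single zi 1) 1 := by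
  have h1 : ch (c.F0 κ) = ∑ m ∈ c.S, ch (MvPolynomial.monomial m 1) + ch (MvPolynomial.monomial c.T0 1) := by
    simp only [ch, Comb.F0, map_add, map_sum]
  rw [h1, map_add, map_sum, Finset.sum_eq_zero, zero_add]
  · rw [ch_monomial, MvPolynomial.pderiv_monomial, Finsupp.tail_apply, ← hz, hT]
    simp
  · intro m hm
    rw [ch_monomial, MvPolynomial.pderiv_monomial, Finsupp.tail_apply, ← hz]
    have : ((m c.z0 : ℕ) : κ) = 0 := by
      rw [CharP.cast_eq_zero_iff κ 2]
      exact (c.par m hm _ hzr).two_dvd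
    rw [this, mul_zero, MvPolynomial.monomial_zero]

theorem package (hx : Function.Injective x) (hz : z0 ∉ Set.range x) (hn : 2 ≤ n) (hnd : n + 2 ≤ d)
    (hτ : Function.Injective τ)
    (hcl : ∀ i i', (∀ j : Fin n, (Even (TA d x τ i (x j.succ)) ↔ Even (TA d x τ i' (x j.succ)))) → i = i')
    (hε : ∀ s s', s ∉ Set.range x → s' ∉ Set.range x → ε s = ε s' → s = s')
    (hεA : ∀ s, s ∉ Set.range x → ∀ i, ¬ ∀ j : Fin n, (Even (TA d x τ i (x j.succ)) ↔ j ∉ ε s))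
    (hx0 : x 0 = 0)
    (h1 : (∃ i, TA d x τ i = Finsupp.single 1 d) ∨ ∃ s, s ∉ Set.range x ∧ TZ d x ε s = Finsupp.single 1 d)
    (hW : ∀ (κ : Type u) [Field κ] [CharP κ 2], ∃ (u : Fin N → Polynomial κ) (g : Polynomial κ),
      Polynomial.X ∣ g ∧ ¬ Polynomial.X ^ 2 ∣ g ∧
      ∀ W : Fin (N + 2) → Polynomial (Polynomial κ),
        W = (Fin.cases 1 (Fin.cases Polynomial.X (fun i => Polynomial.C (u i)))) →
        ∑ i, ev (TA d x τ i) W + ∑ s with s ∉ Set.range x, ev (TZ d x ε s) W + ev (TT0 d x z0) W =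
        Polynomial.X ^ d + Polynomial.C g) :
    GoodComb.{u} N d := by
  classical
  let c := mkComb τ hx hz hn hnd hτ hcl hε hεA
  have hxs : ∀ j : Fin n, x j.succ ≠ 0 := fun j h => by
    rw [← hx0] at h; exact absurd (hx h) (Fin.succ_ne_zero j)
  have hz00 : z0 ≠ 0 := fun h => hz ⟨0, by rw [hx0, h]⟩
  have hzi : z0 = (z0.pred hz00).succ := (Fin.succ_pred _ _).symm
  have hd : 0 < d := by omega
  have hco : ∀ (κ : Type u) [Field κ] [CharP κ 2], MvPolynomial.coeff (Finsupp.single 1 d) (c.F0 κ) ≠ 0 := by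
    intro κ _ _
    have hmem : Finsupp.single 1 d ∈ c.S := by
      rcases h1 with ⟨i, hi⟩ | ⟨s, hs, hi⟩
      · exact Finset.mem_union_left _ (Finset.mem_image.mpr ⟨i, Finset.mem_univ _, hi⟩)
      · exact Finset.mem_union_right _ (Finset.mem_image.mpr ⟨s, by simpa using hs, hi⟩)
    have hne : c.T0 ≠ Finsupp.single 1 d := by
      intro h
      have h2 : TT0 d x z0 1 < d := TT0_lt hx hn hnd 1
      have h3 : TT0 d x z0 = Finsupp.single 1 d := h
      rw [h3] at h2
      simp at h2
    simp only [Comb.F0, MvPolynomial.coeff_add, MvPolynomial.coeff_sum, MvPolynomial.coeff_monomial, if_neg hne]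
    rw [Finset.sum_ite_eq' c.S, if_pos hmem]
    simp
  refine ⟨n, c, fun j => (x j.succ).pred (hxs j), z0.pred hz00, hx0, fun i => (Fin.succ_pred _ _).symm, ?_, ?_⟩
  · intro i h
    exact hz ⟨i.succ, Fin.pred_inj.mp h⟩
  intro κ _ _
  have hpd := pderiv_ch_F0 (κ := κ) c (z0.pred hz00) hzi hz (TT0_z hz)
  refine ⟨hco κ, ?_, ?_, ?_⟩
  · obtain ⟨u, g, hg, hg2, hW⟩ := hW κ
    refine irr_crit hd _ (c.F0_hom κ) (hco κ) u g hg hg2 ?_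
    have hS : ∀ W : Fin (N + 2) → Polynomial (Polynomial κ), ∑ m ∈ c.S, ev m W =
        ∑ i, ev (TA d x τ i) W + ∑ s with s ∉ Set.range x, ev (TZ d x ε s) W := by
      intro W
      have hdisj : Disjoint (univ.image (TA d x τ)) ((univ.filter (· ∉ Set.range x)).image (TZ d x ε)) := by
        rw [Finset.disjoint_left]
        intro m h1 h2
        obtain ⟨i, -, rfl⟩ := Finset.mem_image.mp h1
        obtain ⟨s, hs, hs2⟩ := Finset.mem_image.mp h2
        have hs' := (Finset.mem_filter.mp hs).2
        refine hεA s hs' i fun j => ?_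
        rw [← hs2, TZ_succ hx hs']
        split_ifs <;> simp [*]
      change ∑ m ∈ univ.image (TA d x τ) ∪ (univ.filter (· ∉ Set.range x)).image (TZ d x ε), _ = _
      rw [Finset.sum_union hdisj, Finset.sum_image, Finset.sum_image]
      · intro s hs s' hs' h
        have hs1 := (Finset.mem_filter.mp hs).2
        have hs1' := (Finset.mem_filter.mp hs').2
        apply hε s s' hs1 hs1'
        ext j
        have h2 := congrArg (fun m => m (x j.succ)) h
        simp only [TZ_succ hx hs1, TZ_succ hx hs1'] at h2
        by_cases ha : j ∈ ε s <;> by_cases hb : j ∈ ε s' <;> simp only [ha, hb, if_true, if_false] at h2 ⊢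
        · omega
        · omega
      · intro i _ i' _ h
        exact hcl i i' fun j => by rw [h]
    rw [← MvPolynomial.eval_map, Comb.map_F0, Comb.eval_F0, hS]
    exact hW _ rfl
  · rw [hpd]
    exact (MvPolynomial.monomial_eq_zero.not).mpr one_ne_zero
  · rw [hpd]
    rw [MvPolynomial.degreeOf_monomial_eq _ _ one_ne_zero]
    have h2 : TT0 d x z0 1 < d := TT0_lt hx hn hnd 1
    rw [Finsupp.tsub_apply, Finsupp.tail_apply]
    exact lt_of_le_of_lt (Nat.sub_le _ _) h2

end pack
end SI

namespace SI
open Finset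

section inst
universe u

lemma W_val {κ : Type*} [Field κ] {N : ℕ} (v : Polynomial κ) (s : Fin (N + 2)) :
    (Fin.cases 1 (Fin.cases Polynomial.X (fun i : Fin N => Polynomial.C (if i.val = 0 then v else 0))) s :
      Polynomial (Polynomial κ)) = if s.val = 0 then 1 else if s.val = 1 then Polynomial.X else
        if s.val = 2 then Polynomial.C v else 0 := by
  refine Fin.cases ?_ (fun j => ?_) s
  · simp
  · refine Fin.cases ?_ (fun i => ?_) j
    · rw [Fin.cases_succ, Fin.cases_zero]; simp
    · simp only [Fin.cases_succ, Fin.val_succ]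
      by_cases h : i.val = 0
      · simp [h]
      · simp [h]

lemma ev_TZ_zero {κ : Type*} [CommRing κ] {N n d : ℕ} {x : Fin (n + 1) → Fin (N + 2)} {ε : Fin (N + 2) → Finset (Fin n)}
    (hnd : n + 2 ≤ d) (W : Fin (N + 2) → κ) (s) (hs : W s = 0) : ev (TZ d x ε s) W = 0 := by
  have := card_le_n (ε s)
  rw [TZ, ev_add, ev_single, hs, zero_pow (by omega), mul_zero]

theorem good_odd {N n d : ℕ} (hn : 2 ≤ n) (hnd : n + 2 ≤ d) (hnN : n ≤ N) (hcard : N + 2 ≤ 2 ^ n)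
    (hodd : Odd d) : GoodComb.{u} N d := by
  classical
  let x : Fin (n + 1) → Fin (N + 2) := Fin.castLE (by omega)
  have hxv : ∀ i, (x i).val = i.val := fun i => rfl
  have hx : Function.Injective x := Fin.castLE_injective _
  let z0 : Fin (N + 2) := Fin.last _
  have hr : ∀ s, s ∉ Set.range x → n + 1 ≤ s.val := by
    intro s hs
    by_contra h
    exact hs ⟨⟨s.val, by omega⟩, Fin.ext rfl⟩
  have hz : z0 ∉ Set.range x := by
    rintro ⟨i, hi⟩
    have := congrArg Fin.val hi
    have h2 : z0.val = N + 1 := rfl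
    rw [h2, hxv] at this
    omega
  have hTA : ∀ i, TA d x id i = Finsupp.single (x i) d := by
    intro i
    rw [TA, id, ← Finsupp.single_add]
    congr 1; omega
  obtain ⟨ε, hε, hεA⟩ := exists_eps hx (TA d x id) (by rw [Fintype.card_fin]; omega)
  refine package (x := x) (z0 := z0) (τ := id) (ε := ε) hx hz hn hnd Function.injective_id ?_ hε hεA ?_ ?_ ?_
  · have hE : ∀ (i : Fin (n + 1)) (j : Fin n), Even (TA d x id i (x j.succ)) ↔ i ≠ j.succ := by
      intro i j
      rw [hTA, sx hx]
      split_ifs with h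
      · simp [h, hodd]
      · simp [h]
    intro i i' h
    simp only [hE] at h
    induction i using Fin.cases with
    | zero =>
      induction i' using Fin.cases with
      | zero => rfl
      | succ j => exact absurd rfl ((h j).mp (Fin.succ_ne_zero j).symm)
    | succ j =>
      by_contra hne
      exact (h j).mpr (Ne.symm hne) rfl
  · rfl
  · left
    refine ⟨1, ?_⟩
    rw [hTA]
    congr 1
    apply Fin.ext
    rw [hxv, Fin.val_one', Fin.val_one', Nat.mod_eq_of_lt (by omega), Nat.mod_eq_of_lt (by omega)]
  · intro κ _ _
    refine ⟨fun i => if i.val = 0 then 1 + Polynomial.X else 0, 1 + (1 + Polynomial.X) ^ d, ?_, ?_, ?_⟩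
    · rw [Polynomial.X_dvd_iff, Polynomial.coeff_zero_eq_eval_zero]
      simp [one_add_one_eq_two, CharTwo.two_eq_zero]
    · intro h
      have h1 := (Polynomial.X_pow_dvd_iff.mp h) 1 (by norm_num)
      rw [Polynomial.coeff_add, Polynomial.coeff_one_add_X_pow] at h1
      simp [Polynomial.coeff_one] at h1
      rw [CharP.cast_eq_zero_iff κ 2] at h1
      exact (Nat.not_even_iff_odd.mpr hodd) (even_iff_two_dvd.mpr h1)
    · intro W hWdef
      have hW : ∀ s, W s = if s.val = 0 then 1 else if s.val = 1 then Polynomial.X else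
        if s.val = 2 then Polynomial.C (1 + Polynomial.X) else 0 := by
        intro s; rw [hWdef]; exact W_val _ s
      have hd0 : d ≠ 0 := by omega
      have e2 : ∑ s with s ∉ Set.range x, ev (TZ d x ε s) W = 0 := by
        refine Finset.sum_eq_zero fun s hs => ?_
        have := hr s (Finset.mem_filter.mp hs).2
        refine ev_TZ_zero hnd W s ?_
        rw [hW, if_neg (by omega), if_neg (by omega), if_neg (by omega)]
      have e3 : ev (TT0 d x z0) W = 0 := by
        have := hr z0 hz
        rw [TT0, ev_add, ev_single, hW z0, if_neg (by omega), if_neg (by omega), if_neg (by omega)]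
        simp
      have e1 : ∑ i, ev (TA d x id i) W = 1 + Polynomial.X ^ d + Polynomial.C (1 + Polynomial.X) ^ d := by
        obtain ⟨n', rfl⟩ : ∃ n', n = n' + 2 := ⟨n - 2, by omega⟩
        simp only [hTA, ev_single, hW, hxv]
        rw [Fin.sum_univ_succ, Fin.sum_univ_succ, Fin.sum_univ_succ, Finset.sum_eq_zero]
        · simp only [Fin.val_succ, Fin.coe_ofNat_eq_mod, Nat.zero_mod]
          norm_num [add_assoc]
        · intro i _
          simp only [Fin.val_succ]
          rw [if_neg (by omega), if_neg (by omega), if_neg (by omega), zero_pow hd0]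
      rw [e1, e2, e3]
      simp only [map_add, map_pow, map_one, add_zero]
      ring

theorem good_even {N n d : ℕ} (hn : 2 ≤ n) (hnd : n + 2 ≤ d) (hnN : n ≤ N) (hcard : N + 2 ≤ 2 ^ n)
    (heven : Even d) : GoodComb.{u} N d := by
  classical
  let x : Fin (n + 1) → Fin (N + 2) := fun i => ⟨if i.val = 0 then 0 else i.val + 1, by split_ifs <;> omega⟩
  have hxv : ∀ i, (x i).val = if i.val = 0 then 0 else i.val + 1 := fun i => rfl
  have hx : Function.Injective x := by
    intro i j h
    have := congrArg Fin.val h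
    rw [hxv, hxv] at this
    apply Fin.ext
    split_ifs at this <;> omega
  let z0 : Fin (N + 2) := ⟨1, by omega⟩
  have hr : ∀ s, s ∉ Set.range x → s.val = 1 ∨ n + 2 ≤ s.val := by
    intro s hs
    by_contra! h
    by_cases h0 : s.val = 0
    · exact hs ⟨0, Fin.ext (by rw [hxv, h0]; rfl)⟩
    · exact hs ⟨⟨s.val - 1, by omega⟩, Fin.ext (by rw [hxv, if_neg (by simp only; omega)]; simp only; omega)⟩
  have hz : z0 ∉ Set.range x := by
    rintro ⟨i, hi⟩
    have := congrArg Fin.val hi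
    have h2 : z0.val = 1 := rfl
    rw [h2, hxv] at this
    split_ifs at this <;> omega
  let τ : Fin (n + 1) → Fin (n + 1) := fun i => ⟨if i.val = n then 0 else i.val + 1, by split_ifs <;> omega⟩
  have hτv : ∀ i, (τ i).val = if i.val = n then 0 else i.val + 1 := fun i => rfl
  have hτ : Function.Injective τ := by
    intro i j h
    have := congrArg Fin.val h
    rw [hτv, hτv] at this
    apply Fin.ext
    split_ifs at this <;> omega
  have hE : ∀ (i : Fin (n + 1)) (j : Fin n), Even (TA d x τ i (x j.succ)) ↔ ¬ (j.val + 1 = i.val ∨ j.val + 1 = (τ i).val) := by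
    intro i j
    have hd1 : ¬ Even (d - 1) := by
      rw [Nat.even_iff] at heven ⊢; omega
    have a1 : (i = j.succ) ↔ j.val + 1 = i.val := by rw [Fin.ext_iff, Fin.val_succ]; exact eq_comm
    have a2 : (τ i = j.succ) ↔ j.val + 1 = (τ i).val := by rw [Fin.ext_iff, Fin.val_succ]; exact eq_comm
    have hne : ¬ (j.val + 1 = i.val ∧ j.val + 1 = (τ i).val) := by
      rw [hτv]; rintro ⟨b1, b2⟩; split_ifs at b2 <;> omega
    rw [TA, Finsupp.add_apply, sx hx, sx hx]
    simp only [a1, a2]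
    split_ifs with b1 b2 b2
    · exact absurd ⟨b1, b2⟩ hne
    · simp [b1, hd1]
    · simp [b2]
    · simp [b1, b2]
  obtain ⟨ε, hε, hεA, hε0⟩ := exists_eps' hx (TA d x τ) (by rw [Fintype.card_fin]; omega) z0 hz (by
    intro i
    simp only [hE, not_not]
    by_cases h : i.val = 0
    · exact ⟨⟨0, by omega⟩, Or.inr (by rw [hτv, if_neg (by omega), h])⟩
    · exact ⟨⟨i.val - 1, by omega⟩, Or.inl (by simp only; omega)⟩)
  have hTZ0 : TZ d x ε z0 = Finsupp.single z0 d := by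
    have hd2 : d % 2 = 0 := Nat.even_iff.mp heven
    simp [TZ, TZB, hε0, XS, hd2]
  have hz1 : z0 = 1 := by
    apply Fin.ext; rw [Fin.val_one', Nat.mod_eq_of_lt (by omega)]
  refine package (x := x) (z0 := z0) (τ := τ) (ε := ε) hx hz hn hnd hτ ?_ hε hεA ?_ ?_ ?_
  · intro i i' h
    simp only [hE, not_iff_not] at h
    apply Fin.ext
    by_contra hne
    have hi := i.2
    have hi' := i'.2
    have key : ∀ v : ℕ, 1 ≤ v → v ≤ n → ((v = i.val ∨ v = (τ i).val) ↔ (v = i'.val ∨ v = (τ i').val)) := by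
      intro v h1 h2
      have := h ⟨v - 1, by omega⟩
      simp only [Nat.sub_add_cancel h1] at this
      exact this
    have ti := hτv i
    have ti' := hτv i'
    by_cases a : i.val = n <;> by_cases b : i'.val = n
    · omega
    · rw [if_pos a] at ti
      rw [if_neg b] at ti'
      have k1 := key (i'.val + 1) (by omega) (by omega)
      have e : i'.val + 1 = n := by omega
      have k2 := key i'.val (by omega) (by omega)
      omega
    · rw [if_neg a] at ti
      rw [if_pos b] at ti'
      have k1 := key (i.val + 1) (by omega) (by omega)
      have e : i.val + 1 = n := by omega
      have k2 := key i.val (by omega) (by omega)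
      omega
    · rw [if_neg a] at ti
      rw [if_neg b] at ti'
      have k1 := key (i.val + 1) (by omega) (by omega)
      have k2 := key (i'.val + 1) (by omega) (by omega)
      omega
  · rfl
  · right
    exact ⟨z0, hz, by rw [hTZ0, hz1]⟩
  · intro κ _ _
    refine ⟨fun i => if i.val = 0 then Polynomial.X else 0, Polynomial.X, dvd_rfl, ?_, ?_⟩
    · intro h
      have h1 := (Polynomial.X_pow_dvd_iff.mp h) 1 (by norm_num)
      simp at h1
    · intro W hWdef
      have hW : ∀ s, W s = if s.val = 0 then 1 else if s.val = 1 then Polynomial.X else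
        if s.val = 2 then Polynomial.C (Polynomial.X) else 0 := by
        intro s; rw [hWdef]; exact W_val _ s
      have e2 : ∑ s with s ∉ Set.range x, ev (TZ d x ε s) W = Polynomial.X ^ d := by
        rw [Finset.sum_eq_single z0]
        · rw [hTZ0, ev_single, hW, if_neg (by simp [z0]), if_pos rfl]
        · intro s hs hne
          have hs1 : s.val ≠ 1 := fun h => hne (Fin.ext h)
          have := hr s (Finset.mem_filter.mp hs).2
          refine ev_TZ_zero hnd W s ?_
          rw [hW, if_neg (by omega), if_neg (by omega), if_neg (by omega)]
        · intro h
          exact absurd (by simpa using hz) h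
      have e3 : ev (TT0 d x z0) W = 0 := by
        have : ev (XS x univ) W = 0 := by
          rw [XS, ev_sum]
          refine Finset.prod_eq_zero (Finset.mem_univ ⟨1, by omega⟩) ?_
          rw [ev_single, hW, hxv]
          simp
        rw [TT0, ev_add, ev_add, this]
        simp
      have e1 : ∑ i, ev (TA d x τ i) W = Polynomial.C Polynomial.X := by
        rw [Finset.sum_eq_single 0]
        · have t0 : (τ 0).val = 1 := by
            rw [hτv, if_neg (by simp; omega)]; rfl
          rw [TA, ev_add, ev_single, ev_single, hW, hW, hxv, hxv, t0]
          simp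
        · intro i _ hi
          have hi0 : i.val ≠ 0 := fun h => hi (Fin.ext h)
          rw [TA, ev_add, ev_single, ev_single]
          by_cases h1 : i.val = 1
          · have t0 : (τ i).val = 2 := by
              rw [hτv, if_neg (by omega), h1]
            rw [hW (x (τ i)), hxv, t0]
            simp
          · rw [hW (x i), hxv, if_neg hi0, if_neg (by omega), if_neg (by omega), if_neg (by omega),
              zero_pow (by omega), zero_mul]
        · simp
      rw [e1, e2, e3]
      ring

theorem good_comb {N d : ℕ} (hN : 2 ≤ N) (hd : 3 ≤ d) (h : N ≤ 2 ^ (d - 3)) : GoodComb.{u} N d := by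
  have hd4 : 4 ≤ d := by
    by_contra hlt
    have : d = 3 := by omega
    subst this
    norm_num at h
    omega
  have hex : ∃ n, 2 ≤ n ∧ n + 2 ≤ d ∧ n ≤ N ∧ N + 2 ≤ 2 ^ n := by
    by_cases hc : N + 2 ≤ d
    · refine ⟨N, hN, hc, le_rfl, ?_⟩
      have : ∀ m, m + 2 + 2 ≤ 2 ^ (m + 2) := by
        intro m
        induction m with
        | zero => norm_num
        | succ m ih => rw [pow_succ]; omega
      obtain ⟨m, rfl⟩ : ∃ m, N = m + 2 := ⟨N - 2, by omega⟩
      exact this m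
    · obtain ⟨m, rfl⟩ : ∃ m, d = m + 4 := ⟨d - 4, by omega⟩
      refine ⟨m + 2, by omega, by omega, by omega, ?_⟩
      have e : m + 4 - 3 = m + 1 := by omega
      rw [e] at h
      have h2 : 2 ^ (m + 2) = 2 ^ (m + 1) * 2 := pow_succ _ _
      have h3 : 2 ≤ 2 ^ (m + 1) := by rw [pow_succ]; have := Nat.one_le_two_pow (n := m); omega
      omega
  obtain ⟨n, h1, h2, h3, h4⟩ := hex
  rcases Nat.even_or_odd d with he | ho
  · exact good_even h1 h2 h3 h4 he
  · exact good_odd h1 h2 h3 h4 ho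

end inst
end SI

namespace SI
open MvPolynomial Paper

lemma veryGeneral_of {k : Type*} [Field k] [Infinite k] [CharP k 2] {ν d : ℕ}
    (Q : MvPolynomial (Fin ν) k → Prop)
    (h : ∀ F : MvPolynomial (Fin ν) k, F.IsHomogeneous d →
      Function.Injective (eval₂Hom (ZMod.castHom dvd_rfl k : ZMod 2 →+* k)
        (fun m : {m : Fin ν →₀ ℕ // m.degree = d} => coeff m.1 F)) → Q F) :
    VeryGeneral k ν d Q := by
  classical
  let I := {m : Fin ν →₀ ℕ // m.degree = d}
  let φ : ZMod 2 →+* k := ZMod.castHom dvd_rfl k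
  have : Countable (MvPolynomial I (ZMod 2)) := by
    rw [← Cardinal.mk_le_aleph0_iff]
    refine cardinalMk_le_max.trans ?_
    simp
  obtain ⟨en, hen⟩ := exists_surjective_nat (MvPolynomial I (ZMod 2))
  let G : MvPolynomial I (ZMod 2) → MvPolynomial (Fin ν →₀ ℕ) k := fun P =>
    if P = 0 then 1 else rename Subtype.val (map φ P)
  refine ⟨fun i => G (en i), fun i => ?_, fun F hF hG => h F hF ?_⟩
  · by_cases hP : en i = 0
    · refine ⟨0, isHomogeneous_zero _ _ _, ?_⟩
      simp [G, hP]
    · have h1 : map φ (en i) ≠ 0 := by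
        rw [Ne, ← map_zero (map φ)]
        exact fun h => hP (map_injective φ φ.injective h)
      have h2 : ∃ x : I → k, eval x (map φ (en i)) ≠ 0 := by
        by_contra hc
        push Not at hc
        exact h1 (MvPolynomial.funext (fun x => by rw [hc, map_zero]))
      obtain ⟨x, hx⟩ := h2
      refine ⟨∑ m ∈ (map φ (en i)).vars, monomial m.1 (x m), ?_, ?_⟩
      · exact IsHomogeneous.sum _ _ _ (fun m _ => isHomogeneous_monomial _ m.2)
      · simp only [G, if_neg hP, eval_rename]
        convert hx using 1
        refine eval₂Hom_congr' rfl (fun m hm _ => ?_) rfl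
        simp only [Function.comp, coeff_sum, coeff_monomial]
        rw [Finset.sum_eq_single m]
        · simp
        · intro b _ hb
          rw [if_neg (fun h => hb (Subtype.ext h))]
        · exact fun h => absurd hm h
  · rw [injective_iff_map_eq_zero]
    intro P hP0
    by_contra hP
    obtain ⟨i, rfl⟩ := hen P
    apply hG i
    simp only [G, if_neg hP, eval_rename, eval_map]
    exact hP0
end SI

namespace SI
open MvPolynomial IsLocalRing

/-- the special smooth plane curve -/
def smF (d : ℕ) : MvPolynomial (Fin 3) (ZMod 2) :=
  if Odd d then X 0 ^ d + X 1 ^ d + X 2 ^ d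
  else X 0 ^ (d - 1) * X 1 + X 1 ^ (d - 1) * X 2 + X 2 ^ (d - 1) * X 0

lemma smF_hom {d : ℕ} (hd : 3 ≤ d) : (smF d).IsHomogeneous d := by
  unfold smF
  split_ifs
  · exact ((isHomogeneous_X_pow _ _).add (isHomogeneous_X_pow _ _)).add (isHomogeneous_X_pow _ _)
  · have h : ∀ i j : Fin 3, (X i ^ (d - 1) * X j : MvPolynomial (Fin 3) (ZMod 2)).IsHomogeneous d := by
      intro i j
      have := (isHomogeneous_X_pow (R := ZMod 2) i (d - 1)).mul (isHomogeneous_X (ZMod 2) j)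
      rwa [show d - 1 + 1 = d by omega] at this
    exact ((h _ _).add (h _ _)).add (h _ _)

lemma smF_smooth {d : ℕ} (hd : 3 ≤ d) {κ : Type*} [Field κ] [CharP κ 2] (φ : ZMod 2 →+* κ)
    (v : Fin 3 → κ) (h0 : eval₂ φ v (smF d) = 0) (h : ∀ i, eval₂ φ v (pderiv i (smF d)) = 0) :
    ∀ i, v i = 0 := by
  have h2 : (2 : κ) = 0 := CharTwo.two_eq_zero
  have p01 : pderiv (R := ZMod 2) (0 : Fin 3) (X 1) = 0 := pderiv_X_of_ne (by decide)
  have p02 : pderiv (R := ZMod 2) (0 : Fin 3) (X 2) = 0 := pderiv_X_of_ne (by decide)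
  have p10 : pderiv (R := ZMod 2) (1 : Fin 3) (X 0) = 0 := pderiv_X_of_ne (by decide)
  have p12 : pderiv (R := ZMod 2) (1 : Fin 3) (X 2) = 0 := pderiv_X_of_ne (by decide)
  have p20 : pderiv (R := ZMod 2) (2 : Fin 3) (X 0) = 0 := pderiv_X_of_ne (by decide)
  have p21 : pderiv (R := ZMod 2) (2 : Fin 3) (X 1) = 0 := pderiv_X_of_ne (by decide)
  have ha := h 0
  have hb := h 1
  have hc := h 2
  unfold smF at h0 ha hb hc
  by_cases ho : Odd d
  · rw [if_pos ho] at ha hb hc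
    have hdc : (d : κ) = 1 := by
      obtain ⟨m, rfl⟩ := ho
      push_cast; rw [h2]; ring
    have hd1 : d - 1 ≠ 0 := by omega
    simp [Derivation.leibniz_pow, p01, p02, p10, p12, p20, p21, hdc, hd1, eval₂_mul, eval₂_pow] at ha hb hc
    intro i
    fin_cases i
    · exact ha
    · exact hb
    · exact hc
  · rw [if_neg ho] at h0 ha hb hc
    have hd1 : d - 1 ≠ 0 := by omega
    have hd2 : d - 1 - 1 ≠ 0 := by omega
    have hdc : ((d - 1 : ℕ) : κ) = 1 := by
      rw [Nat.not_odd_iff_even] at ho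
      obtain ⟨m, hm⟩ := ho
      rw [show d - 1 = 2 * (m - 1) + 1 by omega]
      push_cast; rw [h2]; ring
    simp [Derivation.leibniz_pow, p01, p02, p10, p12, p20, p21, hdc, eval₂_mul, eval₂_pow, eval₂_add] at h0 ha hb hc
    have hs : ∀ x : κ, x ^ (d - 1) = x * x ^ (d - 1 - 1) := by
      intro x
      rw [← pow_succ']; congr 1; omega
    have key : v 0 * v 0 ^ (d - 1 - 1) * v 1 = 0 := by
      simp only [hs] at h0 ha hb hc
      grind
    have hv0 : v 0 = 0 := by
      rcases mul_eq_zero.mp key with hk | hk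
      · rw [← hs] at hk
        exact eq_zero_of_pow_eq_zero hk
      · rw [hk, zero_pow hd2] at hb
        exact eq_zero_of_pow_eq_zero (n := d - 1) (by simpa using hb)
    have hv2 : v 2 = 0 := by
      rw [hv0, zero_pow hd2] at ha
      exact eq_zero_of_pow_eq_zero (n := d - 1) (by simpa using ha)
    have hv1 : v 1 = 0 := by
      rw [hv0, hv2] at hc
      exact eq_zero_of_pow_eq_zero (n := d - 1) (by simpa using hc)
    intro i
    fin_cases i
    · exact hv0
    · exact hv1
    · exact hv2

lemma smooth_of_generic {k K : Type*} [Field k] [CharP k 2] [Field K] (i0 : k →+* K) {d : ℕ} (hd : 3 ≤ d)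
    (F : MvPolynomial (Fin 3) k) (hF : F.IsHomogeneous d)
    (hAI : Function.Injective (eval₂Hom (ZMod.castHom dvd_rfl k)
      (fun m : {m : Fin 3 →₀ ℕ // m.degree = d} => coeff m.1 F)))
    (v : Fin 3 → K) (h0 : eval₂ i0 v F = 0) (h : ∀ i, eval₂ i0 v (pderiv i F) = 0) :
    ∀ i, v i = 0 := by
  by_contra hne
  push Not at hne
  obtain ⟨O, hchar, FO, hFO, hFK, hres⟩ := specialize i0 F hF hAI (smF d) (smF_hom hd)
  obtain ⟨q, a, ha, w, hw, hq, t, ht⟩ := exists_isRed (V := O) hne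
  have gen : ∀ (e : ℕ) (G : MvPolynomial (Fin 3) O), G.IsHomogeneous e →
      eval₂ (algebraMap O K) v G = 0 → eval₂ (residue O) q G = 0 := by
    intro e G hG hv
    have h1 := homog_eval₂ (algebraMap O K) hG a (fun s => (w s : K))
    rw [show (fun s => a * (w s : K)) = v from (funext hw).symm, hv] at h1
    have h2 : eval₂ (algebraMap O K) (fun s => (w s : K)) G = 0 := by
      rcases mul_eq_zero.mp h1.symm with h | h
      · exact absurd h (pow_ne_zero _ ha)
      · exact h
    have h3 : algebraMap O K (eval₂ (RingHom.id O) w G) = 0 := by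
      rw [hom_eval₂]; exact h2
    have h4 : eval₂ (RingHom.id O) w G = 0 := Subtype.ext h3
    have h5 := congrArg (residue O) h4
    rw [hom_eval₂, map_zero] at h5
    rw [← h5]
    congr 1
    funext s
    exact (hq s).symm
  have hq0 := smF_smooth hd (ZMod.castHom dvd_rfl (ResidueField O)) q (by
    rw [eval₂_eq_eval_map, ← hres, ← eval₂_eq_eval_map]
    apply gen d FO hFO
    rw [eval₂_eq_eval_map, hFK, ← eval₂_eq_eval_map, h0]) (by
    intro i
    rw [eval₂_eq_eval_map, ← pderiv_map, ← hres, pderiv_map, ← eval₂_eq_eval_map]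
    apply gen (d - 1) _ hFO.pderiv
    rw [eval₂_eq_eval_map, ← pderiv_map, hFK, pderiv_map, ← eval₂_eq_eval_map, h]) t
  exact ht hq0
end SI

namespace SI
open MvPolynomial IsLocalRing

lemma prod_lead {L σ : Type*} [Field L] (f : σ → Polynomial L) (b : ℕ) (hb : ∀ i, (f i).natDegree ≤ b)
    (m : σ → ℕ) (S : Finset σ) :
    (∏ i ∈ S, f i ^ m i).natDegree ≤ (∑ i ∈ S, m i) * b ∧
    (∏ i ∈ S, f i ^ m i).coeff ((∑ i ∈ S, m i) * b) = ∏ i ∈ S, (f i).coeff b ^ m i := by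
  classical
  induction S using Finset.induction_on with
  | empty => simp
  | insert a S ha ih =>
    rw [Finset.prod_insert ha, Finset.prod_insert ha, Finset.sum_insert ha, add_mul]
    have h1 : (f a ^ m a).natDegree ≤ m a * b := Polynomial.natDegree_pow_le_of_le _ (hb a)
    refine ⟨Polynomial.natDegree_mul_le_of_le h1 ih.1, ?_⟩
    rw [Polynomial.coeff_mul_add_eq_of_natDegree_le h1 ih.1, ih.2, Polynomial.coeff_pow_of_natDegree_le (hb a)]

lemma lead_eval {k L σ : Type*} [Fintype σ] [Field k] [Field L] (ι : k →+* L) (f : σ → Polynomial L) (b : ℕ)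
    (hb : ∀ i, (f i).natDegree ≤ b) {e : ℕ} (G : MvPolynomial σ k) (hG : G.IsHomogeneous e) :
    (eval₂ (Polynomial.C.comp ι) f G).natDegree ≤ e * b ∧
    (eval₂ (Polynomial.C.comp ι) f G).coeff (e * b) = eval₂ ι (fun i => (f i).coeff b) G := by
  rw [eval₂_eq', eval₂_eq']
  have hm : ∀ m ∈ G.support, ∑ i, m i = e := by
    intro m hm
    have := degree_eq_of_hom hG (mem_support_iff.mp hm)
    rw [← this, Finsupp.degree_eq_sum]
  constructor
  · apply Polynomial.natDegree_sum_le_of_forall_le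
    intro m hms
    have := (prod_lead f b hb m Finset.univ).1
    rw [hm m hms] at this
    exact (Polynomial.natDegree_C_mul_le _ _).trans this
  · rw [Polynomial.finsetSum_coeff]
    refine Finset.sum_congr rfl fun m hms => ?_
    have := (prod_lead f b hb m Finset.univ).2
    rw [hm m hms] at this
    rw [RingHom.comp_apply, Polynomial.coeff_C_mul, this]

lemma chain_rule {k A σ : Type*} [Fintype σ] [CommRing k] [CommRing A] (φ : k →+* A) (D : Derivation ℤ A A)
    (hD : ∀ x, D (φ x) = 0) (f : σ → A) (G : MvPolynomial σ k) :
    D (eval₂ φ f G) = ∑ i, D (f i) * eval₂ φ f (pderiv i G) := by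
  classical
  induction G using MvPolynomial.induction_on with
  | C a => simp [hD]
  | add p q hp hq => simp only [eval₂_add, map_add, hp, hq, mul_add, Finset.sum_add_distrib]
  | mul_X p j hp =>
    have h1 : ∀ i, D (f i) * eval₂ φ f (pderiv i (p * X j)) =
        (if j = i then eval₂ φ f p * D (f j) else 0) + f j * (D (f i) * eval₂ φ f (pderiv i p)) := by
      intro i
      rw [Derivation.leibniz, smul_eq_mul, smul_eq_mul, eval₂_add, eval₂_mul, eval₂_mul, eval₂_X]
      split_ifs with h
      · subst h
        rw [pderiv_X_self, eval₂_one]; ring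
      · rw [pderiv_X_of_ne h, eval₂_zero]; ring
    rw [Finset.sum_congr rfl (fun i _ => h1 i), Finset.sum_add_distrib, Finset.sum_ite_eq, if_pos (Finset.mem_univ _),
      ← Finset.mul_sum, ← hp, eval₂_mul, eval₂_X, Derivation.leibniz, smul_eq_mul, smul_eq_mul]

lemma euler {k A : Type*} [CommRing k] [CommRing A] (φ : k →+* A) {d : ℕ} (f : Fin 3 → A)
    (F : MvPolynomial (Fin 3) k) (hF : F.IsHomogeneous d) (h0 : eval₂ φ f F = 0) :
    f 0 * eval₂ φ f (pderiv 0 F) + f 1 * eval₂ φ f (pderiv 1 F) + f 2 * eval₂ φ f (pderiv 2 F) = 0 := by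
  have := congrArg (eval₂ φ f) hF.sum_X_mul_pderiv
  rw [Fin.sum_univ_three] at this
  simp only [eval₂_add, eval₂_mul, eval₂_X] at this
  rw [this, nsmul_eq_mul, eval₂_mul, h0, mul_zero]

theorem curve {k L : Type u} [Field k] [Field L] (ι : k →+* L) {d : ℕ} (hd : 3 ≤ d)
    (F : MvPolynomial (Fin 3) k) (hF : F.IsHomogeneous d)
    (hsm : ∀ (K : Type u) [Field K] (i0 : k →+* K) (v : Fin 3 → K), eval₂ i0 v F = 0 →
      (∀ i, eval₂ i0 v (pderiv i F) = 0) → ∀ i, v i = 0)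
    (D : Derivation ℤ L L) (hD : ∀ x, D (ι x) = 0)
    (f : Fin 3 → Polynomial L) (hf : eval₂ (Polynomial.C.comp ι) f F = 0)
    (p : Fin 3 → k) (hp : ∃ s, p s ≠ 0) (hfp : ∀ s, (f s).eval 0 = ι (p s))
    (ξ : Fin 3 → L) (a : L) (ha : a ≠ 0) (hξ : ξ 0 = 1) (hfa : ∀ s, (f s).eval 1 = a * ξ s) :
    D (ξ 1) = 0 ∧ D (ξ 2) = 0 := by
  -- make f primitive
  obtain ⟨g, γ, hγ, u, hu⟩ : ∃ (g : Fin 3 → Polynomial L) (γ : Polynomial L), (∀ s, f s = γ * g s) ∧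
      ∃ u : Fin 3 → Polynomial L, ∑ s, u s * g s = 1 := by
    have hpr : (Ideal.span (Set.range f)).IsPrincipal := inferInstance
    obtain ⟨γ, hγ⟩ := hpr
    have h1 : ∀ s, ∃ g, f s = γ * g := by
      intro s
      have : f s ∈ Ideal.span (Set.range f) := Ideal.subset_span ⟨s, rfl⟩
      rw [hγ] at this
      exact Ideal.mem_span_singleton.mp this
    choose g hg using h1
    have h2 : γ ∈ Ideal.span (Set.range f) := by
      rw [hγ]; exact Ideal.mem_span_singleton_self γ
    obtain ⟨u, hu⟩ := (Ideal.mem_span_range_iff_exists_fun).mp h2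
    refine ⟨g, γ, hg, u, ?_⟩
    have hγ0 : γ ≠ 0 := by
      rintro rfl
      have := hfa 0
      rw [hg 0, hξ] at this
      simp at this
      exact ha this.symm
    apply mul_left_cancel₀ hγ0
    rw [mul_one, Finset.mul_sum]
    conv_rhs => rw [← hu]
    refine Finset.sum_congr rfl fun s _ => ?_
    rw [hg s]; ring
  have hγ0 : γ.eval 0 ≠ 0 := by
    intro h
    obtain ⟨s, hs⟩ := hp
    have := hfp s
    rw [hγ s, Polynomial.eval_mul, h, zero_mul] at this
    exact hs ((map_eq_zero ι).mp this.symm)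
  have hγ1 : γ.eval 1 ≠ 0 := by
    intro h
    have := hfa 0
    rw [hγ 0, Polynomial.eval_mul, h, zero_mul, hξ, mul_one] at this
    exact ha this.symm
  have hγn : γ ≠ 0 := by rintro rfl; simp at hγ1
  let φ : k →+* Polynomial L := Polynomial.C.comp ι
  have hg : eval₂ φ g F = 0 := by
    have h1 := homog_eval₂ φ hF γ g
    rw [show (fun s => γ * g s) = f from (funext hγ).symm] at h1
    exact (mul_eq_zero.mp (h1.symm.trans hf)).resolve_left (pow_ne_zero _ hγn)
  let G : Fin 3 → Polynomial L := fun i => eval₂ φ g (pderiv i F)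
  obtain ⟨PD, hPD⟩ := exists_polyDeriv D
  have hPDC : ∀ x, PD (φ x) = 0 := by
    intro x
    ext i
    rw [hPD]
    simp only [φ, RingHom.comp_apply, Polynomial.coeff_C]
    split_ifs <;> simp [hD]
  have hE := euler φ g F hF hg
  have hC := (PD.map_zero.symm.trans (congrArg PD hg.symm)).trans
    ((chain_rule φ PD hPDC g F).trans (Fin.sum_univ_three _))
  -- evaluating in a field
  have hev : ∀ (K : Type u) [Field K] (ψ : Polynomial L →+* K), ∃ i, ψ (G i) ≠ 0 := by
    intro K _ ψ
    by_contra hc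
    push Not at hc
    have h1 := hsm K (ψ.comp φ) (fun s => ψ (g s)) (by
      have := congrArg ψ hg
      rw [hom_eval₂, map_zero] at this
      exact this) (by
      intro i
      have := hc i
      simp only [G] at this
      rw [hom_eval₂] at this
      exact this)
    have h2 := congrArg ψ hu
    rw [map_sum, map_one] at h2
    simp [h1] at h2
  -- the gradient generates the unit ideal
  obtain ⟨c, hc⟩ : ∃ c : Fin 3 → Polynomial L, ∑ i, c i * G i = 1 := by
    rw [← Ideal.mem_span_range_iff_exists_fun]
    by_contra hne
    have hne' : Ideal.span (Set.range G) ≠ ⊤ := fun h => hne (h ▸ Submodule.mem_top)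
    obtain ⟨M, hM, hle⟩ := Ideal.exists_le_maximal _ hne'
    let _ : Field (Polynomial L ⧸ M) := Ideal.Quotient.field M
    obtain ⟨i, hi⟩ := hev (Polynomial L ⧸ M) (Ideal.Quotient.mk M)
    exact hi (Ideal.Quotient.eq_zero_iff_mem.mpr (hle (Ideal.subset_span ⟨i, rfl⟩)))
  let M : Fin 3 → Polynomial L := ![g 1 * PD (g 2) - g 2 * PD (g 1), g 2 * PD (g 0) - g 0 * PD (g 2),
    g 0 * PD (g 1) - g 1 * PD (g 0)]
  have hM0 : M 0 = g 1 * PD (g 2) - g 2 * PD (g 1) := rfl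
  have hM1 : M 1 = g 2 * PD (g 0) - g 0 * PD (g 2) := rfl
  have hM2 : M 2 = g 0 * PD (g 1) - g 1 * PD (g 0) := rfl
  have hE' : g 0 * G 0 + g 1 * G 1 + g 2 * G 2 = 0 := hE
  have hC' : 0 = PD (g 0) * G 0 + PD (g 1) * G 1 + PD (g 2) * G 2 := hC
  have h01 : M 0 * G 1 = M 1 * G 0 := by
    rw [hM0, hM1]; linear_combination PD (g 2) * hE' + g 2 * hC'
  have h12 : M 1 * G 2 = M 2 * G 1 := by
    rw [hM1, hM2]; linear_combination PD (g 0) * hE' + g 0 * hC'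
  have h20 : M 2 * G 0 = M 0 * G 2 := by
    rw [hM2, hM0]; linear_combination PD (g 1) * hE' + g 1 * hC'
  rw [Fin.sum_univ_three] at hc
  let μ : Polynomial L := c 0 * M 0 + c 1 * M 1 + c 2 * M 2
  have hμ : ∀ i, M i = μ * G i := by
    intro i
    fin_cases i
    · change M 0 = μ * G 0
      simp only [μ]
      linear_combination (-M 0) * hc + c 1 * h01 - c 2 * h20
    · change M 1 = μ * G 1
      simp only [μ]
      linear_combination (-M 1) * hc - c 0 * h01 + c 2 * h12
    · change M 2 = μ * G 2
      simp only [μ]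
      linear_combination (-M 2) * hc + c 0 * h20 - c 1 * h12
  -- evaluations of PD
  have hPD0 : ∀ q, (PD q).eval 0 = D (q.eval 0) := by
    intro q
    rw [← Polynomial.coeff_zero_eq_eval_zero, ← Polynomial.coeff_zero_eq_eval_zero, hPD]
  have hPDdeg : ∀ q, (PD q).natDegree ≤ q.natDegree := by
    intro q
    rw [Polynomial.natDegree_le_iff_coeff_eq_zero]
    intro N hN
    rw [hPD, Polynomial.coeff_eq_zero_of_natDegree_lt hN, map_zero]
  have hPD1 : ∀ q, (PD q).eval 1 = D (q.eval 1) := by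
    intro q
    rw [Polynomial.eval_eq_sum_range' (Nat.lt_succ_of_le (hPDdeg q)), Polynomial.eval_eq_sum_range, map_sum]
    refine Finset.sum_congr rfl fun i _ => ?_
    simp [hPD]
  have hM_eval0 : ∀ i, (M i).eval 0 = 0 := by
    have hg0 : ∀ s, (g s).eval 0 = (γ.eval 0)⁻¹ * ι (p s) := by
      intro s
      rw [← hfp, hγ s, Polynomial.eval_mul]; field_simp
    have hDg : ∀ s, D ((g s).eval 0) = D ((γ.eval 0)⁻¹) * ι (p s) := by
      intro s
      rw [hg0, Derivation.leibniz, hD]; simp [mul_comm]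
    intro i
    fin_cases i
    · change (M 0).eval 0 = 0
      rw [hM0]; simp only [Polynomial.eval_sub, Polynomial.eval_mul, hPD0, hDg]; rw [hg0, hg0]; ring
    · change (M 1).eval 0 = 0
      rw [hM1]; simp only [Polynomial.eval_sub, Polynomial.eval_mul, hPD0, hDg]; rw [hg0, hg0]; ring
    · change (M 2).eval 0 = 0
      rw [hM2]; simp only [Polynomial.eval_sub, Polynomial.eval_mul, hPD0, hDg]; rw [hg0, hg0]; ring
  have hμ0 : μ = 0 := by
    by_contra hμn
    obtain ⟨s0, -, hs0⟩ := Finset.exists_max_image (Finset.univ : Finset (Fin 3)) (fun s => (g s).natDegree) ⟨0, Finset.mem_univ _⟩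
    obtain ⟨t0, ht0⟩ : ∃ t, g t ≠ 0 := by
      by_contra hall
      push Not at hall
      simp [hall] at hu
    set b := (g s0).natDegree with hb
    have hdeg : ∀ s, (g s).natDegree ≤ b := fun s => hs0 s (Finset.mem_univ _)
    have hlead : ∃ s, (g s).coeff b ≠ 0 := by
      by_cases hgs : g s0 = 0
      · refine ⟨t0, ?_⟩
        have hb0 : b = 0 := by rw [hb, hgs, Polynomial.natDegree_zero]
        have : (g t0).natDegree = b := le_antisymm (hdeg t0) (by omega)
        rw [← this]
        exact Polynomial.leadingCoeff_ne_zero.mpr ht0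
      · exact ⟨s0, Polynomial.leadingCoeff_ne_zero.mpr hgs⟩
    have hFl : eval₂ ι (fun i => (g i).coeff b) F = 0 := by
      rw [← (lead_eval ι g b hdeg F hF).2]
      rw [show eval₂ (Polynomial.C.comp ι) g F = 0 from hg, Polynomial.coeff_zero]
    obtain ⟨i, hi⟩ : ∃ i, eval₂ ι (fun i => (g i).coeff b) (pderiv i F) ≠ 0 := by
      by_contra hall
      push Not at hall
      obtain ⟨s, hs⟩ := hlead
      exact hs (hsm L ι _ hFl hall s)
    rw [← (lead_eval ι g b hdeg _ hF.pderiv).2] at hi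
    have hGi : (d - 1) * b ≤ (G i).natDegree := Polynomial.le_natDegree_of_ne_zero hi
    have hGi0 : G i ≠ 0 := by
      intro h
      apply hi
      rw [show eval₂ (Polynomial.C.comp ι) g (pderiv i F) = 0 from h, Polynomial.coeff_zero]
    have hMi : (M i).natDegree ≤ b + b := by
      have aux : ∀ s t, (g s * PD (g t) - g t * PD (g s)).natDegree ≤ b + b := by
        intro s t
        refine (Polynomial.natDegree_sub_le _ _).trans (max_le ?_ ?_)
        · exact Polynomial.natDegree_mul_le_of_le (hdeg _) ((hPDdeg _).trans (hdeg _))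
        · exact Polynomial.natDegree_mul_le_of_le (hdeg _) ((hPDdeg _).trans (hdeg _))
      fin_cases i
      · exact aux 1 2
      · exact aux 2 0
      · exact aux 0 1
    rw [hμ i, Polynomial.natDegree_mul hμn hGi0] at hMi
    have hd2 : 2 * b ≤ (d - 1) * b := Nat.mul_le_mul_right _ (by omega)
    have hμd : μ.natDegree = 0 := by omega
    obtain ⟨j, hj⟩ := hev L (Polynomial.evalRingHom 0)
    have h1 := hM_eval0 j
    rw [hμ j, Polynomial.eval_mul] at h1
    have h2 : μ.eval 0 = 0 := (mul_eq_zero.mp h1).resolve_right hj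
    rw [Polynomial.eq_C_of_natDegree_eq_zero hμd, Polynomial.eval_C] at h2
    apply hμn
    rw [Polynomial.eq_C_of_natDegree_eq_zero hμd, h2, Polynomial.C_0]
  -- evaluate at 1
  have hg1 : ∀ s, (g s).eval 1 = ((γ.eval 1)⁻¹ * a) * ξ s := by
    intro s
    have := hfa s
    rw [hγ s, Polynomial.eval_mul] at this
    rw [mul_assoc, ← this]; field_simp
  have haa : (γ.eval 1)⁻¹ * a ≠ 0 := mul_ne_zero (inv_ne_zero hγ1) ha
  set α := (γ.eval 1)⁻¹ * a with hα
  have fin : ∀ s, (g 0 * PD (g s) - g s * PD (g 0)).eval 1 = 0 → D (ξ s) = 0 := by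
    intro s hs
    simp only [Polynomial.eval_sub, Polynomial.eval_mul, hPD1, hg1, hξ, Derivation.leibniz, smul_eq_mul, mul_one] at hs
    have : α * α * D (ξ s) = 0 := by linear_combination hs
    exact (mul_eq_zero.mp this).resolve_left (mul_ne_zero haa haa)
  constructor
  · apply fin
    rw [← hM2, hμ 2, hμ0, zero_mul, Polynomial.eval_zero]
  · apply fin
    have : g 0 * PD (g 2) - g 2 * PD (g 0) = - M 1 := by rw [hM1]; ring
    rw [this, hμ 1, hμ0, zero_mul, neg_zero, Polynomial.eval_zero]
end SI

namespace SI
open MvPolynomial IsLocalRing Paper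

/-- first component as a ring homomorphism -/
def dfst (L : Type*) [Field L] : DualNumber L →+* L := (TrivSqZeroExt.fstHom ℤ L L : _ →ₐ[ℤ] L).toRingHom

lemma eval₂_dual {k L σ : Type*} [Fintype σ] [Field k] [Field L] (ι : k →+* L) (x δ : σ → L) (χ : MvPolynomial σ k →+* DualNumber L)
    (hC : ∀ a, χ (C a) = TrivSqZeroExt.inl (ι a))
    (hX : ∀ i, χ (X i) = TrivSqZeroExt.inl (x i) + TrivSqZeroExt.inr (δ i)) (P : MvPolynomial σ k) :
    TrivSqZeroExt.fst (χ P) = eval₂ ι x P ∧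
    TrivSqZeroExt.snd (χ P) = ∑ i, δ i * eval₂ ι x (pderiv i P) := by
  classical
  induction P using MvPolynomial.induction_on with
  | C a => simp [hC]
  | add p q hp hq =>
    simp only [map_add, TrivSqZeroExt.fst_add, TrivSqZeroExt.snd_add, hp, hq, eval₂_add, mul_add,
      Finset.sum_add_distrib, and_self]
  | mul_X p j hp =>
    have h1 : ∀ i, δ i * eval₂ ι x (pderiv i (p * X j)) =
        (if j = i then eval₂ ι x p * δ j else 0) + x j * (δ i * eval₂ ι x (pderiv i p)) := by
      intro i
      rw [Derivation.leibniz, smul_eq_mul, smul_eq_mul, eval₂_add, eval₂_mul, eval₂_mul, eval₂_X]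
      split_ifs with h
      · subst h
        rw [pderiv_X_self, eval₂_one]; ring
      · rw [pderiv_X_of_ne h, eval₂_zero]; ring
    rw [Finset.sum_congr rfl (fun i _ => h1 i), Finset.sum_add_distrib, Finset.sum_ite_eq, if_pos (Finset.mem_univ _),
      ← Finset.mul_sum, ← hp.2, eval₂_mul, eval₂_X, ← hp.1, map_mul, hX]
    constructor
    · simp
    · simp [TrivSqZeroExt.snd_mul]
      ring

lemma pderiv_ch {k : Type*} [Field k] {ν : ℕ} (i : Fin ν) (F : MvPolynomial (Fin (ν + 1)) k) :
    pderiv i (ch F) = ch (pderiv i.succ F) := by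
  classical
  unfold ch
  induction F using MvPolynomial.induction_on with
  | C a => simp
  | add p q hp hq => simp only [map_add, hp, hq]
  | mul_X p j hp =>
    rw [map_mul, Derivation.leibniz, Derivation.leibniz, map_add, hp]
    simp only [smul_eq_mul, map_mul, aeval_X]
    congr 2
    refine Fin.cases ?_ (fun j => ?_) j
    · rw [pderiv_X_of_ne (Fin.succ_ne_zero i).symm]; simp
    · by_cases h : j = i
      · subst h; simp
      · rw [pderiv_X_of_ne (by simpa using h)]
        simp [pderiv_X_of_ne h]

theorem curve_final {k : Type u} [Field k] [Infinite k] [CharP k 2] {d : ℕ} (hd : 3 ≤ d)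
    (F : MvPolynomial (Fin 3) k) (hF : F.IsHomogeneous d)
    (hAI : Function.Injective (eval₂Hom (ZMod.castHom dvd_rfl k)
      (fun m : {m : Fin 3 →₀ ℕ // m.degree = d} => coeff m.1 F))) :
    StablyIrrationalOver (chartRingMap (ν := 2) F) 1 := by
  rintro r ⟨e, he⟩
  let A := MvPolynomial (Fin r) (chartRing F)
  let L := FractionRing (MvPolynomial (Fin (1 + r)) k)
  let Ψ : A →+* L := (e : FractionRing A →+* L).comp (algebraMap A (FractionRing A))
  have hΨ : Function.Injective Ψ := e.injective.comp (IsFractionRing.injective A (FractionRing A))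
  have hdom : IsDomain A := hΨ.isDomain Ψ
  let _ : Algebra A L := Ψ.toAlgebra
  have : IsFractionRing A L :=
    IsLocalization.isLocalization_of_algEquiv (nonZeroDivisors A)
      (AlgEquiv.ofRingEquiv (f := e) (fun _ => rfl) : FractionRing A ≃ₐ[A] L)
  let ι : k →+* L := Ψ.comp (C.comp (chartRingMap F))
  let x : Fin 2 → L := fun i => Ψ (C (Ideal.Quotient.mk (Ideal.span {chartEquation F}) (X i)))
  let ξ : Fin 3 → L := Fin.cases 1 x
  have hsm : ∀ (K : Type u) [Field K] (i0 : k →+* K) (v : Fin 3 → K), eval₂ i0 v F = 0 →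
      (∀ i, eval₂ i0 v (pderiv i F) = 0) → ∀ i, v i = 0 :=
    fun K _ i0 v => smooth_of_generic i0 hd F hF hAI v
  have hxch : ∀ G : MvPolynomial (Fin 3) k, eval₂ ι x (ch G) = eval₂ ι ξ G := by
    intro G
    have h1 := hom_ch (eval₂Hom ι x) G
    refine h1.trans ?_
    have e1 : (eval₂Hom ι x).comp C = ι := by ext1 a; simp
    rw [e1]
    congr 1
    funext s
    refine Fin.cases rfl (fun i => ?_) s
    exact eval₂Hom_X' _ _ _
  have hxQ : ∀ P : MvPolynomial (Fin 2) k, eval₂ ι x P =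
      Ψ (C (Ideal.Quotient.mk (Ideal.span {chartEquation F}) P)) := by
    intro P
    have : eval₂Hom ι x = Ψ.comp (C.comp (Ideal.Quotient.mk (Ideal.span {chartEquation F}))) := by
      apply ringHom_ext
      · intro a; rw [eval₂Hom_C]; rfl
      · intro i; rw [eval₂Hom_X']; rfl
    exact congrArg (fun g : MvPolynomial (Fin 2) k →+* L => g P) this
  have hx0 : eval₂ ι x (ch F) = 0 := by
    rw [hxQ]
    have : Ideal.Quotient.mk (Ideal.span {chartEquation F}) (ch F) = 0 := by
      rw [Ideal.Quotient.eq_zero_iff_mem]; exact Ideal.mem_span_singleton_self _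
    rw [this, map_zero, map_zero]
  let δ : Fin 2 → L := ![eval₂ ι x (pderiv 1 (ch F)), -eval₂ ι x (pderiv 0 (ch F))]
  let χ0 : MvPolynomial (Fin 2) k →+* DualNumber L :=
    eval₂Hom ((TrivSqZeroExt.inlHom L L).comp ι) (fun i => TrivSqZeroExt.inl (x i) + TrivSqZeroExt.inr (δ i))
  have hχ0 := eval₂_dual ι x δ χ0 (fun a => eval₂Hom_C _ _ _) (fun i => eval₂Hom_X' _ _ _)
  have hχF : ∀ P ∈ Ideal.span {chartEquation F}, χ0 P = 0 := by
    intro P hP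
    rw [Ideal.mem_span_singleton] at hP
    obtain ⟨Q, rfl⟩ := hP
    have : χ0 (ch F) = 0 := by
      apply TrivSqZeroExt.ext
      · rw [(hχ0 _).1, hx0]; rfl
      · rw [(hχ0 _).2, Fin.sum_univ_two]
        change eval₂ ι x (pderiv 1 (ch F)) * _ + -eval₂ ι x (pderiv 0 (ch F)) * _ = 0
        ring
    rw [map_mul]
    exact (congrArg (· * χ0 Q) this).trans (zero_mul _)
  let χ1 : chartRing F →+* DualNumber L := Ideal.Quotient.lift _ χ0 hχF
  let χ : A →+* DualNumber L := eval₂Hom χ1 (fun i => TrivSqZeroExt.inl (Ψ (X i)))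
  obtain ⟨D, hD⟩ := exists_derivation_of_dual (A := A) (L := L) χ (by
    have : (dfst L).comp χ = Ψ := by
      apply ringHom_ext
      · intro q
        obtain ⟨P, rfl⟩ := Ideal.Quotient.mk_surjective q
        rw [← hxQ, ← (hχ0 P).1]
        change TrivSqZeroExt.fst (eval₂Hom χ1 _ (C _)) = _
        rw [eval₂Hom_C]
        rfl
      · intro i
        change TrivSqZeroExt.fst (eval₂Hom χ1 _ (X i)) = _
        rw [eval₂Hom_X']
        rfl
    intro a
    exact congrArg (fun g : A →+* L => g a) this)
  have hDQ : ∀ P : MvPolynomial (Fin 2) k, D (eval₂ ι x P) = ∑ i, δ i * eval₂ ι x (pderiv i P) := by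
    intro P
    rw [hxQ, ← (hχ0 P).2]
    refine (hD _).trans ?_
    change TrivSqZeroExt.snd (eval₂Hom χ1 _ (C _)) = _
    rw [eval₂Hom_C]
    rfl
  obtain ⟨f, hf, ⟨p, hp0, hp⟩, a, ha, hfa⟩ := setup (L := L) F hF r 1 e he Ψ hΨ ι (fun _ => rfl)
  have key := curve ι hd F hF hsm D (by
    intro y
    have := hDQ (C y)
    rw [eval₂_C] at this
    rw [this]; simp) f hf p hp0 hp ξ a ha rfl hfa
  have hDx : ∀ i, D (x i) = δ i := by
    intro i
    have := hDQ (X i)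
    rw [eval₂_X] at this
    rw [this, Finset.sum_eq_single i]
    · rw [pderiv_X_self, eval₂_one, mul_one]
    · intro j _ hj
      rw [pderiv_X_of_ne hj.symm, eval₂_zero, mul_zero]
    · simp
  have k0 : δ 0 = 0 := (hDx 0).symm.trans key.1
  have k1 : δ 1 = 0 := (hDx 1).symm.trans key.2
  have g2 : eval₂ ι ξ (pderiv 2 F) = 0 := by
    rw [← hxch, show (2 : Fin 3) = Fin.succ 1 from rfl, ← pderiv_ch]
    exact k0
  have g1 : eval₂ ι ξ (pderiv 1 F) = 0 := by
    rw [← hxch, show (1 : Fin 3) = Fin.succ 0 from rfl, ← pderiv_ch]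
    exact neg_eq_zero.mp k1
  have hFξ : eval₂ ι ξ F = 0 := (hxch F).symm.trans hx0
  have g0 : eval₂ ι ξ (pderiv 0 F) = 0 := by
    have := euler ι ξ F hF hFξ
    rw [g1, g2, mul_zero, mul_zero, add_zero, add_zero, show ξ 0 = 1 from rfl, one_mul] at this
    exact this
  have := hsm L ι ξ hFξ (fun i => by fin_cases i; exacts [g0, g1, g2]) 0
  exact one_ne_zero this
end SI

open Paper in
theorem statement_1 (k : Type*) [Field k] [Uncountable k] [CharP k 2]
    (N d : ℕ) (hN : 1 ≤ N) (hd : Real.logb 2 (N : ℝ) + 3 ≤ (d : ℝ)) :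
    VeryGeneral k (N + 2) d fun F =>
      StablyIrrationalOver (chartRingMap (ν := N + 1) F) N := by
  have hN' : (1 : ℝ) ≤ N := by exact_mod_cast hN
  have hlog : 0 ≤ Real.logb 2 (N : ℝ) := Real.logb_nonneg (by norm_num) hN'
  have hd3 : 3 ≤ d := by
    have : (3 : ℝ) ≤ d := by linarith
    exact_mod_cast this
  apply SI.veryGeneral_of
  intro F hF hAI
  rcases Nat.lt_or_ge N 2 with h | h
  · obtain rfl : N = 1 := by omega
    exact SI.curve_final hd3 F hF hAI
  · have hle : N ≤ 2 ^ (d - 3) := by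
      have h1 : Real.logb 2 (N : ℝ) ≤ ((d - 3 : ℕ) : ℝ) := by
        rw [Nat.cast_sub hd3]; push_cast; linarith
      rw [Real.logb_le_iff_le_rpow (by norm_num) (by linarith), Real.rpow_natCast] at h1
      exact_mod_cast h1
    obtain ⟨n, c, xi, zi, hx0, hxi, hz, hall⟩ := SI.good_comb h hd3 hle
    exact SI.geom_final (by omega) c xi hx0 hxi zi hz (fun κ _ _ => (hall κ).1)
      (fun κ _ _ => (hall κ).2.1) (fun κ _ _ => (hall κ).2.2.1) (fun κ _ _ => (hall κ).2.2.2) F hF hAI
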